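/- Harmonic generalized CK-extension: Let Ω₀ ⊆ ℝ^{p+1} be a domain and A₀, A₁ ∈ C^ω(Ω₀, 𝔸) real analytic functions. Then there exists a unique sequence of real analytic functions {A_k}_{k≥2} ⊆ C^ω(Ω₀, 𝔸) such that the series f(x) = Σ_{k≥0} x_q^k A_k(x_p) converges in a p-symmetric slice domain Ω ⊆ Ω₀* := {x_p + x_q : x_p ∈ Ω₀, x_q ∈ ℝ^q} with Ω₀ ⊂ Ω and its sum f is harmonic in Ω. The coefficients are necessarily A_{2k} = (Γ(q/2)/(2^{2k} k! Γ(k + q/2))) Δ_{x_p}^k A₀ and A_{2k+1} = (Γ(q/2 + 1)/(2^{2k} k! Γ(k + q/2 + 1))) Δ_{x_p}^k A₁, so f = HGCK[A₀, A₁]; moreover f satisfies the initial conditions f(x)|_{x_q = 0} = A₀(x_p) and (D_{x_q} f)(x)|_{x_q = 0} = −q A₁(x_p). -/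

import Mathlib

open scoped BigOperators
open Filter Topology

namespace GPSM

variable (A : Type*) [NormedAddCommGroup A] [NormedSpace ℝ A] [Mul A] [One A]

/-- `A` is a real alternative algebra with unit `1`, of finite dimension `d > 1`,
equipped with an anti-involution `conj` (a real-linear map with `(a^c)^c = a`,
`(ab)^c = b^c a^c`, fixing the reals).  The associator is alternating (left/right
alternative laws). -/
structure IsAltStarAlg (conj : A → A) : Prop where
  finDim : FiniteDimensional ℝ A
  one_lt_finrank : 1 < Module.finrank ℝ A
  mul_add' : ∀ a b c : A, a * (b + c) = a * b + a * c
  add_mul' : ∀ a b c : A, (a + b) * c = a * c + b * c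
  smul_mul' : ∀ (r : ℝ) (a b : A), (r • a) * b = r • (a * b)
  mul_smul' : ∀ (r : ℝ) (a b : A), a * (r • b) = r • (a * b)
  one_mul' : ∀ a : A, 1 * a = a
  mul_one' : ∀ a : A, a * 1 = a
  alt_left : ∀ a b : A, a * (a * b) = a * a * b
  alt_right : ∀ a b : A, a * b * b = a * (b * b)
  conj_add : ∀ a b : A, conj (a + b) = conj a + conj b
  conj_smul : ∀ (r : ℝ) (a : A), conj (r • a) = r • conj a
  conj_conj : ∀ a : A, conj (conj a) = a
  conj_mul : ∀ a b : A, conj (a * b) = conj b * conj a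
  conj_one : conj 1 = 1

/-- `v 0, v 1, …, v m` is a hypercomplex basis of the hypercomplex subspace
`M = span(v 0, …, v m)` of `A`: `v 0 = 1`, `t(v s) = 0`, `n(v s) = 1`, the `v s`
anticommute for distinct `s, t ∈ {1,…,m}`, they are linearly independent, and
`M` is contained in the quadratic cone `Q_A`. -/
structure IsHypBasis (conj : A → A) (v : ℕ → A) (m : ℕ) : Prop where
  v_zero : v 0 = 1
  trace_zero : ∀ s, 1 ≤ s → s ≤ m → v s + conj (v s) = 0
  norm_one : ∀ s, 1 ≤ s → s ≤ m → v s * conj (v s) = 1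
  anticomm : ∀ s t, 1 ≤ s → s ≤ m → 1 ≤ t → t ≤ m → s ≠ t → v s * v t = -(v t * v s)
  indep : LinearIndependent ℝ (fun i : Fin (m + 1) => v i)
  mem_cone : ∀ x ∈ Submodule.span ℝ (Set.range fun i : Fin (m + 1) => v (i : ℕ)),
      ∃ tr nr : ℝ, x + conj x = tr • (1 : A) ∧ x * conj x = nr • (1 : A) ∧
        ((∃ r : ℝ, x = r • (1 : A)) ∨ tr ^ 2 < 4 * nr)

variable {A}

/-- Identification of `ℝ^{m+1}` with the hypercomplex subspace `M`:
`(x_0,…,x_m) ↦ Σ x_s • v s`. -/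
def emb (v : ℕ → A) (m : ℕ) (x : Fin (m + 1) → ℝ) : A :=
  ∑ s : Fin (m + 1), x s • v (s : ℕ)

/-- First `p+1` coordinates of a point of `M ≅ ℝ^{m+1}`, i.e. the `x_p`-part. -/
def projP (m p : ℕ) (x : Fin (m + 1) → ℝ) : Fin (p + 1) → ℝ := fun s =>
  if h : (s : ℕ) < m + 1 then x ⟨(s : ℕ), h⟩ else 0

/-- Inclusion `ℝ^{p+1} ⊆ ℝ^{m+1}` (remaining coordinates `0`). -/
def injP (m p : ℕ) (y : Fin (p + 1) → ℝ) : Fin (m + 1) → ℝ := fun s =>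
  if h : (s : ℕ) < p + 1 then y ⟨(s : ℕ), h⟩ else 0

/-- The coordinates of `x_q` (last `q = m - p` coordinates of `x`). -/
def xqpart (m p : ℕ) (x : Fin (m + 1) → ℝ) : Fin (m + 1) → ℝ := fun s =>
  if (s : ℕ) ≤ p then 0 else x s

/-- The coordinates of `x_p` inside `ℝ^{m+1}`. -/
def xppart (m p : ℕ) (x : Fin (m + 1) → ℝ) : Fin (m + 1) → ℝ := fun s =>
  if (s : ℕ) ≤ p then x s else 0

/-- `r = |x_q|`. -/
noncomputable def rad (m p : ℕ) (x : Fin (m + 1) → ℝ) : ℝ :=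
  Real.sqrt (∑ s : Fin (m + 1), (xqpart m p x s) ^ 2)

/-- `ω = x_q / |x_q|` (coordinates), `0` when `x_q = 0`. -/
noncomputable def normq (m p : ℕ) (x : Fin (m + 1) → ℝ) : Fin (m + 1) → ℝ :=
  (rad m p x)⁻¹ • xqpart m p x

/-- The reflection `x = x_p + x_q ↦ x_⋄ = x_p - x_q`. -/
def reflP (m p : ℕ) (x : Fin (m + 1) → ℝ) : Fin (m + 1) → ℝ := fun s =>
  if (s : ℕ) ≤ p then x s else -x s

/-- The sphere `𝕊 = {x_q ∈ span(v_{p+1},…,v_m) : x_q² = -1}`, in coordinates. -/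
def Sph (v : ℕ → A) (m p : ℕ) : Set (Fin (m + 1) → ℝ) :=
  {w | (∀ s : Fin (m + 1), (s : ℕ) ≤ p → w s = 0) ∧ emb v m w * emb v m w = -1}

/-- The point `x_p + r ω` of `M ≅ ℝ^{m+1}`. -/
def pt (m p : ℕ) (w : Fin (m + 1) → ℝ) (y : Fin (p + 1) → ℝ) (r : ℝ) :
    Fin (m + 1) → ℝ :=
  injP m p y + r • w

/-- The slice `Ω_ω ⊆ ℝ^{p+2}` of `Ω` at `ω`. -/
def sliceSet (m p : ℕ) (Ω : Set (Fin (m + 1) → ℝ)) (w : Fin (m + 1) → ℝ) :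
    Set ((Fin (p + 1) → ℝ) × ℝ) := {z | pt m p w z.1 z.2 ∈ Ω}

/-- The restriction `f_ω` of `f` to the slice at `ω`, as a function on `ℝ^{p+2}`. -/
def sliceFun (m p : ℕ) (f : (Fin (m + 1) → ℝ) → A) (w : Fin (m + 1) → ℝ) :
    (Fin (p + 1) → ℝ) × ℝ → A := fun z => f (pt m p w z.1 z.2)

/-- Partial derivative `∂_{x_s}` of a function on `ℝ^{m+1}`. -/
noncomputable def pdF (m : ℕ) (s : Fin (m + 1)) (f : (Fin (m + 1) → ℝ) → A)
    (x : Fin (m + 1) → ℝ) : A := fderiv ℝ f x (Pi.single s 1)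

/-- Partial derivative `∂_{x_s}` of a function on `ℝ^{p+1}`. -/
noncomputable def pdP (p : ℕ) (s : Fin (p + 1)) (g : (Fin (p + 1) → ℝ) → A)
    (y : Fin (p + 1) → ℝ) : A := fderiv ℝ g y (Pi.single s 1)

/-- Partial derivative `∂_{x_s}` of a function on `ℝ^{p+2} = ℝ^{p+1} × ℝ`. -/
noncomputable def pdSx (p : ℕ) (s : Fin (p + 1)) (G : (Fin (p + 1) → ℝ) × ℝ → A)
    (z : (Fin (p + 1) → ℝ) × ℝ) : A := fderiv ℝ G z (Pi.single s 1, 0)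

/-- Partial derivative `∂_r` of a function on `ℝ^{p+2} = ℝ^{p+1} × ℝ`. -/
noncomputable def pdSr (p : ℕ) (G : (Fin (p + 1) → ℝ) × ℝ → A)
    (z : (Fin (p + 1) → ℝ) × ℝ) : A := fderiv ℝ G z (0, 1)

/-- Second partial derivative `∂_r²`. -/
noncomputable def pdSr2 (p : ℕ) (G : (Fin (p + 1) → ℝ) × ℝ → A)
    (z : (Fin (p + 1) → ℝ) × ℝ) : A := pdSr p (pdSr p G) z

/-- The operator `Σ_{lo ≤ s ≤ hi} v_s ∂_{x_s}` on functions on `ℝ^{m+1}`.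
`Dop v m 0 p` is `D_{x_p}`, `Dop v m (p+1) m` is `D_{x_q}`, `Dop v m 0 m` is `D_x`. -/
noncomputable def Dop (v : ℕ → A) (m lo hi : ℕ) (f : (Fin (m + 1) → ℝ) → A)
    (x : Fin (m + 1) → ℝ) : A :=
  ∑ s : Fin (m + 1), if lo ≤ (s : ℕ) ∧ (s : ℕ) ≤ hi then v (s : ℕ) * pdF m s f x else 0

/-- The conjugate operator `∂_{x_0} - Σ_{1 ≤ s ≤ hi} v_s ∂_{x_s}` on functions on
`ℝ^{m+1}`; `Dbarop v m p` is `D̄_{x_p}`, `Dbarop v m m` is `D̄_x`. -/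
noncomputable def Dbarop (v : ℕ → A) (m hi : ℕ) (f : (Fin (m + 1) → ℝ) → A)
    (x : Fin (m + 1) → ℝ) : A :=
  pdF m 0 f x -
    ∑ s : Fin (m + 1), if 1 ≤ (s : ℕ) ∧ (s : ℕ) ≤ hi then v (s : ℕ) * pdF m s f x else 0

/-- The operator `D_{x_p} = Σ_{s=0}^p v_s ∂_{x_s}` on functions on `ℝ^{p+1}`. -/
noncomputable def DopP (v : ℕ → A) (p : ℕ) (g : (Fin (p + 1) → ℝ) → A)
    (y : Fin (p + 1) → ℝ) : A :=
  ∑ s : Fin (p + 1), v (s : ℕ) * pdP p s g y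

/-- The operator `D̄_{x_p} = ∂_{x_0} - Σ_{s=1}^p v_s ∂_{x_s}` on functions on `ℝ^{p+1}`. -/
noncomputable def DbaropP (v : ℕ → A) (p : ℕ) (g : (Fin (p + 1) → ℝ) → A)
    (y : Fin (p + 1) → ℝ) : A :=
  pdP p 0 g y - ∑ s : Fin (p + 1), if 1 ≤ (s : ℕ) then v (s : ℕ) * pdP p s g y else 0

/-- The operator `D_{x_p}` on functions on `ℝ^{p+2} = ℝ^{p+1} × ℝ`. -/
noncomputable def DopSx (v : ℕ → A) (p : ℕ) (G : (Fin (p + 1) → ℝ) × ℝ → A)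
    (z : (Fin (p + 1) → ℝ) × ℝ) : A :=
  ∑ s : Fin (p + 1), v (s : ℕ) * pdSx p s G z

/-- The operator `D̄_{x_p}` on functions on `ℝ^{p+2} = ℝ^{p+1} × ℝ`. -/
noncomputable def DbaropSx (v : ℕ → A) (p : ℕ) (G : (Fin (p + 1) → ℝ) × ℝ → A)
    (z : (Fin (p + 1) → ℝ) × ℝ) : A :=
  pdSx p 0 G z - ∑ s : Fin (p + 1), if 1 ≤ (s : ℕ) then v (s : ℕ) * pdSx p s G z else 0

/-- The Laplacian `Δ_x` on functions on `ℝ^{m+1}`. -/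
noncomputable def lapF (m : ℕ) (f : (Fin (m + 1) → ℝ) → A)
    (x : Fin (m + 1) → ℝ) : A :=
  ∑ s : Fin (m + 1), pdF m s (pdF m s f) x

/-- The Laplacian `Δ_{x_p}` on functions on `ℝ^{p+1}`. -/
noncomputable def lapP (p : ℕ) (g : (Fin (p + 1) → ℝ) → A)
    (y : Fin (p + 1) → ℝ) : A :=
  ∑ s : Fin (p + 1), pdP p s (pdP p s g) y

/-- Iterated Laplacian `Δ_x^k`. -/
noncomputable def lapIterF (m k : ℕ) (f : (Fin (m + 1) → ℝ) → A) :
    (Fin (m + 1) → ℝ) → A :=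
  (fun g => lapF m g)^[k] f

/-- Iterated Laplacian `Δ_{x_p}^k`. -/
noncomputable def lapIterP (p k : ℕ) (g : (Fin (p + 1) → ℝ) → A) :
    (Fin (p + 1) → ℝ) → A :=
  (fun h => lapP p h)^[k] g

/-- The Laplacian `Δ_{x'} = Δ_{x_p} + ∂_r²` on functions on `ℝ^{p+2}`. -/
noncomputable def lapSx (p : ℕ) (G : (Fin (p + 1) → ℝ) × ℝ → A)
    (z : (Fin (p + 1) → ℝ) × ℝ) : A :=
  (∑ s : Fin (p + 1), pdSx p s (pdSx p s G) z) + pdSr2 p G z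

/-- The slice Cauchy-Riemann operator `D_ω = D_{x_p} + ω ∂_r` applied to a function
on `ℝ^{p+2}`, where `ω` is given in coordinates by `w`. -/
noncomputable def DomCR (v : ℕ → A) (m p : ℕ) (w : Fin (m + 1) → ℝ)
    (G : (Fin (p + 1) → ℝ) × ℝ → A) (z : (Fin (p + 1) → ℝ) × ℝ) : A :=
  DopSx v p G z + emb v m w * pdSr p G z

/-- `f` is left generalized partial-slice monogenic (of type `(p, m-p)`) on `Ω`. -/
def GSM (v : ℕ → A) (m p : ℕ) (f : (Fin (m + 1) → ℝ) → A)
    (Ω : Set (Fin (m + 1) → ℝ)) : Prop :=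
  ∀ w ∈ Sph v m p, ContDiffOn ℝ 1 (sliceFun m p f w) (sliceSet m p Ω w) ∧
    ∀ z ∈ sliceSet m p Ω w, DomCR v m p w (sliceFun m p f w) z = 0

/-- `Ω` is partially symmetric with respect to `ℝ^{p+1}`. -/
def PSym (v : ℕ → A) (m p : ℕ) (Ω : Set (Fin (m + 1) → ℝ)) : Prop :=
  ∀ x ∈ Ω, ∀ w ∈ Sph v m p, xppart m p x + rad m p x • w ∈ Ω

/-- `Ω` is a slice domain: a domain meeting `ℝ^{p+1}` all of whose slices are
domains in `ℝ^{p+2}`. -/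
def SliceDomain (v : ℕ → A) (m p : ℕ) (Ω : Set (Fin (m + 1) → ℝ)) : Prop :=
  IsOpen Ω ∧ IsConnected Ω ∧ (∃ x ∈ Ω, xqpart m p x = 0) ∧
    ∀ w ∈ Sph v m p, IsConnected (sliceSet m p Ω w)

/-- The reflection `(x_p, r) ↦ (x_p, -r)` of `ℝ^{p+2}`. -/
def reflD (p : ℕ) (z : (Fin (p + 1) → ℝ) × ℝ) : (Fin (p + 1) → ℝ) × ℝ := (z.1, -z.2)

/-- The p-symmetric completion `Ω_D ⊆ M` of `D ⊆ ℝ^{p+2}`. -/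
def OmegaD (v : ℕ → A) (m p : ℕ) (D : Set ((Fin (p + 1) → ℝ) × ℝ)) :
    Set (Fin (m + 1) → ℝ) :=
  {x | ∃ w ∈ Sph v m p, ∃ z ∈ D, x = pt m p w z.1 z.2}

/-- `(F₁, F₂)` satisfies the even-odd (stem function) conditions on `D`. -/
def IsStem (p : ℕ) (D : Set ((Fin (p + 1) → ℝ) × ℝ))
    (F₁ F₂ : (Fin (p + 1) → ℝ) × ℝ → A) : Prop :=
  ∀ z ∈ D, F₁ (reflD p z) = F₁ z ∧ F₂ (reflD p z) = -F₂ z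

/-- `f` is the generalized partial-slice function induced by the stem `(F₁, F₂)`:
`f(x_p + rω) = F₁(x_p, r) + ω F₂(x_p, r)`. -/
def Induced (v : ℕ → A) (m p : ℕ) (D : Set ((Fin (p + 1) → ℝ) × ℝ))
    (F₁ F₂ : (Fin (p + 1) → ℝ) × ℝ → A) (f : (Fin (m + 1) → ℝ) → A) : Prop :=
  ∀ w ∈ Sph v m p, ∀ z ∈ D, f (pt m p w z.1 z.2) = F₁ z + emb v m w * F₂ z

/-- The generalized Cauchy-Riemann system for the stem `(F₁, F₂)` on `D`. -/
def StemCR (v : ℕ → A) (p : ℕ) (D : Set ((Fin (p + 1) → ℝ) × ℝ))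
    (F₁ F₂ : (Fin (p + 1) → ℝ) × ℝ → A) : Prop :=
  ∀ z ∈ D, DopSx v p F₁ z - pdSr p F₂ z = 0 ∧ DbaropSx v p F₂ z + pdSr p F₁ z = 0

/-- `f` is generalized partial-slice regular on `Ω_D`. -/
def MemGSR (v : ℕ → A) (m p : ℕ) (D : Set ((Fin (p + 1) → ℝ) × ℝ))
    (f : (Fin (m + 1) → ℝ) → A) : Prop :=
  ∃ F₁ F₂ : (Fin (p + 1) → ℝ) × ℝ → A, IsStem p D F₁ F₂ ∧
    ContDiffOn ℝ 1 F₁ D ∧ ContDiffOn ℝ 1 F₂ D ∧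
    Induced v m p D F₁ F₂ f ∧ StemCR v p D F₁ F₂

/-- `f` is a generalized partial-slice function on `Ω`. -/
def MemGS (v : ℕ → A) (m p : ℕ) (Ω : Set (Fin (m + 1) → ℝ))
    (f : (Fin (m + 1) → ℝ) → A) : Prop :=
  ∃ F₁ F₂ : (Fin (p + 1) → ℝ) × ℝ → A,
    (∀ z : (Fin (p + 1) → ℝ) × ℝ, F₁ (reflD p z) = F₁ z ∧ F₂ (reflD p z) = -F₂ z) ∧
    ∀ x ∈ Ω, f x = F₁ (projP m p x, rad m p x) +
      emb v m (normq m p x) * F₂ (projP m p x, rad m p x)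

/-- Non-associative power: `a^n` with products taken from the right. -/
def apow (a : A) (n : ℕ) : A := (fun b => a * b)^[n] 1

/-- Partial even part `PE[f](x) = (f(x) + f(x_⋄))/2`. -/
noncomputable def PE (m p : ℕ) (f : (Fin (m + 1) → ℝ) → A)
    (x : Fin (m + 1) → ℝ) : A := (2 : ℝ)⁻¹ • (f x + f (reflP m p x))

/-- Partial odd part `PO[f](x) = (f(x) - f(x_⋄))/2`. -/
noncomputable def PO (m p : ℕ) (f : (Fin (m + 1) → ℝ) → A)
    (x : Fin (m + 1) → ℝ) : A := (2 : ℝ)⁻¹ • (f x - f (reflP m p x))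

/-- `Ω₀* = {x_p + x_q : x_p ∈ Ω₀, x_q ∈ ℝ^q}`. -/
def Omega0star (m p : ℕ) (Ω₀ : Set (Fin (p + 1) → ℝ)) : Set (Fin (m + 1) → ℝ) :=
  {x | projP m p x ∈ Ω₀}

/-- The spherical derivative `f'_s(x) = (1/2) x_q⁻¹ (f(x) - f(x_⋄))`
(using `x_q⁻¹ = -x_q/|x_q|²`). -/
noncomputable def sder (v : ℕ → A) (m p : ℕ) (f : (Fin (m + 1) → ℝ) → A)
    (x : Fin (m + 1) → ℝ) : A :=
  -(((2 : ℝ) * rad m p x ^ 2)⁻¹) • (emb v m (xqpart m p x) * (f x - f (reflP m p x)))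

/-- The spherical Dirac operator
`Γ f = -(1/2) Σ_{p+1 ≤ i,j ≤ m} v_i (v_j (L_{ij} f))`. -/
noncomputable def sphericalGamma (v : ℕ → A) (m p : ℕ) (f : (Fin (m + 1) → ℝ) → A)
    (x : Fin (m + 1) → ℝ) : A :=
  -((2 : ℝ)⁻¹) • ∑ i : Fin (m + 1), ∑ j : Fin (m + 1),
    if p < (i : ℕ) ∧ p < (j : ℕ) then
      v (i : ℕ) * (v (j : ℕ) * (x i • pdF m j f x - x j • pdF m i f x)) else 0

/-- The slice Cauchy-Riemann operator `D_ω` applied to (the slice restriction of) a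
function `f` on `M`, at the point `x` (with `ω = x_q/|x_q|`). -/
noncomputable def DomCRat (v : ℕ → A) (m p : ℕ) (f : (Fin (m + 1) → ℝ) → A)
    (x : Fin (m + 1) → ℝ) : A :=
  DomCR v m p (normq m p x) (sliceFun m p f (normq m p x)) (projP m p x, rad m p x)

/-- `f` is left monogenic on `Ω`: `f ∈ C¹` and `D_x f = 0`. -/
def Monogenic (v : ℕ → A) (m : ℕ) (f : (Fin (m + 1) → ℝ) → A)
    (Ω : Set (Fin (m + 1) → ℝ)) : Prop :=
  ContDiffOn ℝ 1 f Ω ∧ ∀ x ∈ Ω, Dop v m 0 m f x = 0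

/-- `f` is harmonic on `Ω`: `f ∈ C²` and `Δ_x f = 0`. -/
def Harmonic (m : ℕ) (f : (Fin (m + 1) → ℝ) → A)
    (Ω : Set (Fin (m + 1) → ℝ)) : Prop :=
  ContDiffOn ℝ 2 f Ω ∧ ∀ x ∈ Ω, lapF m f x = 0

/-- A family of functions converges normally (locally a summable uniform bound). -/
def NormallyConvOn {E F : Type*} [TopologicalSpace E] [NormedAddCommGroup F]
    (u : ℕ → E → F) (s : Set E) : Prop :=
  ∀ x ∈ s, ∃ U ∈ nhds x, ∃ c : ℕ → ℝ, Summable c ∧ ∀ k : ℕ, ∀ y ∈ U, ‖u k y‖ ≤ c k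

/-- The generalized partial-slice CK-extension
`CK[f₀](x) = Σ_k (r^{2k}/(2k)!)(-Δ_{x_p})^k f₀(x_p)
  + ω Σ_k (r^{2k+1}/(2k+1)!)(-Δ_{x_p})^k (D_{x_p} f₀)(x_p)`. -/
noncomputable def CKe (v : ℕ → A) (m p : ℕ) (f₀ : (Fin (p + 1) → ℝ) → A)
    (x : Fin (m + 1) → ℝ) : A :=
  (∑' k : ℕ, (((-1 : ℝ) ^ k * rad m p x ^ (2 * k)) / (2 * k).factorial) •
      lapIterP p k f₀ (projP m p x)) +
  emb v m (normq m p x) *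
    ∑' k : ℕ, (((-1 : ℝ) ^ k * rad m p x ^ (2 * k + 1)) / (2 * k + 1).factorial) •
      lapIterP p k (DopP v p f₀) (projP m p x)

/-- The coefficient `Γ(q/2)(-1)^k r^{2k} / (2^{2k} k! Γ(k + q/2))`. -/
noncomputable def hgckC (q k : ℕ) (r : ℝ) : ℝ :=
  (Real.Gamma ((q : ℝ) / 2) * (-1) ^ k * r ^ (2 * k)) /
    (2 ^ (2 * k) * (k.factorial : ℝ) * Real.Gamma ((k : ℝ) + (q : ℝ) / 2))

/-- The coefficient `Γ(q/2)(-1)^k r^{2k} / (2^{2k+1} k! Γ(k + q/2 + 1))`. -/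
noncomputable def gckC' (q k : ℕ) (r : ℝ) : ℝ :=
  (Real.Gamma ((q : ℝ) / 2) * (-1) ^ k * r ^ (2 * k)) /
    (2 ^ (2 * k + 1) * (k.factorial : ℝ) * Real.Gamma ((k : ℝ) + (q : ℝ) / 2 + 1))

/-- The coefficient `Γ(q/2 + 1)(-1)^k r^{2k} / (2^{2k} k! Γ(k + q/2 + 1))`. -/
noncomputable def hgckC' (q k : ℕ) (r : ℝ) : ℝ :=
  (Real.Gamma ((q : ℝ) / 2 + 1) * (-1) ^ k * r ^ (2 * k)) /
    (2 ^ (2 * k) * (k.factorial : ℝ) * Real.Gamma ((k : ℝ) + (q : ℝ) / 2 + 1))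

/-- The monogenic generalized CK-extension `GCK[A₀]`. -/
noncomputable def GCKe (v : ℕ → A) (m p : ℕ) (A₀ : (Fin (p + 1) → ℝ) → A)
    (x : Fin (m + 1) → ℝ) : A :=
  (∑' k : ℕ, hgckC (m - p) k (rad m p x) • lapIterP p k A₀ (projP m p x)) +
  emb v m (xqpart m p x) *
    ∑' k : ℕ, gckC' (m - p) k (rad m p x) • lapIterP p k (DopP v p A₀) (projP m p x)

/-- The harmonic generalized CK-extension `HGCK[A₀, A₁]`. -/
noncomputable def HGCKe (v : ℕ → A) (m p : ℕ) (A₀ A₁ : (Fin (p + 1) → ℝ) → A)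
    (x : Fin (m + 1) → ℝ) : A :=
  (∑' k : ℕ, hgckC (m - p) k (rad m p x) • lapIterP p k A₀ (projP m p x)) +
  emb v m (xqpart m p x) *
    ∑' k : ℕ, hgckC' (m - p) k (rad m p x) • lapIterP p k A₁ (projP m p x)

/-- The operator `(1/r)∂_r`, extended to `r = 0` by its limit `∂_r²` (on even
functions). -/
noncomputable def T1 (p : ℕ) (G : (Fin (p + 1) → ℝ) × ℝ → A) :
    (Fin (p + 1) → ℝ) × ℝ → A := fun z =>
  if z.2 = 0 then pdSr2 p G z else (z.2)⁻¹ • pdSr p G z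

/-- The operator `∂_r ∘ (1/r)`, extended to `r = 0` by its limit `(1/2)∂_r²` (on odd
functions). -/
noncomputable def T2 (p : ℕ) (G : (Fin (p + 1) → ℝ) × ℝ → A) :
    (Fin (p + 1) → ℝ) × ℝ → A := fun z =>
  if z.2 = 0 then (2 : ℝ)⁻¹ • pdSr2 p G z
  else fderiv ℝ (fun t : ℝ => t⁻¹ • G (z.1, t)) z.2 1

/-- `C_q(k) = (q-1)(q-3)⋯(q-2k+1)`, `C_q(0) = 1`. -/
noncomputable def cq (q k : ℕ) : ℝ :=
  ∏ i ∈ Finset.range k, ((q : ℝ) - (2 * (i : ℝ) + 1))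

/-- Double factorial. -/
def dfac : ℕ → ℕ
  | 0 => 1
  | 1 => 1
  | n + 2 => (n + 2) * dfac n

/-- The Fueter-Sce constant `γ_q = (-1)^{(q-1)/2} (q-1)!!/(q-2)!!`. -/
noncomputable def gammaQ (q : ℕ) : ℝ :=
  (-1 : ℝ) ^ ((q - 1) / 2) * (dfac (q - 1) : ℝ) / (dfac (q - 2) : ℝ)


section P1
variable {E F : Type*} [NormedAddCommGroup E] [NormedSpace ℝ E]
  [NormedAddCommGroup F] [NormedSpace ℝ F]

theorem summable_bd {G : Type*} [NormedAddCommGroup G] [CompleteSpace G] {c : ℕ → ℝ}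
    (hcs : Summable c) (w : ℕ → G) (h : ∀ k, ‖w k‖ ≤ c k) : Summable w :=
  Summable.of_norm_bounded hcs h

/-- Second-order term-by-term differentiation of a series on an open preconnected set. -/
theorem tsum_C2 [CompleteSpace F] {s : Set E} (hs : IsOpen s) (hc : IsPreconnected s)
    (u : ℕ → E → F) (hu : ∀ k, ContDiffOn ℝ 2 (u k) s) (c : ℕ → ℝ) (hcs : Summable c)
    (hb : ∀ k, ∀ i ≤ 2, ∀ x ∈ s, ‖iteratedFDeriv ℝ i (u k) x‖ ≤ c k) :
    ContDiffOn ℝ 2 (fun x => ∑' k, u k x) s ∧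
    (∀ x ∈ s, Summable (fun k => u k x)) ∧
    (∀ x ∈ s, HasSum (fun k => fderiv ℝ (fderiv ℝ (u k)) x)
      (fderiv ℝ (fderiv ℝ (fun x => ∑' k, u k x)) x)) := by
  have h0 : ∀ k, ∀ x ∈ s, ‖u k x‖ ≤ c k := fun k x hx => by
    simpa using hb k 0 (by norm_num) x hx
  have h1 : ∀ k, ∀ x ∈ s, ‖fderiv ℝ (u k) x‖ ≤ c k := fun k x hx => by
    simpa [norm_iteratedFDeriv_one] using hb k 1 (by norm_num) x hx
  have h2 : ∀ k, ∀ x ∈ s, ‖fderiv ℝ (fderiv ℝ (u k)) x‖ ≤ c k := fun k x hx => by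
    have := hb k 2 (by norm_num) x hx
    rwa [← norm_iteratedFDeriv_fderiv, norm_iteratedFDeriv_one] at this
  have hsum : ∀ x ∈ s, Summable (fun k => u k x) := fun x hx =>
    Summable.of_norm_bounded hcs (fun k => h0 k x hx)
  have hsum1 : ∀ x ∈ s, Summable (fun k => fderiv ℝ (u k) x) := fun x hx =>
    Summable.of_norm_bounded hcs (fun k => h1 k x hx)
  have hsum2 : ∀ x ∈ s, Summable (fun k => fderiv ℝ (fderiv ℝ (u k)) x) := by
    intro x hx
    exact summable_bd (G := E →L[ℝ] E →L[ℝ] F) hcs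
      (fun k => fderiv ℝ (fderiv ℝ (u k)) x) (fun k => h2 k x hx)
  have hu' : ∀ k, ContDiffOn ℝ 1 (fderiv ℝ (u k)) s := fun k =>
    ((contDiffOn_succ_iff_fderiv_of_isOpen (n := 1) hs).1 (by rw [one_add_one_eq_two]; exact hu k)).2.2
  have hu'' : ∀ k, ContinuousOn (fderiv ℝ (fderiv ℝ (u k))) s := fun k =>
    (contDiffOn_zero.1 ((contDiffOn_succ_iff_fderiv_of_isOpen (n := 0) hs).1
      (by rw [zero_add]; exact hu' k)).2.2)
  have d1 : ∀ k, ∀ x ∈ s, HasFDerivAt (u k) (fderiv ℝ (u k) x) x := fun k x hx =>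
    (((hu k).differentiableOn (by norm_num)).differentiableAt (hs.mem_nhds hx)).hasFDerivAt
  have d2 : ∀ k, ∀ x ∈ s, HasFDerivAt (fderiv ℝ (u k)) (fderiv ℝ (fderiv ℝ (u k)) x) x :=
    fun k x hx =>
    (((hu' k).differentiableOn (by norm_num)).differentiableAt (hs.mem_nhds hx)).hasFDerivAt
  have D1 : ∀ x ∈ s, HasFDerivAt (fun x => ∑' k, u k x) (∑' k, fderiv ℝ (u k) x) x :=
    fun x hx => hasFDerivAt_tsum_of_isPreconnected hcs hs hc d1 h1 hx (hsum x hx) hx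
  have D2 : ∀ x ∈ s, HasFDerivAt (fun x => ∑' k, fderiv ℝ (u k) x)
      (∑' k, fderiv ℝ (fderiv ℝ (u k)) x) x :=
    fun x hx => hasFDerivAt_tsum_of_isPreconnected hcs hs hc d2 h2 hx (hsum1 x hx) hx
  have e1 : ∀ x ∈ s, fderiv ℝ (fun x => ∑' k, u k x) x = ∑' k, fderiv ℝ (u k) x :=
    fun x hx => (D1 x hx).fderiv
  have D2' : ∀ x ∈ s, HasFDerivAt (fderiv ℝ (fun x => ∑' k, u k x))
      (∑' k, fderiv ℝ (fderiv ℝ (u k)) x) x := fun x hx => by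
    refine (D2 x hx).congr_of_eventuallyEq ?_
    filter_upwards [hs.mem_nhds hx] with y hy using e1 y hy
  refine ⟨?_, hsum, fun x hx => ?_⟩
  · have : ContDiffOn ℝ (1 + 1) (fun x => ∑' k, u k x) s := by
      rw [contDiffOn_succ_iff_fderiv_of_isOpen hs]
      refine ⟨fun x hx => (D1 x hx).differentiableAt.differentiableWithinAt, by simp, ?_⟩
      have : ContDiffOn ℝ (0 + 1) (fderiv ℝ (fun x => ∑' k, u k x)) s := by
        rw [contDiffOn_succ_iff_fderiv_of_isOpen hs]
        refine ⟨fun x hx => (D2' x hx).differentiableAt.differentiableWithinAt, by simp, ?_⟩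
        rw [contDiffOn_zero]
        refine ContinuousOn.congr (continuousOn_tsum hu'' hcs h2) ?_
        intro x hx
        exact (D2' x hx).fderiv
      rwa [zero_add] at this
    rwa [one_add_one_eq_two] at this
  · rw [(D2' x hx).fderiv]
    exact (hsum2 x hx).hasSum

/-- `h` is `C²` on `s` with derivative bounds `‖D^i h‖ ≤ ε τ^i`. -/
def Bd (s : Set E) (τ ε : ℝ) (h : E → F) : Prop :=
  ContDiffOn ℝ 2 h s ∧ ∀ i ≤ 2, ∀ x ∈ s, ‖iteratedFDerivWithin ℝ i h s x‖ ≤ ε * τ ^ i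

theorem Bd.smul {s : Set E} (hs : IsOpen s) {τ ε₁ ε₂ : ℝ} (hτ : 0 ≤ τ) (h₁ : 0 ≤ ε₁)
    (h₂ : 0 ≤ ε₂) {a : E → ℝ} {g : E → F} (ha : Bd s τ ε₁ a) (hg : Bd s τ ε₂ g) :
    Bd s τ (4 * ε₁ * ε₂) (fun x => a x • g x) := by
  refine ⟨ha.1.smul hg.1, fun i hi x hx => ?_⟩
  refine (norm_iteratedFDerivWithin_smul_le ha.1 hg.1 hs.uniqueDiffOn hx
    (by exact_mod_cast hi)).trans ?_
  have : ∀ j ∈ Finset.range (i + 1), (i.choose j : ℝ) * ‖iteratedFDerivWithin ℝ j a s x‖ *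
        ‖iteratedFDerivWithin ℝ (i - j) g s x‖ ≤ (i.choose j : ℝ) * (ε₁ * ε₂ * τ ^ i) := by
    intro j hj
    have hj' : j ≤ i := by simpa [Nat.lt_succ_iff] using hj
    have e : ε₁ * ε₂ * τ ^ i = (ε₁ * τ ^ j) * (ε₂ * τ ^ (i - j)) := by
      rw [mul_mul_mul_comm, ← pow_add, Nat.add_sub_cancel' hj']
    rw [e, mul_assoc]
    have A := ha.2 j (by omega) x hx
    have B := hg.2 (i - j) (by omega) x hx
    gcongr
  refine (Finset.sum_le_sum this).trans ?_
  rw [← Finset.sum_mul, ← Nat.cast_sum, Nat.sum_range_choose]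
  have h4 : ((2 ^ i : ℕ) : ℝ) ≤ 4 := by
    interval_cases i <;> norm_num
  calc ((2 ^ i : ℕ) : ℝ) * (ε₁ * ε₂ * τ ^ i) ≤ 4 * (ε₁ * ε₂ * τ ^ i) := by
        gcongr
    _ = _ := by ring

theorem Bd.add {s : Set E} (hs : IsOpen s) {τ ε₁ ε₂ : ℝ} {a g : E → F}
    (ha : Bd s τ ε₁ a) (hg : Bd s τ ε₂ g) :
    Bd s τ (ε₁ + ε₂) (fun x => a x + g x) := by
  refine ⟨ha.1.add hg.1, fun i hi x hx => ?_⟩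
  have hi' : ((i : ℕ) : WithTop ℕ∞) ≤ 2 := by exact_mod_cast hi
  have : iteratedFDerivWithin ℝ i (fun x => a x + g x) s x = _ :=
    iteratedFDerivWithin_add_apply ((ha.1 x hx).of_le hi') ((hg.1 x hx).of_le hi')
      hs.uniqueDiffOn hx
  rw [this, add_mul]
  exact (norm_add_le _ _).trans (add_le_add (ha.2 i hi x hx) (hg.2 i hi x hx))

theorem Bd.mono {s : Set E} {τ ε₁ ε₂ : ℝ} (hτ : 0 ≤ τ) {a : E → F} (ha : Bd s τ ε₁ a)
    (h : ε₁ ≤ ε₂) : Bd s τ ε₂ a :=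
  ⟨ha.1, fun i hi x hx => (ha.2 i hi x hx).trans (by gcongr)⟩

theorem Bd.const {s : Set E} (hs : IsOpen s) {τ : ℝ} (hτ : 0 ≤ τ) (c : F) :
    Bd s τ ‖c‖ (fun _ : E => c) := by
  refine ⟨contDiffOn_const, fun i hi x hx => ?_⟩
  rw [iteratedFDerivWithin_of_isOpen i hs hx]
  rcases Nat.eq_zero_or_pos i with rfl | h
  · simp
  · rw [iteratedFDeriv_const_of_ne h.ne']
    simp; positivity

theorem Bd.clm {s : Set E} (hs : IsOpen s) {δ τ : ℝ} (hδ : 0 ≤ δ) (hτ : 0 ≤ τ)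
    (L : E →L[ℝ] F)
    (h0 : ∀ x ∈ s, ‖L x‖ ≤ δ) (h1 : ‖L‖ ≤ δ * τ) : Bd s τ δ (fun x => L x) := by
  refine ⟨L.contDiff.contDiffOn, fun i hi x hx => ?_⟩
  rw [iteratedFDerivWithin_of_isOpen i hs hx]
  interval_cases i
  · simpa using h0 x hx
  · rw [norm_iteratedFDeriv_one]
    simpa using h1
  · rw [← norm_iteratedFDeriv_fderiv, norm_iteratedFDeriv_one]
    have : fderiv ℝ (fun x => L x) = fun _ => L := by ext1 x; exact L.fderiv
    rw [this]
    simp; positivity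

theorem Bd.pow {s : Set E} (hs : IsOpen s) {τ ε : ℝ} (hτ : 0 ≤ τ) (hε : 0 ≤ ε) {a : E → ℝ}
    (ha : Bd s τ ε a) (k : ℕ) : Bd s τ ((4 * ε) ^ k) (fun x => a x ^ k) := by
  induction k with
  | zero => simpa using Bd.const hs hτ (1 : ℝ)
  | succ k ih =>
    have := Bd.smul hs hτ hε (by positivity) ha ih
    have e : (fun x => a x ^ (k + 1)) = fun x => a x • a x ^ k := by
      ext x; simp [pow_succ']
    rw [e, pow_succ']
    exact this

theorem Bd.sum {ι : Type*} {s : Set E} (hs : IsOpen s) {τ : ℝ} (hτ : 0 ≤ τ) (t : Finset ι)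
    (ε : ι → ℝ) (a : ι → E → F) (ha : ∀ i ∈ t, Bd s τ (ε i) (a i)) :
    Bd s τ (∑ i ∈ t, ε i) (fun x => ∑ i ∈ t, a i x) := by
  classical
  induction t using Finset.induction_on with
  | empty => simpa using Bd.const hs hτ (0 : F)
  | insert i t hi ih =>
    simp only [Finset.sum_insert hi]
    exact Bd.add hs (ha i (by simp)) (ih fun j hj => ha j (by simp [hj]))

theorem Bd.bound {s : Set E} (hs : IsOpen s) {τ ε : ℝ} (hτ : 1 ≤ τ) (hε : 0 ≤ ε) {a : E → F}
    (ha : Bd s τ ε a) : ∀ i ≤ 2, ∀ x ∈ s, ‖iteratedFDeriv ℝ i a x‖ ≤ ε * τ ^ 2 := by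
  intro i hi x hx
  rw [← iteratedFDerivWithin_of_isOpen i hs hx]
  refine (ha.2 i hi x hx).trans ?_
  gcongr

/-- Cauchy-type estimates for the derivatives of an analytic function near a point. -/
theorem analytic_bound [CompleteSpace F] {f : E → F} {x : E} (hf : AnalyticAt ℝ f x) :
    ∃ δ > 0, ∃ C M : ℝ, 0 ≤ C ∧ 1 ≤ M ∧ ∀ y ∈ Metric.ball x δ, ∀ n : ℕ,
      ‖iteratedFDeriv ℝ n f y‖ ≤ C * n.factorial * M ^ n := by
  obtain ⟨P, r, hP⟩ := hf
  obtain ⟨ρ', hρ'0, hρ'⟩ := ENNReal.lt_iff_exists_nnreal_btwn.1 hP.r_pos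
  set ρ : NNReal := ρ' / 4 with hρ
  have hρ'pos : 0 < ρ' := by exact_mod_cast hρ'0
  have hρpos : 0 < ρ := by rw [hρ]; positivity
  have h2ρ : (ρ + ρ : NNReal) < ρ' := by
    have h : (0:ℝ) < ρ' := by exact_mod_cast hρ'pos
    rw [← NNReal.coe_lt_coe, hρ]; push_cast; linarith
  have hrr : ((ρ + ρ : NNReal) : ENNReal) < r := lt_trans (by exact_mod_cast h2ρ) hρ'
  have hsm := P.changeOriginSeries_summable_aux₁ (r := ρ) (r' := ρ)
    (lt_of_lt_of_le (by simpa using hrr) hP.r_le)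
  set C : NNReal := ∑' s : Σ k l : ℕ, { s : Finset (Fin (k + l)) // s.card = l },
      ‖P (s.1 + s.2.1)‖₊ * ρ ^ s.2.1 * ρ ^ s.1 with hC
  refine ⟨ρ, by exact_mod_cast hρpos, C, max 1 (ρ : ℝ)⁻¹, C.2, le_max_left _ _, ?_⟩
  intro y hy n
  have hyx : ‖y - x‖₊ < ρ := by
    rw [← NNReal.coe_lt_coe]; simpa [dist_eq_norm] using hy
  have hρr : (ρ : ENNReal) < r := lt_of_le_of_lt (by simp) hrr
  have hyr : (‖y - x‖₊ : ENNReal) < r := lt_trans (by exact_mod_cast hyx) hρr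
  have hco := hP.changeOrigin (y := y - x) hyr
  rw [add_sub_cancel] at hco
  have hb : ‖P.changeOrigin (y - x) n‖₊ * ρ ^ n ≤ C := by
    have h1 := P.nnnorm_changeOrigin_le (x := y - x) n (lt_of_lt_of_le hyr hP.r_le)
    have hs2 := P.changeOriginSeries_summable_aux₂ (r := ρ) (lt_of_lt_of_le hρr hP.r_le) n
    have hs1 : Summable fun s : Σ l : ℕ, { s : Finset (Fin (n + l)) // s.card = l } =>
      ‖P (n + s.1)‖₊ * ‖y - x‖₊ ^ s.1 := by
      refine NNReal.summable_of_le (fun s => ?_) hs2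
      gcongr
    have h2 : (∑' s : Σ l : ℕ, { s : Finset (Fin (n + l)) // s.card = l },
        ‖P (n + s.1)‖₊ * ‖y - x‖₊ ^ s.1) ≤
        ∑' s : Σ l : ℕ, { s : Finset (Fin (n + l)) // s.card = l }, ‖P (n + s.1)‖₊ * ρ ^ s.1 := by
      refine Summable.tsum_le_tsum (fun s => ?_) hs1 hs2
      gcongr
    have h3 := NNReal.summable_sigma.1 hsm
    calc ‖P.changeOrigin (y - x) n‖₊ * ρ ^ n
        ≤ (∑' s : Σ l : ℕ, { s : Finset (Fin (n + l)) // s.card = l },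
            ‖P (n + s.1)‖₊ * ρ ^ s.1) * ρ ^ n := by gcongr; exact h1.trans h2
      _ = ∑' s : Σ l : ℕ, { s : Finset (Fin (n + l)) // s.card = l },
            ‖P (n + s.1)‖₊ * ρ ^ s.1 * ρ ^ n := (NNReal.tsum_mul_right _ _).symm
      _ ≤ ∑' k, ∑' s : Σ l : ℕ, { s : Finset (Fin (k + l)) // s.card = l },
            ‖P (k + s.1)‖₊ * ρ ^ s.1 * ρ ^ k :=
          Summable.le_tsum h3.2 n (fun _ _ => by positivity)
      _ = C := by rw [hC, Summable.tsum_sigma' (fun k => h3.1 k) hsm]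
  have hb' : ‖P.changeOrigin (y - x) n‖ ≤ C * (max 1 (ρ : ℝ)⁻¹) ^ n := by
    have h : ‖P.changeOrigin (y - x) n‖ * (ρ : ℝ) ^ n ≤ C := by exact_mod_cast hb
    have hp : (0:ℝ) < (ρ : ℝ) ^ n := by positivity
    calc ‖P.changeOrigin (y - x) n‖ = ‖P.changeOrigin (y - x) n‖ * (ρ : ℝ) ^ n * ((ρ:ℝ)⁻¹) ^ n := by
          rw [mul_assoc, ← mul_pow, mul_inv_cancel₀ (by positivity), one_pow, mul_one]
      _ ≤ C * (max 1 (ρ : ℝ)⁻¹) ^ n := by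
          gcongr
          exact le_max_right _ _
  have hfin : ‖iteratedFDeriv ℝ n f y‖ ≤ n.factorial * ‖P.changeOrigin (y - x) n‖ := by
    refine ContinuousMultilinearMap.opNorm_le_bound (by positivity) fun w => ?_
    rw [hco.iteratedFDeriv_eq_sum_of_completeSpace]
    refine (norm_sum_le _ _).trans ?_
    calc ∑ σ : Equiv.Perm (Fin n), ‖P.changeOrigin (y - x) n fun i => w (σ i)‖
        ≤ ∑ σ : Equiv.Perm (Fin n), ‖P.changeOrigin (y - x) n‖ * ∏ i, ‖w i‖ := by
          refine Finset.sum_le_sum fun σ _ => ?_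
          refine (ContinuousMultilinearMap.le_opNorm _ _).trans (le_of_eq ?_)
          congr 1
          exact Equiv.prod_comp σ (fun i => ‖w i‖)
      _ = _ := by
          simp [Finset.card_univ, Fintype.card_perm]; ring
  calc ‖iteratedFDeriv ℝ n f y‖ ≤ n.factorial * ‖P.changeOrigin (y - x) n‖ := hfin
    _ ≤ n.factorial * (C * (max 1 (ρ : ℝ)⁻¹) ^ n) := by gcongr
    _ = _ := by ring

end P1


section P2
variable {A : Type*} [NormedAddCommGroup A] [NormedSpace ℝ A] [Mul A] [One A]

theorem pdF_pdF_eq {m : ℕ} {f : (Fin (m + 1) → ℝ) → A} {x : Fin (m + 1) → ℝ}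
    (h : DifferentiableAt ℝ (fderiv ℝ f) x) (s : Fin (m + 1)) :
    pdF m s (pdF m s f) x = fderiv ℝ (fderiv ℝ f) x (Pi.single s 1) (Pi.single s 1) := by
  have : HasFDerivAt (fun y => fderiv ℝ f y (Pi.single s 1)) _ x :=
    h.hasFDerivAt.clm_apply (hasFDerivAt_const (Pi.single s 1 : Fin (m + 1) → ℝ) x)
  unfold pdF
  rw [this.fderiv]
  simp

theorem pdP_pdP_eq {p : ℕ} {f : (Fin (p + 1) → ℝ) → A} {x : Fin (p + 1) → ℝ}
    (h : DifferentiableAt ℝ (fderiv ℝ f) x) (s : Fin (p + 1)) :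
    pdP p s (pdP p s f) x = fderiv ℝ (fderiv ℝ f) x (Pi.single s 1) (Pi.single s 1) :=
  pdF_pdF_eq h s

theorem lapF_eq {m : ℕ} {f : (Fin (m + 1) → ℝ) → A} {x : Fin (m + 1) → ℝ}
    (h : DifferentiableAt ℝ (fderiv ℝ f) x) :
    lapF m f x = ∑ s : Fin (m + 1),
      fderiv ℝ (fderiv ℝ f) x (Pi.single s 1) (Pi.single s 1) :=
  Finset.sum_congr rfl fun s _ => pdF_pdF_eq h s

theorem C2_diff {E F : Type*} [NormedAddCommGroup E] [NormedSpace ℝ E]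
    [NormedAddCommGroup F] [NormedSpace ℝ F] {f : E → F} {x : E} (h : ContDiffAt ℝ 2 f x) :
    DifferentiableAt ℝ (fderiv ℝ f) x :=
  (h.fderiv_right (m := 1) (by rw [one_add_one_eq_two])).differentiableAt (by norm_num)

/-- `projP` as a continuous linear map. -/
def projPL (m p : ℕ) : (Fin (m + 1) → ℝ) →L[ℝ] (Fin (p + 1) → ℝ) :=
  ContinuousLinearMap.pi fun s =>
    if h : (s : ℕ) < m + 1 then ContinuousLinearMap.proj ⟨(s : ℕ), h⟩ else 0

theorem projPL_apply (m p : ℕ) (x : Fin (m + 1) → ℝ) : projPL m p x = projP m p x := by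
  ext s
  simp only [projPL, projP, ContinuousLinearMap.coe_pi']
  split_ifs <;> simp

theorem projPL_norm (m p : ℕ) : ‖projPL m p‖ ≤ 1 := by
  refine ContinuousLinearMap.opNorm_le_bound _ zero_le_one fun x => ?_
  rw [projPL_apply, one_mul, pi_norm_le_iff_of_nonneg (norm_nonneg _)]
  intro s
  unfold projP
  split_ifs with h
  · exact norm_le_pi_norm x _
  · simp

/-- `injP` as a continuous linear map. -/
def injPL (m p : ℕ) : (Fin (p + 1) → ℝ) →L[ℝ] (Fin (m + 1) → ℝ) :=
  ContinuousLinearMap.pi fun s =>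
    if h : (s : ℕ) < p + 1 then ContinuousLinearMap.proj ⟨(s : ℕ), h⟩ else 0

theorem injPL_apply (m p : ℕ) (x : Fin (p + 1) → ℝ) : injPL m p x = injP m p x := by
  ext s
  simp only [injPL, injP, ContinuousLinearMap.coe_pi']
  split_ifs <;> simp

theorem projP_injP {m p : ℕ} (hp : p < m) (y : Fin (p + 1) → ℝ) :
    projP m p (injP m p y) = y := by
  ext s
  have := s.2
  simp only [projP, injP]
  rw [dif_pos (by omega), dif_pos (by omega)]

/-- The coordinate functional `x ↦ (x_q)_s`. -/
def xqc (m p : ℕ) (s : Fin (m + 1)) : (Fin (m + 1) → ℝ) →L[ℝ] ℝ :=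
  if (s : ℕ) ≤ p then 0 else ContinuousLinearMap.proj s

theorem xqc_apply (m p : ℕ) (s : Fin (m + 1)) (x : Fin (m + 1) → ℝ) :
    xqc m p s x = xqpart m p x s := by
  unfold xqc xqpart
  split_ifs <;> simp

theorem xqc_norm (m p : ℕ) (s : Fin (m + 1)) : ‖xqc m p s‖ ≤ 1 := by
  refine ContinuousLinearMap.opNorm_le_bound _ zero_le_one fun x => ?_
  rw [xqc_apply, one_mul]
  unfold xqpart
  split_ifs
  · simp
  · exact norm_le_pi_norm x s

/-- `Q(x) = |x_q|²`. -/
def Qf (m p : ℕ) (x : Fin (m + 1) → ℝ) : ℝ := ∑ s : Fin (m + 1), (xqpart m p x s) ^ 2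

theorem Qf_nonneg (m p : ℕ) (x : Fin (m + 1) → ℝ) : 0 ≤ Qf m p x :=
  Finset.sum_nonneg fun _ _ => sq_nonneg _

theorem projP_single_le {m p : ℕ} (s : Fin (m + 1)) (h : (s : ℕ) < p + 1) :
    projP m p (Pi.single s (1 : ℝ)) = Pi.single ⟨(s : ℕ), h⟩ 1 := by
  ext t
  unfold projP
  by_cases hts : (t : ℕ) = s
  · have : t = ⟨(s : ℕ), h⟩ := Fin.ext hts
    subst this
    simp
    have := s.2
    omega
  · rw [Pi.single_eq_of_ne (fun hh => hts (by rw [hh]))]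
    split_ifs with h2
    · exact Pi.single_eq_of_ne (fun hh => hts (by rw [← hh])) _
    · rfl

theorem projP_single_gt {m p : ℕ} (s : Fin (m + 1)) (h : ¬ (s : ℕ) < p + 1) :
    projP m p (Pi.single s (1 : ℝ)) = 0 := by
  ext t
  unfold projP
  split_ifs with h2
  · refine Pi.single_eq_of_ne (fun hh => ?_) _
    have := t.2
    rw [← hh] at h
    exact h this
  · rfl

theorem xqpart_single {m p : ℕ} (s t : Fin (m + 1)) :
    xqpart m p (Pi.single t (1 : ℝ)) s = if s = t ∧ ¬ (t : ℕ) ≤ p then 1 else 0 := by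
  unfold xqpart
  by_cases h : s = t
  · subst h
    by_cases h2 : (s : ℕ) ≤ p <;> simp [h2]
  · simp [h]

theorem sum_castLE {M : Type*} [AddCommMonoid M] {m p : ℕ} (hp : p < m)
    (G : Fin (p + 1) → M) :
    (∑ s : Fin (m + 1), if h : (s : ℕ) < p + 1 then G ⟨(s : ℕ), h⟩ else 0) =
      ∑ t : Fin (p + 1), G t := by
  symm
  refine Finset.sum_of_injOn (fun t : Fin (p + 1) => (⟨(t : ℕ), by omega⟩ : Fin (m + 1)))
    ?_ ?_ ?_ ?_
  · intro a _ b _ hab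
    simpa [Fin.ext_iff] using hab
  · intro a _; simp
  · intro a _ ha
    split_ifs with h
    · exact absurd ⟨⟨(a : ℕ), h⟩, by simp, by simp⟩ ha
    · rfl
  · intro a _
    simp
    intro h
    have := a.2
    omega

theorem pdF_smul_proj {m p : ℕ} {a : (Fin (m + 1) → ℝ) → ℝ} {g : (Fin (p + 1) → ℝ) → A}
    {x : Fin (m + 1) → ℝ} (ha : DifferentiableAt ℝ a x)
    (hg : DifferentiableAt ℝ g (projP m p x)) (s : Fin (m + 1)) :
    pdF m s (fun x => a x • g (projP m p x)) x = pdF m s a x • g (projP m p x) +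
      a x • fderiv ℝ g (projP m p x) (projP m p (Pi.single s 1)) := by
  have h1 : HasFDerivAt (projP m p) (projPL m p) x := by
    have : projP m p = projPL m p := by ext1 x; rw [projPL_apply]
    rw [this]; exact (projPL m p).hasFDerivAt
  have h2 : HasFDerivAt (fun x => g (projP m p x)) _ x := hg.hasFDerivAt.comp x h1
  have h3 : HasFDerivAt (fun x => a x • g (projP m p x)) _ x := ha.hasFDerivAt.smul h2
  unfold pdF
  rw [h3.fderiv]
  simp [projPL_apply, add_comm]

theorem lapF_term {m p : ℕ} (hp : p < m) {a : (Fin (m + 1) → ℝ) → ℝ} (ha : ContDiff ℝ 2 a)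
    (ha0 : ∀ s : Fin (m + 1), (s : ℕ) < p + 1 → ∀ x, pdF m s a x = 0)
    {g : (Fin (p + 1) → ℝ) → A} {W : Set (Fin (p + 1) → ℝ)} (hW : IsOpen W)
    (hg : ContDiffOn ℝ 2 g W) {x : Fin (m + 1) → ℝ} (hx : projP m p x ∈ W) :
    lapF m (fun x => a x • g (projP m p x)) x =
      lapF m a x • g (projP m p x) + a x • lapP p g (projP m p x) := by
  have hcont : Continuous (projP m p) := by
    have : projP m p = projPL m p := by ext1 x; rw [projPL_apply]
    rw [this]; exact (projPL m p).continuous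
  have hgd : ∀ y ∈ W, DifferentiableAt ℝ g y := fun y hy =>
    (hg.differentiableOn (by norm_num)).differentiableAt (hW.mem_nhds hy)
  have hgC : ContDiffAt ℝ 2 g (projP m p x) := hg.contDiffAt (hW.mem_nhds hx)
  have had : ∀ y, DifferentiableAt ℝ a y := fun y => (ha.differentiable (by norm_num)) y
  have hnear : ∀ᶠ x' in 𝓝 x, projP m p x' ∈ W := hcont.continuousAt.eventually (hW.mem_nhds hx)
  have hpd : ∀ s : Fin (m + 1), DifferentiableAt ℝ (pdF m s a) x := fun s =>
    (C2_diff ha.contDiffAt).clm_apply (differentiableAt_const _)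
  have key : ∀ s : Fin (m + 1), pdF m s (pdF m s (fun x => a x • g (projP m p x))) x =
      pdF m s (pdF m s a) x • g (projP m p x) +
      (if h : (s : ℕ) < p + 1 then
        a x • pdP p ⟨s, h⟩ (pdP p ⟨s, h⟩ g) (projP m p x) else 0) := by
    intro s
    by_cases h : (s : ℕ) < p + 1
    · rw [dif_pos h]
      have e1 : pdF m s (fun x => a x • g (projP m p x)) =ᶠ[𝓝 x]
          fun x' => a x' • (pdP p ⟨s, h⟩ g) (projP m p x') := by
        filter_upwards [hnear] with x' hx'
        rw [pdF_smul_proj (had x') (hgd _ hx'), ha0 s h, projP_single_le s h]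
        simp [pdP]
      have e2 : pdF m s (pdF m s (fun x => a x • g (projP m p x))) x =
          pdF m s (fun x' => a x' • (pdP p ⟨s, h⟩ g) (projP m p x')) x := by
        conv_lhs => unfold pdF
        rw [show (fun x_1 => (fderiv ℝ (fun x => a x • g (projP m p x)) x_1) (Pi.single s 1)) =
          pdF m s (fun x => a x • g (projP m p x)) from rfl, e1.fderiv_eq]
        rfl
      have hgd2 : DifferentiableAt ℝ (pdP p ⟨s, h⟩ g) (projP m p x) :=
        (C2_diff hgC).clm_apply (differentiableAt_const _)
      have e3 : pdF m s (pdF m s a) x = 0 := by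
        have : pdF m s a = fun _ => (0 : ℝ) := by ext1 x; exact ha0 s h x
        rw [this]; simp [pdF]
      rw [e2, pdF_smul_proj (had x) hgd2, ha0 s h, projP_single_le s h, e3]
      simp [pdP]
    · rw [dif_neg h, add_zero]
      have e1 : pdF m s (fun x => a x • g (projP m p x)) =ᶠ[𝓝 x]
          fun x' => (pdF m s a x') • g (projP m p x') := by
        filter_upwards [hnear] with x' hx'
        rw [pdF_smul_proj (had x') (hgd _ hx'), projP_single_gt s h]
        simp
      have e2 : pdF m s (pdF m s (fun x => a x • g (projP m p x))) x =
          pdF m s (fun x' => (pdF m s a x') • g (projP m p x')) x := by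
        conv_lhs => unfold pdF
        rw [show (fun x_1 => (fderiv ℝ (fun x => a x • g (projP m p x)) x_1) (Pi.single s 1)) =
          pdF m s (fun x => a x • g (projP m p x)) from rfl, e1.fderiv_eq]
        rfl
      rw [e2, pdF_smul_proj (hpd s) (hgd _ hx), projP_single_gt s h]
      simp
  unfold lapF
  rw [Finset.sum_congr rfl fun s _ => key s, Finset.sum_add_distrib, ← Finset.sum_smul]
  congr 1
  rw [sum_castLE hp (fun t => a x • pdP p t (pdP p t g) (projP m p x))]
  rw [← Finset.smul_sum]
  rfl

/-- The admissible prefactors: `P = 1` (`e = 0`) or `P = x_j` (`e = 1`). -/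
structure IsPf (m p : ℕ) (P : (Fin (m + 1) → ℝ) → ℝ) (e : ℝ) : Prop where
  lin : ∃ (c : ℝ) (L : (Fin (m + 1) → ℝ) →L[ℝ] ℝ), (∀ x, P x = c + L x) ∧
    (∀ t : Fin (m + 1), (t : ℕ) < p + 1 → L (Pi.single t 1) = 0) ∧
    ∀ x, ∑ t : Fin (m + 1), L (Pi.single t 1) * xqpart m p x t = e * P x

theorem isPf_one (m p : ℕ) : IsPf m p (fun _ => 1) 0 :=
  ⟨1, 0, by simp, by simp, by simp⟩

theorem isPf_coord (m p : ℕ) (j : Fin (m + 1)) : IsPf m p (fun x => xqpart m p x j) 1 := by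
  refine ⟨0, xqc m p j, fun x => by rw [xqc_apply, zero_add], fun t ht => ?_, fun x => ?_⟩
  · rw [xqc_apply, xqpart_single, if_neg]
    rintro ⟨_, h⟩; omega
  · rw [Finset.sum_eq_single j]
    · rw [xqc_apply, xqpart_single]
      by_cases h : (j : ℕ) ≤ p <;> simp [h, xqpart]
    · intro t _ ht
      rw [xqc_apply, xqpart_single, if_neg, zero_mul]
      rintro ⟨h, _⟩; exact ht h.symm
    · simp

theorem hasFDerivAt_Qf (m p : ℕ) (x : Fin (m + 1) → ℝ) :
    HasFDerivAt (Qf m p) (∑ s : Fin (m + 1), (2 * xqpart m p x s) • xqc m p s) x := by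
  have : Qf m p = fun x => ∑ s : Fin (m + 1), (xqc m p s x) ^ 2 := by
    ext x; simp [Qf, xqc_apply]
  rw [this]
  refine HasFDerivAt.fun_sum fun s _ => ?_
  have := ((xqc m p s).hasFDerivAt (x := x)).pow 2
  simpa [xqc_apply] using this

theorem contDiff_Qf (m p : ℕ) : ContDiff ℝ 2 (Qf m p) := by
  have : Qf m p = fun x => ∑ s : Fin (m + 1), (xqc m p s x) ^ 2 := by
    ext x; simp [Qf, xqc_apply]
  rw [this]
  exact ContDiff.sum fun s _ => (xqc m p s).contDiff.pow 2

theorem dQf (m p : ℕ) (x : Fin (m + 1) → ℝ) (t : Fin (m + 1)) :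
    (∑ s : Fin (m + 1), (2 * xqpart m p x s) • xqc m p s) (Pi.single t 1) =
      2 * xqpart m p x t := by
  simp only [ContinuousLinearMap.sum_apply, ContinuousLinearMap.smul_apply, xqc_apply,
    xqpart_single, smul_eq_mul]
  rw [Finset.sum_eq_single t]
  · by_cases h : (t : ℕ) ≤ p <;> simp [h, xqpart]
  · intro s _ hs
    simp [hs]
  · simp

theorem card_gt {m p : ℕ} (hp : p < m) :
    (∑ t : Fin (m + 1), if (t : ℕ) ≤ p then (0 : ℝ) else 1) = ((m - p : ℕ) : ℝ) := by
  have h := Fin.sum_univ_eq_sum_range (fun t => if t ≤ p then (0 : ℝ) else 1) (m + 1)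
  rw [h]
  have : m + 1 = (p + 1) + (m - p) := by omega
  rw [this, Finset.sum_range_add]
  rw [Finset.sum_eq_zero]
  · rw [Finset.sum_congr rfl (fun x _ => if_neg (by omega))]
    simp
  · intro x hx
    simp at hx
    simp; omega

theorem pdF_PQ {m p : ℕ} {P : (Fin (m + 1) → ℝ) → ℝ}
    {c : ℝ} {L : (Fin (m + 1) → ℝ) →L[ℝ] ℝ} (hPL : ∀ x, P x = c + L x) (k : ℕ)
    (t : Fin (m + 1)) (x : Fin (m + 1) → ℝ) :
    HasFDerivAt P L x ∧
    pdF m t (fun x => P x * Qf m p x ^ k) x = L (Pi.single t 1) * Qf m p x ^ k +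
      P x * ((k : ℝ) * Qf m p x ^ (k - 1) * (2 * xqpart m p x t)) := by
  have h1 : HasFDerivAt P L x := by
    have : P = fun x => c + L x := by ext x; exact hPL x
    rw [this]; exact L.hasFDerivAt.const_add c
  refine ⟨h1, ?_⟩
  have h2 : HasFDerivAt (fun x => P x * Qf m p x ^ k) _ x :=
    h1.mul ((hasFDerivAt_Qf m p x).pow k)
  unfold pdF
  rw [h2.fderiv]
  have := dQf m p x t
  simp only [ContinuousLinearMap.add_apply, ContinuousLinearMap.smul_apply, this, smul_eq_mul,
    nsmul_eq_mul]
  ring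

theorem lapF_PQ {m p : ℕ} (hp : p < m) {P : (Fin (m + 1) → ℝ) → ℝ} {e : ℝ}
    (hP : IsPf m p P e) (k : ℕ) :
    ContDiff ℝ 2 (fun x => P x * Qf m p x ^ k) ∧
    (∀ s : Fin (m + 1), (s : ℕ) < p + 1 → ∀ x, pdF m s (fun x => P x * Qf m p x ^ k) x = 0) ∧
    ∀ x, lapF m (fun x => P x * Qf m p x ^ k) x =
      (4 * (k : ℝ) * ((k : ℝ) - 1 + (((m - p : ℕ) : ℝ) / 2 + e))) * (P x * Qf m p x ^ (k - 1)) := by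
  obtain ⟨c, L, hPL, hL0, hLe⟩ := hP.lin
  refine ⟨?_, ?_, ?_⟩
  · have : P = fun x => c + L x := by ext x; exact hPL x
    rw [this]
    exact (contDiff_const.add L.contDiff).mul ((contDiff_Qf m p).pow k)
  · intro s hs x
    rw [(pdF_PQ hPL k s x).2, hL0 s hs, xqpart, if_pos (by omega)]
    simp
  · intro x
    have key : ∀ t : Fin (m + 1), pdF m t (pdF m t (fun x => P x * Qf m p x ^ k)) x =
        4 * k * Qf m p x ^ (k - 1) * (L (Pi.single t 1) * xqpart m p x t) +
        P x * (4 * (k : ℝ) * (((k - 1 : ℕ) : ℝ) * Qf m p x ^ (k - 1 - 1)) * xqpart m p x t ^ 2) +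
        P x * (2 * k * Qf m p x ^ (k - 1)) * (if (t : ℕ) ≤ p then 0 else 1) := by
      intro t
      have e1 : pdF m t (fun x => P x * Qf m p x ^ k) = fun x =>
        L (Pi.single t 1) * Qf m p x ^ k +
          P x * ((k : ℝ) * Qf m p x ^ (k - 1) * (2 * xqc m p t x)) := by
        ext1 x; rw [(pdF_PQ hPL k t x).2, xqc_apply]
      rw [e1]
      have h1 := (pdF_PQ (p := p) hPL k t x).1
      have hQ := hasFDerivAt_Qf m p x
      have h2 : HasFDerivAt (fun x => L (Pi.single t 1) * Qf m p x ^ k +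
          P x * ((k : ℝ) * Qf m p x ^ (k - 1) * (2 * xqc m p t x))) _ x :=
        ((hQ.pow k).const_mul (L (Pi.single t 1))).add
          (h1.mul (((hQ.pow (k - 1)).const_mul (k : ℝ)).mul
            ((xqc m p t).hasFDerivAt.const_mul 2)))
      unfold pdF
      rw [h2.fderiv]
      have := dQf m p x t
      simp only [ContinuousLinearMap.add_apply, ContinuousLinearMap.smul_apply, this, smul_eq_mul,
        nsmul_eq_mul, xqc_apply, xqpart_single]
      by_cases h : (t : ℕ) ≤ p
      · simp [h]; ring
      · simp [h]; ring
    unfold lapF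
    rw [Finset.sum_congr rfl fun t _ => key t, Finset.sum_add_distrib, Finset.sum_add_distrib,
      ← Finset.mul_sum, hLe]
    simp only [← Finset.mul_sum]
    rw [card_gt hp]
    rw [show ∑ i : Fin (m + 1), xqpart m p x i ^ 2 = Qf m p x from rfl]
    rcases k with _ | _ | k
    · simp
    · simp; ring
    · simp only [Nat.add_sub_cancel]
      push_cast
      ring

end P2


section P3
variable {A : Type*} [NormedAddCommGroup A] [NormedSpace ℝ A]

theorem mapsTo_proj {m p : ℕ} (hp : p < m) (y0 : Fin (p + 1) → ℝ) {δ : ℝ}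
    {x : Fin (m + 1) → ℝ} (hx : x ∈ Metric.ball (injP m p y0) δ) :
    projP m p x ∈ Metric.ball y0 δ := by
  rw [Metric.mem_ball, dist_eq_norm] at *
  have : projP m p x - y0 = projPL m p (x - injP m p y0) := by
    rw [map_sub, projPL_apply, projPL_apply, projP_injP hp]
  rw [this]
  refine lt_of_le_of_lt ((projPL m p).le_opNorm _) ?_
  refine lt_of_le_of_lt (mul_le_mul_of_nonneg_right (projPL_norm m p) (norm_nonneg _)) ?_
  rwa [one_mul]

theorem xq_lt {m p : ℕ} (y0 : Fin (p + 1) → ℝ) {δ : ℝ} (hδ : 0 < δ)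
    {x : Fin (m + 1) → ℝ} (hx : x ∈ Metric.ball (injP m p y0) δ) (s : Fin (m + 1)) :
    |xqpart m p x s| < δ := by
  rw [Metric.mem_ball, dist_eq_norm, pi_norm_lt_iff hδ] at hx
  have h := hx s
  unfold xqpart
  split_ifs with h1
  · simpa using hδ
  · have : injP m p y0 s = 0 := by
      unfold injP; rw [dif_neg (by omega)]
    simpa [this] using h

theorem Qf_le {m p : ℕ} (y0 : Fin (p + 1) → ℝ) {δ : ℝ} (hδ : 0 < δ)
    {x : Fin (m + 1) → ℝ} (hx : x ∈ Metric.ball (injP m p y0) δ) :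
    Qf m p x ≤ (m + 1) * δ ^ 2 := by
  unfold Qf
  have : ∀ s ∈ (Finset.univ : Finset (Fin (m + 1))), xqpart m p x s ^ 2 ≤ δ ^ 2 := fun s _ => by
    rw [← sq_abs]
    have := xq_lt y0 hδ hx s
    gcongr
  refine (Finset.sum_le_sum this).trans ?_
  simp

theorem Bd_proj {m p : ℕ} (hp : p < m) {y0 : Fin (p + 1) → ℝ} {δ τ C : ℝ} (hτ : 1 ≤ τ)
    (hC : 0 ≤ C) {g : (Fin (p + 1) → ℝ) → A} (hg : ContDiffOn ℝ 2 g (Metric.ball y0 δ))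
    (hb : ∀ i ≤ 2, ∀ y ∈ Metric.ball y0 δ, ‖iteratedFDeriv ℝ i g y‖ ≤ C) :
    Bd (Metric.ball (injP m p y0) δ) τ C (fun x => g (projP m p x)) := by
  have e : (fun x => g (projP m p x)) = g ∘ projPL m p := by
    ext x; simp [projPL_apply]
  have hmaps : Set.MapsTo (projPL m p) (Metric.ball (injP m p y0) δ) (Metric.ball y0 δ) := by
    intro x hx; rw [projPL_apply]; exact mapsTo_proj hp y0 hx
  rw [e]
  refine ⟨hg.comp (projPL m p).contDiff.contDiffOn hmaps, fun i hi x hx => ?_⟩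
  rw [iteratedFDerivWithin_of_isOpen i Metric.isOpen_ball hx]
  have hop : IsOpen (projPL m p ⁻¹' Metric.ball y0 δ) :=
    Metric.isOpen_ball.preimage (projPL m p).continuous
  have hx' : x ∈ projPL m p ⁻¹' Metric.ball y0 δ := hmaps hx
  rw [← iteratedFDerivWithin_of_isOpen i hop hx']
  rw [ContinuousLinearMap.iteratedFDerivWithin_comp_right (projPL m p) hg
    Metric.isOpen_ball.uniqueDiffOn hop.uniqueDiffOn hx' (by exact_mod_cast hi)]
  refine (ContinuousMultilinearMap.norm_compContinuousLinearMap_le _ _).trans ?_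
  rw [iteratedFDerivWithin_of_isOpen i Metric.isOpen_ball hx']
  have h1 := hb i hi _ hx'
  have h2 : ∏ _j : Fin i, ‖projPL m p‖ ≤ 1 :=
    Finset.prod_le_one (fun _ _ => norm_nonneg _) (fun _ _ => projPL_norm m p)
  have h3 : 1 ≤ τ ^ i := one_le_pow₀ hτ
  calc _ ≤ C * 1 := by gcongr
    _ ≤ C * τ ^ i := by gcongr

theorem series_main [Mul A] [One A] [CompleteSpace A] {m p : ℕ} (hp : p < m)
    {P : (Fin (m + 1) → ℝ) → ℝ} {e : ℝ} (hP : IsPf m p P e) {y0 : Fin (p + 1) → ℝ}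
    {δ C K : ℝ} (hδ : 0 < δ) (hδ1 : δ ≤ 1) (hC : 0 ≤ C) (hK : 0 ≤ K)
    (hδK : 32 * (m + 1) * δ ^ 2 * K ≤ 1) {g : ℕ → (Fin (p + 1) → ℝ) → A}
    (hg : ∀ k, ContDiffOn ℝ 2 (g k) (Metric.ball y0 δ))
    (hb : ∀ k, ∀ i ≤ 2, ∀ y ∈ Metric.ball y0 δ, ‖iteratedFDeriv ℝ i (g k) y‖ ≤ C * K ^ k) :
    ContDiffOn ℝ 2 (fun x => ∑' k, (P x * Qf m p x ^ k) • g k (projP m p x))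
      (Metric.ball (injP m p y0) δ) ∧
    ∀ x ∈ Metric.ball (injP m p y0) δ,
      Summable (fun k => (P x * Qf m p x ^ k) • g k (projP m p x)) ∧
      HasSum (fun k : ℕ => ((4 * (k : ℝ) * ((k : ℝ) - 1 + (((m - p : ℕ) : ℝ) / 2 + e))) *
          (P x * Qf m p x ^ (k - 1))) • g k (projP m p x) +
          (P x * Qf m p x ^ k) • lapP p (g k) (projP m p x))
        (lapF m (fun x => ∑' k, (P x * Qf m p x ^ k) • g k (projP m p x)) x) := by
  set s := Metric.ball (injP m p y0) δ with hs
  have hso : IsOpen s := Metric.isOpen_ball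
  set τ := δ⁻¹ with hτ
  have hτ1 : 1 ≤ τ := (one_le_inv₀ hδ).2 hδ1
  have hτ0 : 0 ≤ τ := by positivity
  have bx : ∀ t, Bd s τ δ (fun x => xqc m p t x) := fun t =>
    Bd.clm hso hδ.le hτ0 _ (fun x hx => by
      rw [xqc_apply]; exact (xq_lt y0 hδ hx t).le) (by
      rw [hτ, mul_inv_cancel₀ hδ.ne']; exact xqc_norm m p t)
  have bQ : Bd s τ (4 * (m + 1) * δ ^ 2) (Qf m p) := by
    have h := Bd.sum hso hτ0 Finset.univ (fun _ => 4 * δ * δ)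
      (fun t x => xqc m p t x • xqc m p t x)
      (fun t _ => Bd.smul hso hτ0 hδ.le hδ.le (bx t) (bx t))
    have e1 : Qf m p = fun x => ∑ t, xqc m p t x • xqc m p t x := by
      ext x; simp [Qf, xqc_apply, sq]
    rw [e1]
    refine h.mono hτ0 (le_of_eq ?_)
    simp; ring
  obtain ⟨CP, hCP, bP⟩ : ∃ CP : ℝ, 0 ≤ CP ∧ Bd s τ CP P := by
    obtain ⟨c, L, hPL, -, -⟩ := hP.lin
    have e1 : P = fun x => c + L x := by ext x; exact hPL x
    refine ⟨‖c‖ + ‖L‖ * (‖injP m p y0‖ + 1), by positivity, ?_⟩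
    rw [e1]
    refine Bd.add hso (Bd.const hso hτ0 c) (Bd.clm hso (by positivity) hτ0 L (fun x hx => ?_) ?_)
    · refine (L.le_opNorm x).trans ?_
      have : ‖x‖ ≤ ‖injP m p y0‖ + 1 := by
        rw [hs, Metric.mem_ball, dist_eq_norm] at hx
        have := norm_le_norm_add_norm_sub (injP m p y0) x
        rw [norm_sub_rev] at this
        linarith
      gcongr
    · have : ‖L‖ * 1 * 1 ≤ ‖L‖ * (‖injP m p y0‖ + 1) * τ := by
        gcongr
        have := norm_nonneg (injP m p y0)
        linarith
      simpa using this
  have bu : ∀ k, Bd s τ (16 * CP * C * (1 / 2) ^ k)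
      (fun x => (P x * Qf m p x ^ k) • g k (projP m p x)) := fun k => by
    have h1 := Bd.smul hso hτ0 hCP (by positivity) bP (Bd.pow hso hτ0 (by positivity) bQ k)
    have h2 := Bd.smul hso hτ0 (by positivity) (by positivity) h1
      (Bd_proj hp (C := C * K ^ k) hτ1 (by positivity) (hg k) (hb k))
    refine Bd.mono hτ0 h2 ?_
    have h3 : (4 * (4 * (m + 1) * δ ^ 2)) * K ≤ 1 / 2 := by linarith
    have h4 : ((4 * (4 * (m + 1) * δ ^ 2)) * K) ^ k ≤ (1 / 2) ^ k := by
      have : 0 ≤ (4 * (4 * ((m : ℝ) + 1) * δ ^ 2)) * K := by positivity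
      gcongr
    calc _ = 16 * CP * C * ((4 * (4 * (m + 1) * δ ^ 2)) * K) ^ k := by
          rw [mul_pow _ K]; ring
      _ ≤ _ := by gcongr
  have hcs : Summable (fun k : ℕ => 16 * CP * C * (1 / 2 : ℝ) ^ k * τ ^ 2) :=
    ((summable_geometric_of_lt_one (by norm_num) (by norm_num)).mul_left _).mul_right _
  obtain ⟨r1, r2, r3⟩ := tsum_C2 hso (convex_ball _ _).isPreconnected
    (fun k x => (P x * Qf m p x ^ k) • g k (projP m p x)) (fun k => (bu k).1) _ hcs
    (fun k => Bd.bound hso hτ1 (by positivity) (bu k))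
  refine ⟨r1, fun x hx => ⟨r2 x hx, ?_⟩⟩
  rw [lapF_eq (C2_diff (r1.contDiffAt (hso.mem_nhds hx)))]
  have h5 := hasSum_sum (s := (Finset.univ : Finset (Fin (m + 1))))
    (f := fun t k => fderiv ℝ (fderiv ℝ (fun x => (P x * Qf m p x ^ k) • g k (projP m p x))) x
      (Pi.single t 1) (Pi.single t 1))
    (a := fun t => fderiv ℝ (fderiv ℝ
      (fun x => ∑' k, (P x * Qf m p x ^ k) • g k (projP m p x))) x
      (Pi.single t 1) (Pi.single t 1)) (fun t _ => by
      have := ((ContinuousLinearMap.apply ℝ A (Pi.single t 1 : Fin (m + 1) → ℝ)).comp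
        (ContinuousLinearMap.apply ℝ ((Fin (m + 1) → ℝ) →L[ℝ] A)
          (Pi.single t 1 : Fin (m + 1) → ℝ))).hasSum (r3 x hx)
      exact this)
  convert h5 using 1
  ext1 k
  have hk := lapF_PQ hp hP k
  have := lapF_term hp hk.1 hk.2.1 Metric.isOpen_ball (hg k) (mapsTo_proj hp y0 hx)
  rw [hk.2.2] at this
  rw [← this, lapF_eq (C2_diff ((bu k).1.contDiffAt (hso.mem_nhds hx)))]

end P3


section P4

/-- The coefficient `Γ(α) / (2^{2k} k! Γ(k + α))`. -/
noncomputable def cc (α : ℝ) (k : ℕ) : ℝ :=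
  Real.Gamma α / (2 ^ (2 * k) * (k.factorial : ℝ) * Real.Gamma ((k : ℝ) + α))

theorem cc_zero {α : ℝ} (h : 0 < α) : cc α 0 = 1 := by
  have := (Real.Gamma_pos_of_pos h).ne'
  simp [cc, this]

theorem cc_pos {α : ℝ} (h : 0 < α) (k : ℕ) : 0 < cc α k := by
  have := Real.Gamma_pos_of_pos h
  have h2 : 0 < (k : ℝ) + α := by positivity
  have := Real.Gamma_pos_of_pos h2
  unfold cc
  positivity

theorem cc_succ {α : ℝ} (h : 0 < α) (k : ℕ) :
    cc α (k + 1) * (4 * ((k : ℝ) + 1) * (k + α)) = cc α k := by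
  have h2 : 0 < (k : ℝ) + α := by positivity
  have h3 := (Real.Gamma_pos_of_pos h2).ne'
  have h4 : Real.Gamma (((k + 1 : ℕ) : ℝ) + α) = (k + α) * Real.Gamma (k + α) := by
    rw [← Real.Gamma_add_one h2.ne']
    push_cast
    ring_nf
  have h5 : (((k + 1).factorial : ℕ) : ℝ) = (k + 1) * k.factorial := by
    rw [Nat.factorial_succ]; push_cast; ring
  unfold cc
  rw [h4, h5]
  have h6 := h2.ne'
  have h7 : ((k.factorial : ℕ) : ℝ) ≠ 0 := by positivity
  have h8 : (k : ℝ) + 1 ≠ 0 := by positivity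
  rw [show 2 * (k + 1) = 2 * k + 2 by ring, pow_add]
  field_simp
  norm_num

theorem cc_le {α : ℝ} (h : 1 / 2 ≤ α) (k : ℕ) : cc α k * ((2 * k).factorial : ℝ) ≤ 1 := by
  have h0 : 0 < α := by linarith
  induction k with
  | zero => simp [cc_zero h0]
  | succ k ih =>
    have e : (((2 * (k + 1)).factorial : ℕ) : ℝ) = (2 * k + 2) * (2 * k + 1) * (2 * k).factorial := by
      rw [show 2 * (k + 1) = 2 * k + 1 + 1 by ring, Nat.factorial_succ, Nat.factorial_succ]
      push_cast; ring
    rw [e]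
    have hp := cc_pos h0 (k + 1)
    refine le_trans ?_ ih
    rw [← cc_succ h0 k]
    have : (2 * (k : ℝ) + 2) * (2 * k + 1) ≤ 4 * ((k : ℝ) + 1) * (k + α) := by
      nlinarith [(Nat.cast_nonneg k : (0 : ℝ) ≤ k)]
    calc _ = cc α (k + 1) * ((2 * (k : ℝ) + 2) * (2 * k + 1)) * (2 * k).factorial := by ring
      _ ≤ _ := by gcongr

variable {A : Type*} [NormedAddCommGroup A] [NormedSpace ℝ A] [Mul A] [One A]

theorem lapIterP_succ (p k : ℕ) (g : (Fin (p + 1) → ℝ) → A) :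
    lapIterP p (k + 1) g = lapP p (lapIterP p k g) := by
  unfold lapIterP
  rw [Function.iterate_succ_apply']

theorem lapIterP_zero (p : ℕ) (g : (Fin (p + 1) → ℝ) → A) : lapIterP p 0 g = g := rfl

theorem pdP_smul (p : ℕ) (s : Fin (p + 1)) (c : ℝ) (g : (Fin (p + 1) → ℝ) → A) :
    pdP p s (fun y => c • g y) = fun y => c • pdP p s g y := by
  ext1 y
  unfold pdP
  have : fderiv ℝ (fun y => c • g y) y = c • fderiv ℝ g y :=
    congrFun (fderiv_const_smul_of_field (f := g) c) y
  rw [this]; rfl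

theorem lapP_smul (p : ℕ) (c : ℝ) (g : (Fin (p + 1) → ℝ) → A) :
    lapP p (fun y => c • g y) = fun y => c • lapP p g y := by
  ext1 y
  unfold lapP
  rw [Finset.smul_sum]
  refine Finset.sum_congr rfl fun s _ => ?_
  rw [pdP_smul, pdP_smul]

theorem pdP_congr {p : ℕ} {s : Fin (p + 1)} {W : Set (Fin (p + 1) → ℝ)} (hW : IsOpen W)
    {g h : (Fin (p + 1) → ℝ) → A} (hgh : Set.EqOn g h W) :
    Set.EqOn (pdP p s g) (pdP p s h) W := by
  intro y hy
  unfold pdP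
  rw [(hgh.eventuallyEq_of_mem (hW.mem_nhds hy)).fderiv_eq]

theorem lapP_congr {p : ℕ} {W : Set (Fin (p + 1) → ℝ)} (hW : IsOpen W)
    {g h : (Fin (p + 1) → ℝ) → A} (hgh : Set.EqOn g h W) :
    Set.EqOn (lapP p g) (lapP p h) W := by
  intro y hy
  unfold lapP
  exact Finset.sum_congr rfl fun s _ => pdP_congr hW (pdP_congr hW hgh) hy

variable [CompleteSpace A]

theorem pdP_analytic {p : ℕ} {s : Fin (p + 1)} {W : Set (Fin (p + 1) → ℝ)}
    {g : (Fin (p + 1) → ℝ) → A} (hg : AnalyticOnNhd ℝ g W) : AnalyticOnNhd ℝ (pdP p s g) W :=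
  (ContinuousLinearMap.apply ℝ A (Pi.single s 1 : Fin (p + 1) → ℝ)).comp_analyticOnNhd hg.fderiv

theorem lapP_analytic {p : ℕ} {W : Set (Fin (p + 1) → ℝ)}
    {g : (Fin (p + 1) → ℝ) → A} (hg : AnalyticOnNhd ℝ g W) : AnalyticOnNhd ℝ (lapP p g) W :=
  Finset.analyticOnNhd_fun_sum _ fun _ _ => pdP_analytic (pdP_analytic hg)

theorem lapIterP_analytic {p : ℕ} {W : Set (Fin (p + 1) → ℝ)}
    {g : (Fin (p + 1) → ℝ) → A} (hg : AnalyticOnNhd ℝ g W) (k : ℕ) :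
    AnalyticOnNhd ℝ (lapIterP p k g) W := by
  induction k with
  | zero => exact hg
  | succ k ih => rw [lapIterP_succ]; exact lapP_analytic ih

theorem pdP_bound {p : ℕ} {s : Fin (p + 1)} {g : (Fin (p + 1) → ℝ) → A} {y : Fin (p + 1) → ℝ}
    (hg : AnalyticAt ℝ g y) (n : ℕ) :
    ‖iteratedFDeriv ℝ n (pdP p s g) y‖ ≤ ‖iteratedFDeriv ℝ (n + 1) g y‖ := by
  have h := norm_iteratedFDeriv_clm_apply_const (N := n) (n := n)
    (c := (Pi.single s 1 : Fin (p + 1) → ℝ)) (hg.fderiv.contDiffAt (n := n)) le_rfl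
  rw [norm_iteratedFDeriv_fderiv, Pi.norm_single, norm_one, one_mul] at h
  exact h

theorem lapP_bound {p : ℕ} {g : (Fin (p + 1) → ℝ) → A} {y : Fin (p + 1) → ℝ}
    (hg : AnalyticAt ℝ g y) (n : ℕ) :
    ‖iteratedFDeriv ℝ n (lapP p g) y‖ ≤ (p + 1) * ‖iteratedFDeriv ℝ (n + 2) g y‖ := by
  have ha : ∀ s, AnalyticAt ℝ (pdP p s g) y := fun s =>
    (pdP_analytic (W := {y}) (fun z hz => by rw [Set.mem_singleton_iff.1 hz]; exact hg)) y rfl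
  have ha2 : ∀ s, AnalyticAt ℝ (pdP p s (pdP p s g)) y := fun s =>
    (pdP_analytic (W := {y}) (fun z hz => by rw [Set.mem_singleton_iff.1 hz]; exact ha s)) y rfl
  have e : iteratedFDeriv ℝ n (lapP p g) y =
      ∑ s, iteratedFDeriv ℝ n (pdP p s (pdP p s g)) y :=
    iteratedFDeriv_fun_sum_apply fun s _ => (ha2 s).contDiffAt
  rw [e]
  refine (norm_sum_le _ _).trans ?_
  have : ∀ s ∈ (Finset.univ : Finset (Fin (p + 1))),
      ‖iteratedFDeriv ℝ n (pdP p s (pdP p s g)) y‖ ≤ ‖iteratedFDeriv ℝ (n + 2) g y‖ :=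
    fun s _ => (pdP_bound (ha s) n).trans (pdP_bound hg (n + 1))
  refine (Finset.sum_le_sum this).trans ?_
  simp

theorem lapIterP_bound {p : ℕ} {W : Set (Fin (p + 1) → ℝ)} {g : (Fin (p + 1) → ℝ) → A}
    (hg : AnalyticOnNhd ℝ g W) {y : Fin (p + 1) → ℝ} (hy : y ∈ W) (k n : ℕ) :
    ‖iteratedFDeriv ℝ n (lapIterP p k g) y‖ ≤
      ((p : ℝ) + 1) ^ k * ‖iteratedFDeriv ℝ (n + 2 * k) g y‖ := by
  induction k generalizing n with
  | zero => simp [lapIterP_zero]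
  | succ k ih =>
    rw [lapIterP_succ]
    refine (lapP_bound (lapIterP_analytic hg k y hy) n).trans ?_
    have := ih (n + 2)
    rw [show n + 2 + 2 * k = n + 2 * (k + 1) by ring] at this
    rw [pow_succ', mul_assoc]
    gcongr

/-- The coefficient functions `(-1)^k c_k Δ^k A`. -/
noncomputable def gk (p : ℕ) (α : ℝ) (g : (Fin (p + 1) → ℝ) → A) (k : ℕ)
    (y : Fin (p + 1) → ℝ) : A := ((-1) ^ k * cc α k) • lapIterP p k g y

theorem gk_analytic {p : ℕ} {W : Set (Fin (p + 1) → ℝ)} {g : (Fin (p + 1) → ℝ) → A}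
    (hg : AnalyticOnNhd ℝ g W) (α : ℝ) (k : ℕ) : AnalyticOnNhd ℝ (gk p α g k) W :=
  fun y hy => analyticAt_const.smul (lapIterP_analytic hg k y hy)

theorem gk_bound {p : ℕ} {W : Set (Fin (p + 1) → ℝ)} (hW : IsOpen W)
    {g : (Fin (p + 1) → ℝ) → A} (hg : AnalyticOnNhd ℝ g W) {α : ℝ} (hα : 1 / 2 ≤ α)
    {y0 : Fin (p + 1) → ℝ} (hy0 : y0 ∈ W) :
    ∃ δ > 0, Metric.ball y0 δ ⊆ W ∧ ∃ C K : ℝ, 0 ≤ C ∧ 1 ≤ K ∧ ∀ k, ∀ i ≤ 2,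
      ∀ y ∈ Metric.ball y0 δ, ‖iteratedFDeriv ℝ i (gk p α g k) y‖ ≤ C * K ^ k := by
  obtain ⟨δ₁, hδ₁, C, M, hC, hM, hb⟩ := analytic_bound (hg y0 hy0)
  obtain ⟨δ₂, hδ₂, hsub⟩ := Metric.isOpen_iff.1 hW y0 hy0
  have hα0 : 0 < α := by linarith
  have hM0 : 0 ≤ M := by linarith
  refine ⟨min δ₁ δ₂, lt_min hδ₁ hδ₂,
    (Metric.ball_subset_ball (min_le_right _ _)).trans hsub,
    4 * C * M ^ 2, 4 * (p + 1) * M ^ 2, by positivity, ?_, ?_⟩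
  · have : 1 ≤ M ^ 2 := one_le_pow₀ hM
    have h2 : (0 : ℝ) ≤ p := by positivity
    nlinarith
  · intro k i hi y hy
    have hyW : y ∈ W := hsub (Metric.ball_subset_ball (min_le_right _ _) hy)
    have hy1 : y ∈ Metric.ball y0 δ₁ := Metric.ball_subset_ball (min_le_left _ _) hy
    have e : iteratedFDeriv ℝ i (gk p α g k) y =
        ((-1) ^ k * cc α k) • iteratedFDeriv ℝ i (lapIterP p k g) y :=
      iteratedFDeriv_const_smul_apply' ((lapIterP_analytic hg k y hyW).contDiffAt)
    rw [e, norm_smul, norm_mul, norm_pow, norm_neg, norm_one, one_pow, one_mul,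
      Real.norm_of_nonneg (cc_pos hα0 k).le]
    have h1 := lapIterP_bound hg hyW k i
    have h2 := hb y hy1 (i + 2 * k)
    have h3 : (((i + 2 * k).factorial : ℕ) : ℝ) ≤
        ((2 * k + 2) * (2 * k + 1)) * (2 * k).factorial := by
      have e : (((2 * k + 2).factorial : ℕ) : ℝ) =
          (2 * k + 2) * (2 * k + 1) * (2 * k).factorial := by
        rw [Nat.factorial_succ, Nat.factorial_succ]
        push_cast; ring
      rw [← e]
      exact_mod_cast Nat.factorial_le (by omega)
    have h4 : M ^ (i + 2 * k) ≤ M ^ 2 * (M ^ 2) ^ k := by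
      rw [← pow_mul, ← pow_add]
      exact pow_le_pow_right₀ hM (by omega)
    have h5 : ((2 * (k : ℝ) + 2) * (2 * k + 1)) ≤ 4 * 4 ^ k := by
      have h6 : (k : ℝ) + 1 ≤ 2 ^ k := by exact_mod_cast Nat.lt_two_pow_self
      have h7 : (4 : ℝ) ^ k = 2 ^ k * 2 ^ k := by rw [← mul_pow]; norm_num
      rw [h7]
      nlinarith [(Nat.cast_nonneg k : (0 : ℝ) ≤ k)]
    have hc := (cc_pos hα0 k).le
    calc cc α k * ‖iteratedFDeriv ℝ i (lapIterP p k g) y‖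
        ≤ cc α k * (((p : ℝ) + 1) ^ k * (C * ((4 * 4 ^ k) * (2 * k).factorial)
            * (M ^ 2 * (M ^ 2) ^ k))) := by
          refine mul_le_mul_of_nonneg_left (h1.trans ?_) hc
          refine mul_le_mul_of_nonneg_left (h2.trans ?_) (by positivity)
          gcongr
          exact h3.trans (by gcongr)
      _ = (cc α k * (2 * k).factorial) * (4 * C * M ^ 2 * (4 * (p + 1) * M ^ 2) ^ k) := by
          rw [mul_pow, mul_pow]; ring
      _ ≤ 1 * (4 * C * M ^ 2 * (4 * (p + 1) * M ^ 2) ^ k) := by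
          gcongr
          exact cc_le hα k
      _ = _ := one_mul _

theorem gk_rec {p : ℕ} {g : (Fin (p + 1) → ℝ) → A} {α : ℝ} (hα : 0 < α) (k : ℕ)
    (y : Fin (p + 1) → ℝ) :
    (4 * ((k : ℝ) + 1) * (k + α)) • gk p α g (k + 1) y = - lapP p (gk p α g k) y := by
  have e : lapP p (gk p α g k) = fun y => ((-1) ^ k * cc α k) • lapIterP p (k + 1) g y := by
    rw [lapIterP_succ]
    exact lapP_smul p _ _
  rw [e]
  simp only [gk]
  rw [smul_smul, ← neg_smul, ← cc_succ hα k]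
  congr 1
  ring

theorem exist_local {m p : ℕ} (hp : p < m)
    {P : (Fin (m + 1) → ℝ) → ℝ} {e : ℝ} (he : 0 ≤ e) (hP : IsPf m p P e)
    {W : Set (Fin (p + 1) → ℝ)} (hW : IsOpen W)
    {g : (Fin (p + 1) → ℝ) → A} (hg : AnalyticOnNhd ℝ g W)
    {y0 : Fin (p + 1) → ℝ} {δ C K : ℝ} (hδ : 0 < δ) (hδ1 : δ ≤ 1) (hC : 0 ≤ C) (hK : 0 ≤ K)
    (hδK : 32 * (m + 1) * δ ^ 2 * K ≤ 1) (hsub : Metric.ball y0 δ ⊆ W)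
    (hb : ∀ k, ∀ i ≤ 2, ∀ y ∈ Metric.ball y0 δ,
      ‖iteratedFDeriv ℝ i (gk p (((m - p : ℕ) : ℝ) / 2 + e) g k) y‖ ≤ C * K ^ k) :
    ContDiffOn ℝ 2 (fun x => ∑' k, (P x * Qf m p x ^ k) •
        gk p (((m - p : ℕ) : ℝ) / 2 + e) g k (projP m p x))
      (Metric.ball (injP m p y0) δ) ∧
    ∀ x ∈ Metric.ball (injP m p y0) δ,
      Summable (fun k => (P x * Qf m p x ^ k) •
        gk p (((m - p : ℕ) : ℝ) / 2 + e) g k (projP m p x)) ∧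
      lapF m (fun x => ∑' k, (P x * Qf m p x ^ k) •
        gk p (((m - p : ℕ) : ℝ) / 2 + e) g k (projP m p x)) x = 0 := by
  set α := ((m - p : ℕ) : ℝ) / 2 + e with hα
  have hα0 : 0 < α := by
    have : (0 : ℝ) < ((m - p : ℕ) : ℝ) := by exact_mod_cast Nat.sub_pos_of_lt hp
    linarith
  obtain ⟨r1, r2⟩ := series_main hp hP hδ hδ1 hC hK hδK (g := gk p α g)
    (fun k => ((gk_analytic hg α k).mono hsub).contDiffOn Metric.isOpen_ball.uniqueDiffOn) hb
  refine ⟨r1, fun x hx => ⟨(r2 x hx).1, ?_⟩⟩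
  have h := (r2 x hx).2
  rw [← hα] at h
  have hy := mapsTo_proj hp y0 hx
  have hQ := Qf_le y0 hδ hx
  have hQ0 := Qf_nonneg m p x
  set b : ℕ → A := fun k => (P x * Qf m p x ^ k) • lapP p (gk p α g k) (projP m p x) with hbdef
  have hb0 : Tendsto b atTop (𝓝 0) := by
    have hbd : ∀ k, ‖b k‖ ≤ (|P x| * ((p + 1) * C)) * (1 / 2) ^ k := fun k => by
      have h1 := lapP_bound (gk_analytic hg α k _ (hsub hy)) 0
      rw [norm_iteratedFDeriv_zero] at h1
      have h2 := hb k 2 le_rfl _ hy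
      have h3 : Qf m p x * K ≤ 1 / 2 := by
        have : Qf m p x * K ≤ (m + 1) * δ ^ 2 * K := by gcongr
        have : 0 ≤ (m + 1) * δ ^ 2 * K := by positivity
        linarith
      have h4 : Qf m p x ^ k * K ^ k ≤ (1 / 2) ^ k := by
        rw [← mul_pow]
        have := mul_nonneg hQ0 hK
        gcongr
      rw [hbdef]
      simp only [norm_smul, norm_mul, norm_pow, Real.norm_eq_abs, abs_of_nonneg hQ0]
      calc _ ≤ |P x| * Qf m p x ^ k * ((p + 1) * (C * K ^ k)) := by
            gcongr
            exact h1.trans (by gcongr)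
        _ = |P x| * ((p + 1) * C) * (Qf m p x ^ k * K ^ k) := by ring
        _ ≤ _ := by gcongr
    refine squeeze_zero_norm hbd ?_
    have := (tendsto_pow_atTop_nhds_zero_of_lt_one (r := (1 / 2 : ℝ)) (by norm_num)
      (by norm_num)).const_mul (|P x| * ((p + 1) * C))
    simpa using this
  have hpart : ∀ n : ℕ, ∑ k ∈ Finset.range (n + 1),
      (((4 * (k : ℝ) * ((k : ℝ) - 1 + α)) * (P x * Qf m p x ^ (k - 1))) •
        gk p α g k (projP m p x) +
          (P x * Qf m p x ^ k) • lapP p (gk p α g k) (projP m p x)) = b n := by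
    intro n
    induction n with
    | zero => simp [hbdef]
    | succ n ih =>
      rw [Finset.sum_range_succ, ih]
      have hr := gk_rec (p := p) (g := g) hα0 n (projP m p x)
      have e1 : ((4 * ((n + 1 : ℕ) : ℝ) * (((n + 1 : ℕ) : ℝ) - 1 + α)) *
          (P x * Qf m p x ^ (n + 1 - 1))) • gk p α g (n + 1) (projP m p x) = - b n := by
        rw [mul_comm, mul_smul]
        push_cast
        rw [add_sub_cancel_right, hr, smul_neg]
      rw [e1]
      simp [hbdef]
  have ht := (h.tendsto_sum_nat.comp (tendsto_add_atTop_nat 1))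
  have ht2 : Tendsto b atTop (𝓝 _) := ht.congr hpart
  exact tendsto_nhds_unique ht2 hb0

end P4


section P5
variable {A : Type*} [NormedAddCommGroup A] [NormedSpace ℝ A] [Mul A] [One A]

/-- Left multiplication as a continuous linear map. -/
noncomputable def lm {conj : A → A} (H : IsAltStarAlg A conj) (a : A) : A →L[ℝ] A :=
  haveI := H.finDim
  LinearMap.toContinuousLinearMap
    { toFun := fun b => a * b
      map_add' := fun b c => H.mul_add' a b c
      map_smul' := fun r b => H.mul_smul' r a b }

theorem lm_apply {conj : A → A} (H : IsAltStarAlg A conj) (a b : A) : lm H a b = a * b := rfl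

/-- Right multiplication as a linear map. -/
def rm {conj : A → A} (H : IsAltStarAlg A conj) (b : A) : A →ₗ[ℝ] A :=
  { toFun := fun a => a * b
    map_add' := fun a c => H.add_mul' a c b
    map_smul' := fun r a => H.smul_mul' r a b }

theorem rm_apply {conj : A → A} (H : IsAltStarAlg A conj) (a b : A) : rm H b a = a * b := rfl


theorem amul_neg {conj : A → A} (H : IsAltStarAlg A conj)
    (a b : A) : a * (-b) = -(a * b) := by
  rw [← lm_apply H, ← lm_apply H, map_neg]

theorem aneg_mul {conj : A → A} (H : IsAltStarAlg A conj)
    (a b : A) : (-a) * b = -(a * b) := by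
  rw [← rm_apply H, ← rm_apply H, map_neg]

theorem v_sq {conj : A → A} (H : IsAltStarAlg A conj) {v : ℕ → A} {m : ℕ}
    (hv : IsHypBasis A conj v m) (s : ℕ) (h1 : 1 ≤ s) (h2 : s ≤ m) :
    v s * v s = -1 := by
  have h := hv.trace_zero s h1 h2
  have h3 := hv.norm_one s h1 h2
  rw [eq_neg_of_add_eq_zero_right h, amul_neg H] at h3
  rw [← h3, neg_neg]

theorem v_v_mul {conj : A → A} (H : IsAltStarAlg A conj) {v : ℕ → A} {m : ℕ}
    (hv : IsHypBasis A conj v m) (s : ℕ) (h1 : 1 ≤ s) (h2 : s ≤ m) (b : A) :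
    v s * (v s * b) = -b := by
  rw [H.alt_left, v_sq H hv s h1 h2, aneg_mul H, H.one_mul']

theorem one_ne_zero_A {conj : A → A} (H : IsAltStarAlg A conj)
    : (1 : A) ≠ 0 := by
  intro h
  have : ∀ a : A, a = 0 := fun a => by
    rw [← H.one_mul' a, h, ← rm_apply H, map_zero]
  have h2 := H.one_lt_finrank
  have : Subsingleton A := ⟨fun a b => by rw [this a, this b]⟩
  rw [Module.finrank_zero_of_subsingleton] at h2
  omega

theorem emb_mul {conj : A → A} (H : IsAltStarAlg A conj) {v : ℕ → A} {m : ℕ}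
    (x : Fin (m + 1) → ℝ) (b : A) :
    emb v m x * b = ∑ s : Fin (m + 1), x s • (v (s : ℕ) * b) := by
  unfold emb
  rw [← rm_apply H, map_sum]
  refine Finset.sum_congr rfl fun s _ => ?_
  rw [map_smul, rm_apply]

theorem mul_emb {conj : A → A} (H : IsAltStarAlg A conj) {v : ℕ → A} {m : ℕ}
    (x : Fin (m + 1) → ℝ) (b : A) :
    b * emb v m x = ∑ s : Fin (m + 1), x s • (b * v (s : ℕ)) := by
  unfold emb
  rw [← lm_apply H, map_sum]
  refine Finset.sum_congr rfl fun s _ => ?_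
  rw [map_smul, lm_apply]

theorem emb_sq {conj : A → A} (H : IsAltStarAlg A conj) {v : ℕ → A} {m : ℕ} {p : ℕ}
    (hv : IsHypBasis A conj v m) (w : Fin (m + 1) → ℝ)
    (hw : ∀ s : Fin (m + 1), (s : ℕ) ≤ p → w s = 0) :
    emb v m w * emb v m w = -((∑ s, w s ^ 2) • (1 : A)) := by
  have e1 : emb v m w * emb v m w =
      ∑ s : Fin (m + 1), ∑ t : Fin (m + 1), (w s * w t) • (v (s : ℕ) * v (t : ℕ)) := by
    rw [emb_mul H]
    refine Finset.sum_congr rfl fun s _ => ?_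
    rw [mul_emb H, Finset.smul_sum]
    simp only [smul_smul]
  have e2 : emb v m w * emb v m w + emb v m w * emb v m w =
      ∑ s : Fin (m + 1), ∑ t : Fin (m + 1),
        (w s * w t) • (v (s : ℕ) * v (t : ℕ) + v (t : ℕ) * v (s : ℕ)) := by
    conv_lhs => 
      rw [e1]
      enter [2]
      rw [Finset.sum_comm]
    rw [← Finset.sum_add_distrib]
    refine Finset.sum_congr rfl fun s _ => ?_
    rw [← Finset.sum_add_distrib]
    refine Finset.sum_congr rfl fun t _ => ?_
    rw [smul_add, mul_comm (w t) (w s)]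
  have e3 : ∀ s t : Fin (m + 1),
      (w s * w t) • (v (s : ℕ) * v (t : ℕ) + v (t : ℕ) * v (s : ℕ)) =
        if t = s then -((2 * w s ^ 2) • (1 : A)) else 0 := by
    intro s t
    by_cases hs : (s : ℕ) ≤ p
    · rw [hw s hs]; simp
    by_cases ht : (t : ℕ) ≤ p
    · rw [hw t ht]
      split_ifs with h
      · subst h; rw [hw t ht]; simp
      · simp
    have := s.2
    have := t.2
    split_ifs with h
    · subst h
      rw [v_sq H hv _ (by omega) (by omega), ← two_smul ℝ, smul_smul, smul_neg]
      congr 2; ring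
    · rw [hv.anticomm s t (by omega) (by omega) (by omega) (by omega)
        (fun hh => h (Fin.ext hh.symm))]
      simp
  rw [← two_smul ℝ] at e2
  have e4 : (2 : ℝ) • (emb v m w * emb v m w) = (2 : ℝ) • (-((∑ s, w s ^ 2) • (1 : A))) := by
    rw [e2]
    simp only [e3, Finset.sum_ite_eq', Finset.mem_univ, if_true]
    rw [smul_neg, smul_smul, Finset.mul_sum, Finset.sum_smul, Finset.sum_neg_distrib]
  exact smul_right_injective A (two_ne_zero) e4

theorem xqpart_le {conj : A → A} (H : IsAltStarAlg A conj) {m : ℕ} {p : ℕ}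
    (x : Fin (m + 1) → ℝ) (s : Fin (m + 1)) (h : (s : ℕ) ≤ p) :
    xqpart m p x s = 0 := by
  unfold xqpart; rw [if_pos h]

theorem aa_mul {conj : A → A} (H : IsAltStarAlg A conj) {v : ℕ → A} {m : ℕ} {p : ℕ}
    (hv : IsHypBasis A conj v m) (x : Fin (m + 1) → ℝ) (b : A) :
    emb v m (xqpart m p x) * (emb v m (xqpart m p x) * b) = (-Qf m p x) • b := by
  rw [H.alt_left, emb_sq (p := p) H hv _ (fun s hs => xqpart_le H x s hs), aneg_mul H,
    H.smul_mul', H.one_mul', neg_smul]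
  rfl

theorem apow_even {conj : A → A} (H : IsAltStarAlg A conj) {v : ℕ → A} {m : ℕ} {p : ℕ}
    (hv : IsHypBasis A conj v m) (x : Fin (m + 1) → ℝ) (k : ℕ) (b : A) :
    apow (emb v m (xqpart m p x)) (2 * k) = (-Qf m p x) ^ k • (1 : A) ∧
    apow (emb v m (xqpart m p x)) (2 * k) * b = (-Qf m p x) ^ k • b ∧
    apow (emb v m (xqpart m p x)) (2 * k + 1) * b =
      (-Qf m p x) ^ k • (emb v m (xqpart m p x) * b) := by
  have h : apow (emb v m (xqpart m p x)) (2 * k) = (-Qf m p x) ^ k • (1 : A) := by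
    induction k with
    | zero => simp [apow]
    | succ k ih =>
      have e : apow (emb v m (xqpart m p x)) (2 * (k + 1)) =
        emb v m (xqpart m p x) * (emb v m (xqpart m p x) *
          apow (emb v m (xqpart m p x)) (2 * k)) := by
        unfold apow
        rw [show 2 * (k + 1) = 2 * k + 1 + 1 by ring, Function.iterate_succ_apply',
          Function.iterate_succ_apply']
      rw [e, aa_mul H hv, ih, smul_smul, pow_succ']
  refine ⟨h, ?_, ?_⟩
  · rw [h, H.smul_mul', H.one_mul']
  · have e : apow (emb v m (xqpart m p x)) (2 * k + 1) =
        emb v m (xqpart m p x) * apow (emb v m (xqpart m p x)) (2 * k) := by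
      unfold apow
      rw [Function.iterate_succ_apply']
    rw [e, h, H.mul_smul', H.mul_one', H.smul_mul']

theorem hasSum_total {conj : A → A} (H : IsAltStarAlg A conj) {v : ℕ → A} {m : ℕ} {p : ℕ}
    (hv : IsHypBasis A conj v m) (x : Fin (m + 1) → ℝ) (B : ℕ → A)
    {S0 : A} {S1 : Fin (m + 1) → A}
    (h0 : HasSum (fun k => (1 * Qf m p x ^ k) • ((-1 : ℝ) ^ k • B (2 * k))) S0)
    (h1 : ∀ j, HasSum (fun k => (xqpart m p x j * Qf m p x ^ k) •
      ((-1 : ℝ) ^ k • B (2 * k + 1))) (S1 j)) :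
    HasSum (fun n => apow (emb v m (xqpart m p x)) n * B n)
      (S0 + ∑ j : Fin (m + 1), v (j : ℕ) * S1 j) := by
  refine HasSum.even_add_odd ?_ ?_
  · convert h0 using 1
    ext1 k
    rw [(apow_even H hv x k (B (2 * k))).2.1, smul_smul, one_mul, neg_pow, mul_comm]
  · have := hasSum_sum (s := (Finset.univ : Finset (Fin (m + 1))))
      (fun j _ => (lm H (v (j : ℕ))).hasSum (h1 j))
    simp only [lm_apply] at this
    convert this using 1
    ext1 k
    rw [(apow_even H hv x k (B (2 * k + 1))).2.2, emb_mul H, Finset.smul_sum]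
    refine Finset.sum_congr rfl fun j _ => ?_
    rw [H.mul_smul', H.mul_smul', smul_smul, smul_smul, neg_pow]
    congr 1; ring

end P5


section P6

theorem connected_of_segments {X : Type*} [AddCommGroup X] [Module ℝ X] [TopologicalSpace X]
    [ContinuousAdd X] [ContinuousSMul ℝ X] [IsTopologicalAddGroup X] {S Z : Set X} (hZ : IsConnected Z)
    (hZS : Z ⊆ S) (h : ∀ x ∈ S, ∃ z ∈ Z, segment ℝ z x ⊆ S) : IsConnected S := by
  obtain ⟨z0, hz0⟩ := hZ.nonempty
  refine ⟨⟨z0, hZS hz0⟩, isPreconnected_of_forall z0 fun y hy => ?_⟩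
  obtain ⟨z, hz, hseg⟩ := h y hy
  refine ⟨Z ∪ segment ℝ z y, Set.union_subset hZS hseg, Or.inl hz0,
    Or.inr (right_mem_segment ℝ z y), ?_⟩
  exact IsPreconnected.union z hz (left_mem_segment ℝ z y) hZ.isPreconnected
    (convex_segment z y).isPreconnected

theorem projP_add_smul {m p : ℕ} (x w : Fin (m + 1) → ℝ) (r : ℝ) :
    projP m p (x + r • w) = projP m p x + r • projP m p w := by
  simp only [← projPL_apply, map_add, map_smul]

theorem projP_of_zero {m p : ℕ} {w : Fin (m + 1) → ℝ}
    (hw : ∀ s : Fin (m + 1), (s : ℕ) ≤ p → w s = 0) : projP m p w = 0 := by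
  ext s
  unfold projP
  split_ifs with h
  · exact hw _ (Nat.lt_succ_iff.1 s.2)
  · rfl

theorem xqpart_pt {m p : ℕ} {w : Fin (m + 1) → ℝ}
    (hw : ∀ s : Fin (m + 1), (s : ℕ) ≤ p → w s = 0) (y : Fin (p + 1) → ℝ) (r : ℝ) :
    xqpart m p (pt m p w y r) = r • w := by
  ext s
  unfold xqpart pt injP
  split_ifs with h
  · simp [hw s h]
  · have h2 : ¬ (s : ℕ) < p + 1 := by omega
    simp [h2]
    intro h3
    exact absurd h3 h

theorem projP_pt {m p : ℕ} (hp : p < m) {w : Fin (m + 1) → ℝ}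
    (hw : ∀ s : Fin (m + 1), (s : ℕ) ≤ p → w s = 0) (y : Fin (p + 1) → ℝ) (r : ℝ) :
    projP m p (pt m p w y r) = y := by
  unfold pt
  rw [projP_add_smul, projP_of_zero hw, projP_injP hp, smul_zero, add_zero]

theorem Qf_pt {m p : ℕ} {w : Fin (m + 1) → ℝ}
    (hw : ∀ s : Fin (m + 1), (s : ℕ) ≤ p → w s = 0) (y : Fin (p + 1) → ℝ) (r : ℝ) :
    Qf m p (pt m p w y r) = r ^ 2 * ∑ s, w s ^ 2 := by
  unfold Qf
  rw [xqpart_pt hw, Finset.mul_sum]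
  simp [mul_pow]

theorem xqpart_zero {m p : ℕ} (x : Fin (m + 1) → ℝ) (s : Fin (m + 1)) (h : (s : ℕ) ≤ p) :
    xqpart m p x s = 0 := by
  unfold xqpart; rw [if_pos h]

theorem eq_pt {m p : ℕ} (hp : p < m) (x : Fin (m + 1) → ℝ) :
    x = pt m p (xqpart m p x) (projP m p x) 1 := by
  ext s
  unfold pt injP projP xqpart
  by_cases h : (s : ℕ) < p + 1
  · have h2 : (s : ℕ) ≤ p := by omega
    have := s.2
    simp [h2]
    intro h3
    omega
  · have h2 : ¬ (s : ℕ) ≤ p := by omega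
    simp [h2]

theorem xppart_eq {m p : ℕ} (x : Fin (m + 1) → ℝ) :
    xppart m p x = injP m p (projP m p x) := by
  ext s
  unfold xppart injP projP
  have := s.2
  by_cases h : (s : ℕ) < p + 1
  · rw [if_pos (by omega), dif_pos h, dif_pos (by omega)]
  · rw [if_neg (by omega), dif_neg h]

theorem injP_pt {m p : ℕ} (y : Fin (p + 1) → ℝ) (w : Fin (m + 1) → ℝ) :
    injP m p y = pt m p w y 0 := by
  simp [pt]

theorem mem_ball_of {m p : ℕ} {y0 : Fin (p + 1) → ℝ} {δ : ℝ} (hδ : 0 < δ)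
    {x : Fin (m + 1) → ℝ} (h1 : projP m p x ∈ Metric.ball y0 δ) (h2 : Qf m p x < δ ^ 2) :
    x ∈ Metric.ball (injP m p y0) δ := by
  rw [Metric.mem_ball, dist_eq_norm, pi_norm_lt_iff hδ] at *
  intro s
  by_cases h : (s : ℕ) < p + 1
  · have := h1 ⟨s, h⟩
    have h3 : (s : ℕ) ≤ m := by have := s.2; omega
    simpa [injP, projP, h, h3] using this
  · have h3 : xqpart m p x s ^ 2 ≤ Qf m p x :=
      Finset.single_le_sum (f := fun s => xqpart m p x s ^ 2) (fun _ _ => sq_nonneg _)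
        (Finset.mem_univ s)
    have h4 : xqpart m p x s ^ 2 < δ ^ 2 := lt_of_le_of_lt h3 h2
    have h5 : |xqpart m p x s| < δ := abs_lt_of_sq_lt_sq h4 hδ.le
    have h6 : ¬ (s : ℕ) ≤ p := by omega
    simpa [injP, xqpart, h, h6] using h5

/-- The domain of convergence. -/
def Om (m p : ℕ) (W : Set (Fin (p + 1) → ℝ)) (δ : (Fin (p + 1) → ℝ) → ℝ) :
    Set (Fin (m + 1) → ℝ) :=
  {x | ∃ y0 ∈ W, projP m p x ∈ Metric.ball y0 (δ y0) ∧ Qf m p x < δ y0 ^ 2}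

theorem Om_mono {m p : ℕ} {W : Set (Fin (p + 1) → ℝ)} {δ : (Fin (p + 1) → ℝ) → ℝ}
    {x x' : Fin (m + 1) → ℝ} (hx : x ∈ Om m p W δ) (h1 : projP m p x' = projP m p x)
    (h2 : Qf m p x' ≤ Qf m p x) : x' ∈ Om m p W δ := by
  obtain ⟨y0, hy0, h3, h4⟩ := hx
  exact ⟨y0, hy0, h1 ▸ h3, lt_of_le_of_lt h2 h4⟩

theorem Om_open {m p : ℕ} {W : Set (Fin (p + 1) → ℝ)} {δ : (Fin (p + 1) → ℝ) → ℝ} :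
    IsOpen (Om m p W δ) := by
  have e : Om m p W δ = ⋃ y0 ∈ W, (projPL m p ⁻¹' Metric.ball y0 (δ y0)) ∩
      {x | Qf m p x < δ y0 ^ 2} := by
    ext x
    simp only [Om, Set.mem_setOf_eq, Set.mem_iUnion, Set.mem_inter_iff, Set.mem_preimage, projPL_apply, exists_prop]
  rw [e]
  refine isOpen_biUnion fun y0 _ => IsOpen.inter ?_ ?_
  · exact Metric.isOpen_ball.preimage (projPL m p).continuous
  · exact isOpen_lt (contDiff_Qf m p).continuous continuous_const

theorem Om_inj {m p : ℕ} (hp : p < m) {W : Set (Fin (p + 1) → ℝ)} {δ : (Fin (p + 1) → ℝ) → ℝ}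
    (hδ : ∀ y ∈ W, 0 < δ y) {y : Fin (p + 1) → ℝ} (hy : y ∈ W) : injP m p y ∈ Om m p W δ := by
  refine ⟨y, hy, ?_, ?_⟩
  · rw [projP_injP hp]; exact Metric.mem_ball_self (hδ y hy)
  · rw [injP_pt y 0, Qf_pt (w := 0) (fun _ _ => rfl)]
    have := hδ y hy
    simp; positivity

theorem Om_conn {m p : ℕ} (hp : p < m) {W : Set (Fin (p + 1) → ℝ)} {δ : (Fin (p + 1) → ℝ) → ℝ}
    (hδ : ∀ y ∈ W, 0 < δ y) (hsub : ∀ y ∈ W, Metric.ball y (δ y) ⊆ W) (hW : IsConnected W) :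
    IsConnected (Om m p W δ) := by
  have hcont : Continuous (injP m p) := by
    have : injP m p = injPL m p := by ext1 x; rw [injPL_apply]
    rw [this]; exact (injPL m p).continuous
  refine connected_of_segments (hW.image _ hcont.continuousOn) ?_ fun x hx => ?_
  · rintro _ ⟨y, hy, rfl⟩
    exact Om_inj hp hδ hy
  · refine ⟨injP m p (projP m p x), ⟨_, ?_, rfl⟩, ?_⟩
    · obtain ⟨y0, hy0, h1, -⟩ := hx
      exact hsub y0 hy0 h1
    · rw [segment_eq_image_lineMap]
      rintro _ ⟨t, ⟨ht0, ht1⟩, rfl⟩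
      have e : AffineMap.lineMap (injP m p (projP m p x)) x t =
          pt m p (xqpart m p x) (projP m p x) t := by
        rw [AffineMap.lineMap_apply_module']
        conv_lhs => 
          enter [1, 2, 1]
          rw [eq_pt hp x]
        simp [pt, add_comm]
      rw [e]
      refine Om_mono hx (projP_pt hp (fun s hs => xqpart_zero x s hs) _ _) ?_
      rw [Qf_pt (fun s hs => xqpart_zero x s hs)]
      have : 0 ≤ ∑ s, xqpart m p x s ^ 2 := Qf_nonneg m p x
      calc _ ≤ 1 * ∑ s, xqpart m p x s ^ 2 := by gcongr; nlinarith
        _ = _ := by rw [one_mul]; rfl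

variable {A : Type*} [NormedAddCommGroup A] [NormedSpace ℝ A] [Mul A] [One A]

theorem Sph_sum {conj : A → A} (H : IsAltStarAlg A conj) {v : ℕ → A} {m p : ℕ}
    (hv : IsHypBasis A conj v m) {w : Fin (m + 1) → ℝ} (hw : w ∈ Sph v m p) :
    ∑ s, w s ^ 2 = 1 := by
  have h := emb_sq H hv w hw.1
  rw [hw.2, neg_inj] at h
  have h2 : ((∑ s, w s ^ 2) - 1) • (1 : A) = 0 := by
    rw [sub_smul, one_smul, ← h, sub_self]
  rcases smul_eq_zero.1 h2 with h3 | h3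
  · linarith
  · exact absurd h3 (one_ne_zero_A H)

theorem Om_PSym {conj : A → A} (H : IsAltStarAlg A conj) {v : ℕ → A} {m p : ℕ}
    (hv : IsHypBasis A conj v m) (hp : p < m) {W : Set (Fin (p + 1) → ℝ)}
    {δ : (Fin (p + 1) → ℝ) → ℝ} : PSym v m p (Om m p W δ) := by
  intro x hx w hw
  have e : xppart m p x + rad m p x • w = pt m p w (projP m p x) (rad m p x) := by
    rw [xppart_eq]; rfl
  rw [e]
  refine Om_mono hx (projP_pt hp hw.1 _ _) ?_
  rw [Qf_pt hw.1, Sph_sum H hv hw, mul_one]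
  exact (Real.sq_sqrt (Qf_nonneg m p x)).le

theorem Om_slice {conj : A → A} (H : IsAltStarAlg A conj) {v : ℕ → A} {m p : ℕ}
    (hv : IsHypBasis A conj v m) (hp : p < m) {W : Set (Fin (p + 1) → ℝ)}
    {δ : (Fin (p + 1) → ℝ) → ℝ}
    (hδ : ∀ y ∈ W, 0 < δ y) (hsub : ∀ y ∈ W, Metric.ball y (δ y) ⊆ W) (hW : IsConnected W) :
    SliceDomain v m p (Om m p W δ) := by
  refine ⟨Om_open, Om_conn hp hδ hsub hW, ?_, fun w hw => ?_⟩
  · obtain ⟨y, hy⟩ := hW.nonempty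
    refine ⟨injP m p y, Om_inj hp hδ hy, ?_⟩
    rw [injP_pt y 0, xqpart_pt (w := 0) (fun _ _ => rfl)]
    simp
  · refine connected_of_segments (Z := (fun y => (y, (0 : ℝ))) '' W)
      (hW.image _ (by fun_prop)) ?_ ?_
    · rintro _ ⟨y, hy, rfl⟩
      change pt m p w y 0 ∈ Om m p W δ
      rw [← injP_pt]
      exact Om_inj hp hδ hy
    · rintro ⟨y, r⟩ hx
      change pt m p w y r ∈ Om m p W δ at hx
      refine ⟨(y, 0), ⟨y, ?_, rfl⟩, ?_⟩
      · obtain ⟨y0, hy0, h1, -⟩ := hx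
        rw [projP_pt hp hw.1] at h1
        exact hsub y0 hy0 h1
      · rw [segment_eq_image_lineMap]
        rintro _ ⟨t, ⟨ht0, ht1⟩, rfl⟩
        have e : AffineMap.lineMap ((y, (0 : ℝ)) : (Fin (p + 1) → ℝ) × ℝ) (y, r) t =
            (y, t * r) := by
          rw [AffineMap.lineMap_apply_module']
          simp
        rw [e]
        change pt m p w y (t * r) ∈ Om m p W δ
        refine Om_mono hx (by rw [projP_pt hp hw.1, projP_pt hp hw.1]) ?_
        rw [Qf_pt hw.1, Qf_pt hw.1, Sph_sum H hv hw, mul_one, mul_one, mul_pow]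
        have : t ^ 2 ≤ 1 := by nlinarith
        nlinarith [sq_nonneg r]

theorem pdF_congr {m : ℕ} {s : Fin (m + 1)} {W : Set (Fin (m + 1) → ℝ)} (hW : IsOpen W)
    {g h : (Fin (m + 1) → ℝ) → A} (hgh : Set.EqOn g h W) :
    Set.EqOn (pdF m s g) (pdF m s h) W := pdP_congr hW hgh

theorem lapF_congr {m : ℕ} {W : Set (Fin (m + 1) → ℝ)} (hW : IsOpen W)
    {g h : (Fin (m + 1) → ℝ) → A} (hgh : Set.EqOn g h W) :
    Set.EqOn (lapF m g) (lapF m h) W := lapP_congr hW hgh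

theorem C2_at {E F : Type*} [NormedAddCommGroup E] [NormedSpace ℝ E]
    [NormedAddCommGroup F] [NormedSpace ℝ F] {W : Set E} (hW : IsOpen W) {f : E → F}
    (hf : ContDiffOn ℝ 2 f W) {x : E} (hx : x ∈ W) :
    DifferentiableAt ℝ f x ∧ DifferentiableAt ℝ (fderiv ℝ f) x :=
  ⟨(hf.differentiableOn (by norm_num)).differentiableAt (hW.mem_nhds hx),
    C2_diff (hf.contDiffAt (hW.mem_nhds hx))⟩

theorem pdF_diff {m : ℕ} {s : Fin (m + 1)} {W : Set (Fin (m + 1) → ℝ)} (hW : IsOpen W)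
    {g : (Fin (m + 1) → ℝ) → A} (hg : ContDiffOn ℝ 2 g W) {x : Fin (m + 1) → ℝ} (hx : x ∈ W) :
    DifferentiableAt ℝ (pdF m s g) x :=
  (C2_at hW hg hx).2.clm_apply (differentiableAt_const _)

theorem lapF_add {m : ℕ} {W : Set (Fin (m + 1) → ℝ)} (hW : IsOpen W)
    {g h : (Fin (m + 1) → ℝ) → A} (hg : ContDiffOn ℝ 2 g W) (hh : ContDiffOn ℝ 2 h W)
    {x : Fin (m + 1) → ℝ} (hx : x ∈ W) :
    lapF m (fun x => g x + h x) x = lapF m g x + lapF m h x := by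
  unfold lapF
  rw [← Finset.sum_add_distrib]
  refine Finset.sum_congr rfl fun s _ => ?_
  have e1 : Set.EqOn (pdF m s (fun x => g x + h x)) (fun x => pdF m s g x + pdF m s h x) W := by
    intro y hy
    unfold pdF
    rw [fderiv_fun_add (C2_at hW hg hy).1 (C2_at hW hh hy).1]
    rfl
  rw [pdF_congr hW e1 hx]
  change fderiv ℝ (fun x => pdF m s g x + pdF m s h x) x (Pi.single s 1) = _
  rw [fderiv_fun_add (pdF_diff hW hg hx) (pdF_diff hW hh hx)]
  rfl

theorem lapF_clm {F : Type*} [NormedAddCommGroup F] [NormedSpace ℝ F] [Mul F] [One F]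
    {m : ℕ} {W : Set (Fin (m + 1) → ℝ)} (hW : IsOpen W) (L : A →L[ℝ] F)
    {g : (Fin (m + 1) → ℝ) → A} (hg : ContDiffOn ℝ 2 g W)
    {x : Fin (m + 1) → ℝ} (hx : x ∈ W) :
    lapF m (fun x => L (g x)) x = L (lapF m g x) := by
  unfold lapF
  rw [map_sum]
  refine Finset.sum_congr rfl fun s _ => ?_
  have e1 : Set.EqOn (pdF m s (fun x => L (g x))) (fun x => L (pdF m s g x)) W := by
    intro y hy
    unfold pdF
    have := (L.hasFDerivAt.comp y (C2_at hW hg hy).1.hasFDerivAt).fderiv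
    change fderiv ℝ (fun x => L (g x)) y = _ at this
    rw [this]
    rfl
  rw [pdF_congr hW e1 hx]
  have := (L.hasFDerivAt.comp x (pdF_diff (s := s) hW hg hx).hasFDerivAt).fderiv
  change fderiv ℝ (fun x => L (pdF m s g x)) x = _ at this
  conv_lhs => unfold pdF
  change fderiv ℝ (fun x => L (pdF m s g x)) x _ = _
  rw [this]
  rfl

theorem lapF_sum {ι : Type*} {m : ℕ} {W : Set (Fin (m + 1) → ℝ)} (hW : IsOpen W) (t : Finset ι)
    {g : ι → (Fin (m + 1) → ℝ) → A} (hg : ∀ i, ContDiffOn ℝ 2 (g i) W)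
    {x : Fin (m + 1) → ℝ} (hx : x ∈ W) :
    lapF m (fun x => ∑ i ∈ t, g i x) x = ∑ i ∈ t, lapF m (g i) x := by
  classical
  induction t using Finset.induction_on with
  | empty =>
    have h0 : ∀ s, pdF m s (fun _ => (0 : A)) = fun _ => 0 := fun s => by ext; simp [pdF]
    simp [lapF, h0]
  | insert i t hi ih =>
    simp only [Finset.sum_insert hi]
    rw [lapF_add hW (hg i) (ContDiffOn.sum fun j _ => hg j) hx, ih]

end P6


section P7

/-- Diagonal linear maps. -/
def diagL (m : ℕ) (ε : Fin (m + 1) → ℝ) : (Fin (m + 1) → ℝ) →L[ℝ] (Fin (m + 1) → ℝ) :=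
  ContinuousLinearMap.pi fun s => ε s • ContinuousLinearMap.proj s

theorem diagL_apply {m : ℕ} (ε x : Fin (m + 1) → ℝ) (s : Fin (m + 1)) :
    diagL m ε x s = ε s * x s := by
  simp [diagL]

theorem projP_diagL {m p : ℕ} {ε : Fin (m + 1) → ℝ} (h : ∀ s : Fin (m + 1), (s : ℕ) ≤ p → ε s = 1)
    (x : Fin (m + 1) → ℝ) : projP m p (diagL m ε x) = projP m p x := by
  ext s
  unfold projP
  split_ifs with h2
  · rw [diagL_apply, h _ (Nat.lt_succ_iff.1 s.2), one_mul]
  · rfl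

theorem xqpart_diagL {m p : ℕ} (ε : Fin (m + 1) → ℝ)
    (x : Fin (m + 1) → ℝ) (j : Fin (m + 1)) :
    xqpart m p (diagL m ε x) j = ε j * xqpart m p x j := by
  unfold xqpart
  split_ifs
  · simp
  · rw [diagL_apply]

theorem Qf_diagL {m p : ℕ} {ε : Fin (m + 1) → ℝ} (h : ∀ s, ε s * ε s = 1)
    (x : Fin (m + 1) → ℝ) : Qf m p (diagL m ε x) = Qf m p x := by
  unfold Qf
  refine Finset.sum_congr rfl fun s _ => ?_
  rw [xqpart_diagL, mul_pow, sq (ε s), h, one_mul]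

theorem diagL_single {m : ℕ} (ε : Fin (m + 1) → ℝ) (s : Fin (m + 1)) :
    diagL m ε (Pi.single s 1) = ε s • Pi.single s 1 := by
  ext t
  rw [diagL_apply]
  by_cases h : t = s
  · subst h; simp
  · simp [h]

theorem diagL_inj {m p : ℕ} {ε : Fin (m + 1) → ℝ} (h : ∀ s : Fin (m + 1), (s : ℕ) ≤ p → ε s = 1)
    (y : Fin (p + 1) → ℝ) : diagL m ε (injP m p y) = injP m p y := by
  ext s
  rw [diagL_apply]
  unfold injP
  split_ifs with h2
  · rw [h s (by omega), one_mul]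
  · simp

variable {A : Type*} [NormedAddCommGroup A] [NormedSpace ℝ A] [Mul A] [One A]

theorem pdF_diag {m : ℕ} {ε : Fin (m + 1) → ℝ} {f : (Fin (m + 1) → ℝ) → A}
    {x : Fin (m + 1) → ℝ} (hf : DifferentiableAt ℝ f (diagL m ε x)) (s : Fin (m + 1)) :
    pdF m s (fun x => f (diagL m ε x)) x = ε s • pdF m s f (diagL m ε x) := by
  have h := (hf.hasFDerivAt.comp x (diagL m ε).hasFDerivAt).fderiv
  change fderiv ℝ (fun x => f (diagL m ε x)) x = _ at h
  unfold pdF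
  rw [h, ContinuousLinearMap.comp_apply, diagL_single, map_smul]

theorem lapF_diag {m : ℕ} {ε : Fin (m + 1) → ℝ} (hε : ∀ s, ε s * ε s = 1)
    {W : Set (Fin (m + 1) → ℝ)} (hW : IsOpen W) (hinv : ∀ x ∈ W, diagL m ε x ∈ W)
    {f : (Fin (m + 1) → ℝ) → A} (hf : ContDiffOn ℝ 2 f W)
    {x : Fin (m + 1) → ℝ} (hx : x ∈ W) :
    lapF m (fun x => f (diagL m ε x)) x = lapF m f (diagL m ε x) := by
  unfold lapF
  refine Finset.sum_congr rfl fun s _ => ?_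
  have e1 : Set.EqOn (pdF m s (fun x => f (diagL m ε x)))
      (fun x => ε s • pdF m s f (diagL m ε x)) W := fun z hz =>
    pdF_diag (C2_at hW hf (hinv z hz)).1 s
  rw [pdF_congr hW e1 hx]
  have := pdP_smul m s (ε s) (fun x => pdF m s f (diagL m ε x))
  change pdF m s (fun x => ε s • pdF m s f (diagL m ε x)) = fun x => ε s • pdF m s _ x at this
  rw [this]
  beta_reduce
  rw [pdF_diag (pdF_diff hW hf (hinv x hx)), smul_smul, hε, one_smul]

/-- The coefficients of the CK-extension. -/
noncomputable def Asq (m p : ℕ) (A₀ A₁ : (Fin (p + 1) → ℝ) → A) (n : ℕ)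
    (y : Fin (p + 1) → ℝ) : A :=
  if n % 2 = 0 then cc (((m - p : ℕ) : ℝ) / 2) (n / 2) • lapIterP p (n / 2) A₀ y
  else cc (((m - p : ℕ) : ℝ) / 2 + 1) (n / 2) • lapIterP p (n / 2) A₁ y

theorem Asq_even (m p : ℕ) (A₀ A₁ : (Fin (p + 1) → ℝ) → A) (k : ℕ) (y : Fin (p + 1) → ℝ) :
    Asq m p A₀ A₁ (2 * k) y = cc (((m - p : ℕ) : ℝ) / 2) k • lapIterP p k A₀ y := by
  unfold Asq
  rw [if_pos (by omega), show 2 * k / 2 = k by omega]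

theorem Asq_odd (m p : ℕ) (A₀ A₁ : (Fin (p + 1) → ℝ) → A) (k : ℕ) (y : Fin (p + 1) → ℝ) :
    Asq m p A₀ A₁ (2 * k + 1) y = cc (((m - p : ℕ) : ℝ) / 2 + 1) k • lapIterP p k A₁ y := by
  unfold Asq
  rw [if_neg (by omega), show (2 * k + 1) / 2 = k by omega]

theorem qpos {m p : ℕ} (hp : p < m) : (0 : ℝ) < ((m - p : ℕ) : ℝ) / 2 := by
  have : (0 : ℝ) < ((m - p : ℕ) : ℝ) := by exact_mod_cast Nat.sub_pos_of_lt hp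
  linarith

theorem qhalf {m p : ℕ} (hp : p < m) : (1 / 2 : ℝ) ≤ ((m - p : ℕ) : ℝ) / 2 := by
  have : (1 : ℝ) ≤ ((m - p : ℕ) : ℝ) := by exact_mod_cast Nat.sub_pos_of_lt hp
  linarith

theorem Asq_zero {m p : ℕ} (hp : p < m) (A₀ A₁ : (Fin (p + 1) → ℝ) → A) :
    Asq m p A₀ A₁ 0 = A₀ := by
  ext1 y
  have := Asq_even m p A₀ A₁ 0 y
  rw [cc_zero (qpos hp), one_smul] at this
  exact this

theorem Asq_one {m p : ℕ} (hp : p < m) (A₀ A₁ : (Fin (p + 1) → ℝ) → A) :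
    Asq m p A₀ A₁ 1 = A₁ := by
  ext1 y
  have := Asq_odd m p A₀ A₁ 0 y
  rw [cc_zero (by have := qpos hp; linarith), one_smul] at this
  exact this

theorem Asq_analytic [CompleteSpace A] {m p : ℕ} {A₀ A₁ : (Fin (p + 1) → ℝ) → A}
    {W : Set (Fin (p + 1) → ℝ)} (h0 : AnalyticOnNhd ℝ A₀ W) (h1 : AnalyticOnNhd ℝ A₁ W) (n : ℕ) :
    AnalyticOnNhd ℝ (Asq m p A₀ A₁ n) W := by
  rcases Nat.even_or_odd' n with ⟨k, rfl | rfl⟩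
  · rw [show Asq m p A₀ A₁ (2 * k) = _ from funext (Asq_even m p A₀ A₁ k)]
    exact fun y hy => analyticAt_const.smul (lapIterP_analytic h0 k y hy)
  · rw [show Asq m p A₀ A₁ (2 * k + 1) = _ from funext (Asq_odd m p A₀ A₁ k)]
    exact fun y hy => analyticAt_const.smul (lapIterP_analytic h1 k y hy)

theorem exist_pt {conj : A → A} (H : IsAltStarAlg A conj) {v : ℕ → A} {m p : ℕ}
    (hv : IsHypBasis A conj v m) (hp : p < m) {W : Set (Fin (p + 1) → ℝ)} (hW : IsOpen W)
    {A₀ A₁ : (Fin (p + 1) → ℝ) → A}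
    (h0 : AnalyticOnNhd ℝ A₀ W) (h1 : AnalyticOnNhd ℝ A₁ W)
    (y0 : Fin (p + 1) → ℝ) (hy0 : y0 ∈ W) :
    ∃ δ > 0, Metric.ball y0 δ ⊆ W ∧
      ContDiffOn ℝ 2 (fun x => ∑' k : ℕ,
        apow (emb v m (xqpart m p x)) k * Asq m p A₀ A₁ k (projP m p x))
        (Metric.ball (injP m p y0) δ) ∧
      (∀ x ∈ Metric.ball (injP m p y0) δ, Summable (fun k : ℕ =>
        apow (emb v m (xqpart m p x)) k * Asq m p A₀ A₁ k (projP m p x)) ∧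
        lapF m (fun x => ∑' k : ℕ,
        apow (emb v m (xqpart m p x)) k * Asq m p A₀ A₁ k (projP m p x)) x = 0) ∧
      (∑' k : ℕ, apow (emb v m (xqpart m p (injP m p y0))) k *
          Asq m p A₀ A₁ k (projP m p (injP m p y0))) = A₀ y0 ∧
      ∀ s : Fin (m + 1), p < (s : ℕ) → pdF m s (fun x => ∑' k : ℕ,
        apow (emb v m (xqpart m p x)) k * Asq m p A₀ A₁ k (projP m p x)) (injP m p y0) =
          v (s : ℕ) * A₁ y0 := by
  haveI := H.finDim
  haveI : CompleteSpace A := FiniteDimensional.complete ℝ A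
  have hq := qhalf hp
  set α0 := ((m - p : ℕ) : ℝ) / 2 + 0 with hα0
  set α1 := ((m - p : ℕ) : ℝ) / 2 + 1 with hα1
  have hα0' : 1 / 2 ≤ α0 := by linarith
  have hα1' : 1 / 2 ≤ α1 := by linarith
  obtain ⟨d0, hd0, hs0, C0, K0, hC0, hK0, hb0⟩ := gk_bound hW h0 hα0' hy0
  obtain ⟨d1, hd1, hs1, C1, K1, hC1, hK1, hb1⟩ := gk_bound hW h1 hα1' hy0
  obtain ⟨d, hd, hdle⟩ : ∃ d > 0, 32 * ((m : ℝ) + 1) * d * (K0 + K1) ≤ 1 := by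
    refine ⟨(32 * ((m : ℝ) + 1) * (K0 + K1))⁻¹, by positivity, le_of_eq ?_⟩
    have : (m : ℝ) + 1 ≠ 0 := by positivity
    have : K0 + K1 ≠ 0 := by positivity
    field_simp
  set δ := min (min d0 d1) (min 1 d) with hδdef
  have hδ : 0 < δ := by positivity
  have hδ1 : δ ≤ 1 := (min_le_right _ _).trans (min_le_left _ _)
  have hδd : δ ≤ d := (min_le_right _ _).trans (min_le_right _ _)
  have hδ0' : δ ≤ d0 := (min_le_left _ _).trans (min_le_left _ _)
  have hδ1' : δ ≤ d1 := (min_le_left _ _).trans (min_le_right _ _)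
  have hδ2 : δ ^ 2 ≤ d := by nlinarith
  have hm : (0 : ℝ) ≤ (m : ℝ) + 1 := by positivity
  have hk0 : 32 * ((m : ℝ) + 1) * δ ^ 2 * K0 ≤ 1 := by
    refine le_trans ?_ hdle
    gcongr
    linarith
  have hk1 : 32 * ((m : ℝ) + 1) * δ ^ 2 * K1 ≤ 1 := by
    refine le_trans ?_ hdle
    gcongr
    linarith
  have hsub : Metric.ball y0 δ ⊆ W := (Metric.ball_subset_ball hδ0').trans hs0
  have hbb0 : ∀ k, ∀ i ≤ 2, ∀ y ∈ Metric.ball y0 δ,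
      ‖iteratedFDeriv ℝ i (gk p α0 A₀ k) y‖ ≤ C0 * K0 ^ k := fun k i hi y hy =>
    hb0 k i hi y (Metric.ball_subset_ball hδ0' hy)
  have hbb1 : ∀ k, ∀ i ≤ 2, ∀ y ∈ Metric.ball y0 δ,
      ‖iteratedFDeriv ℝ i (gk p α1 A₁ k) y‖ ≤ C1 * K1 ^ k := fun k i hi y hy =>
    hb1 k i hi y (Metric.ball_subset_ball hδ1' hy)
  obtain ⟨a1, a2⟩ := exist_local hp le_rfl (isPf_one m p) hW h0 hδ hδ1 hC0 (by linarith) hk0 hsub hbb0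
  have b := fun j => exist_local hp zero_le_one (isPf_coord m p j) hW h1 hδ hδ1 hC1
    (by linarith) hk1 hsub hbb1
  obtain ⟨c1, -⟩ := series_main hp (isPf_one m p) hδ hδ1 hC1 (by linarith) hk1 (g := gk p α1 A₁)
    (fun k => ((gk_analytic h1 α1 k).mono hsub).contDiffOn Metric.isOpen_ball.uniqueDiffOn) hbb1
  rw [← hα0] at a1 a2
  rw [← hα1] at b
  set B := Metric.ball (injP m p y0) δ with hB
  have hBo : IsOpen B := Metric.isOpen_ball
  have hyB : injP m p y0 ∈ B := Metric.mem_ball_self hδ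
  set G0 : (Fin (m + 1) → ℝ) → A := fun x => ∑' k, (1 * Qf m p x ^ k) • gk p α0 A₀ k (projP m p x)
    with hG0
  set F1 : Fin (m + 1) → (Fin (m + 1) → ℝ) → A := fun j x =>
    ∑' k, (xqpart m p x j * Qf m p x ^ k) • gk p α1 A₁ k (projP m p x) with hF1
  set G1 : (Fin (m + 1) → ℝ) → A := fun x => ∑' k, (1 * Qf m p x ^ k) • gk p α1 A₁ k (projP m p x)
    with hG1
  have e0 : ∀ k y, (-1 : ℝ) ^ k • Asq m p A₀ A₁ (2 * k) y = gk p α0 A₀ k y := fun k y => by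
    rw [Asq_even, smul_smul, gk, hα0, add_zero]
  have e1 : ∀ k y, (-1 : ℝ) ^ k • Asq m p A₀ A₁ (2 * k + 1) y = gk p α1 A₁ k y := fun k y => by
    rw [Asq_odd, smul_smul, gk]
  have key : ∀ x ∈ B, HasSum (fun n => apow (emb v m (xqpart m p x)) n *
      Asq m p A₀ A₁ n (projP m p x)) (G0 x + ∑ j : Fin (m + 1), v (j : ℕ) * F1 j x) := by
    intro x hx
    refine hasSum_total H hv x (fun n => Asq m p A₀ A₁ n (projP m p x)) ?_ fun j => ?_
    · simp only [e0]; exact (a2 x hx).1.hasSum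
    · simp only [e1]; exact ((b j).2 x hx).1.hasSum
  have hEq : Set.EqOn (fun x => ∑' k : ℕ,
        apow (emb v m (xqpart m p x)) k * Asq m p A₀ A₁ k (projP m p x))
      (fun x => G0 x + ∑ j : Fin (m + 1), lm H (v (j : ℕ)) (F1 j x)) B :=
    fun x hx => (key x hx).tsum_eq
  have hC2j : ∀ j : Fin (m + 1), ContDiffOn ℝ 2 (fun x => lm H (v (j : ℕ)) (F1 j x)) B := fun j =>
    (lm H (v (j : ℕ))).contDiff.comp_contDiffOn (b j).1
  have hC2 : ContDiffOn ℝ 2 (fun x => ∑ j : Fin (m + 1), lm H (v (j : ℕ)) (F1 j x)) B :=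
    ContDiffOn.sum fun j _ => hC2j j
  have hF1G1 : ∀ j, F1 j = fun x => xqc m p j x • G1 x := fun j => by
    ext1 x
    simp only [hF1, hG1, xqc_apply]
    rw [← tsum_const_smul'']
    simp only [smul_smul, one_mul]
  have hx0 : ∀ j, xqpart m p (injP m p y0) j = 0 := fun j => by
    rw [injP_pt y0 0, xqpart_pt (w := 0) (fun _ _ => rfl)]; simp
  have hQ0 : Qf m p (injP m p y0) = 0 := by
    simp [Qf, hx0]
  have hG0i : G0 (injP m p y0) = A₀ y0 := by
    simp only [hG0, hQ0, projP_injP hp]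
    rw [tsum_eq_single 0]
    · rw [gk, cc_zero (by linarith)]; simp [lapIterP_zero]
    · intro k hk; simp [hk]
  have hG1i : G1 (injP m p y0) = A₁ y0 := by
    simp only [hG1, hQ0, projP_injP hp]
    rw [tsum_eq_single 0]
    · rw [gk, cc_zero (by linarith)]; simp [lapIterP_zero]
    · intro k hk; simp [hk]
  refine ⟨δ, hδ, hsub, (a1.add hC2).congr hEq, fun x hx => ⟨(key x hx).summable, ?_⟩, ?_, ?_⟩
  · rw [lapF_congr hBo hEq hx, lapF_add hBo a1 hC2 hx, (a2 x hx).2,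
      lapF_sum hBo _ hC2j hx, zero_add]
    refine Finset.sum_eq_zero fun j _ => ?_
    rw [lapF_clm hBo _ (b j).1 hx, ((b j).2 x hx).2, map_zero]
  · have := hEq hyB
    beta_reduce at this
    rw [this, hG0i]
    simp only [hF1G1, xqc_apply, hx0, zero_smul, map_zero, Finset.sum_const_zero, add_zero]
  · intro s hs
    rw [pdF_congr hBo hEq hyB]
    have dG0 := (C2_at hBo a1 hyB).1
    have dG1 := (C2_at hBo c1 hyB).1
    have hz : fderiv ℝ G0 (injP m p y0) (Pi.single s 1) = 0 := by
      let ε : Fin (m + 1) → ℝ := fun t => if (t : ℕ) ≤ p then 1 else -1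
      have hε1 : ∀ t : Fin (m + 1), (t : ℕ) ≤ p → ε t = 1 := fun t ht => if_pos ht
      have hε2 : ∀ t, ε t * ε t = 1 := fun t => by
        by_cases h : (t : ℕ) ≤ p <;> simp [ε, h]
      have hinv : (fun x => G0 (diagL m ε x)) = G0 := by
        ext1 x
        simp only [hG0, Qf_diagL hε2, projP_diagL hε1]
      have := pdF_diag (ε := ε) (f := G0) (x := injP m p y0) (by rw [diagL_inj hε1]; exact dG0) s
      rw [hinv, diagL_inj hε1, show ε s = -1 from if_neg (by omega)] at this
      change pdF m s G0 _ = 0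
      have h2 : (2 : ℝ) • pdF m s G0 (injP m p y0) = 0 := by
        rw [two_smul]; nth_rewrite 1 [this]; simp
      exact (smul_eq_zero.1 h2).resolve_left two_ne_zero
    have hd : HasFDerivAt (fun x => G0 x + ∑ j : Fin (m + 1), lm H (v (j : ℕ)) (F1 j x))
        (fderiv ℝ G0 (injP m p y0) + ∑ j : Fin (m + 1), (lm H (v (j : ℕ))).comp
          ((xqc m p j (injP m p y0)) • fderiv ℝ G1 (injP m p y0) +
            (xqc m p j).smulRight (G1 (injP m p y0)))) (injP m p y0) := by
      refine dG0.hasFDerivAt.add (HasFDerivAt.fun_sum fun j _ => ?_)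
      refine (lm H (v (j : ℕ))).hasFDerivAt.comp _ ?_
      rw [hF1G1]
      exact (xqc m p j).hasFDerivAt.smul dG1.hasFDerivAt
    unfold pdF
    rw [hd.fderiv]
    simp only [ContinuousLinearMap.add_apply, hz, ContinuousLinearMap.sum_apply,
      ContinuousLinearMap.comp_apply, ContinuousLinearMap.smul_apply,
      ContinuousLinearMap.smulRight_apply, xqc_apply, hx0, zero_smul, zero_add, xqpart_single, hG1i]
    rw [Finset.sum_eq_single s]
    · rw [if_pos ⟨rfl, by omega⟩, one_smul, lm_apply]
    · intro j _ hj
      rw [if_neg (by tauto), zero_smul, map_zero]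
    · simp

theorem existence {conj : A → A} (H : IsAltStarAlg A conj) {v : ℕ → A} {m p : ℕ}
    (hv : IsHypBasis A conj v m) (hp : p < m) {Ω₀ : Set (Fin (p + 1) → ℝ)} (hW : IsOpen Ω₀)
    (hΩ₀conn : IsConnected Ω₀) {A₀ A₁ : (Fin (p + 1) → ℝ) → A}
    (h0 : AnalyticOnNhd ℝ A₀ Ω₀) (h1 : AnalyticOnNhd ℝ A₁ Ω₀) :
      ∃ Ω : Set (Fin (m + 1) → ℝ),
        PSym v m p Ω ∧ SliceDomain v m p Ω ∧
        injP m p '' Ω₀ ⊆ Ω ∧ Ω ⊆ Omega0star m p Ω₀ ∧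
        (∀ x ∈ Ω, Summable (fun k : ℕ =>
          apow (emb v m (xqpart m p x)) k * Asq m p A₀ A₁ k (projP m p x))) ∧
        Harmonic m (fun x => ∑' k : ℕ,
          apow (emb v m (xqpart m p x)) k * Asq m p A₀ A₁ k (projP m p x)) Ω ∧
        (∀ y ∈ Ω₀,
          (fun x => ∑' k : ℕ,
            apow (emb v m (xqpart m p x)) k * Asq m p A₀ A₁ k (projP m p x)) (injP m p y) =
              A₀ y ∧
          Dop v m (p + 1) m (fun x => ∑' k : ℕ,
            apow (emb v m (xqpart m p x)) k * Asq m p A₀ A₁ k (projP m p x)) (injP m p y) =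
              -(((m - p : ℕ) : ℝ)) • A₁ y) := by
  have hex := exist_pt H hv hp hW h0 h1
  choose! δ hδ hsub hC hSL hi hD using hex
  refine ⟨Om m p Ω₀ δ, Om_PSym H hv hp, Om_slice H hv hp hδ hsub hΩ₀conn, ?_, ?_, ?_, ⟨?_, ?_⟩, ?_⟩
  · rintro _ ⟨y, hy, rfl⟩
    exact Om_inj hp hδ hy
  · rintro x ⟨y0, hy0, hx, -⟩
    exact hsub y0 hy0 hx
  · rintro x ⟨y0, hy0, hx, hQ⟩
    exact (hSL y0 hy0 x (mem_ball_of (hδ y0 hy0) hx hQ)).1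
  · rintro x ⟨y0, hy0, hx, hQ⟩
    exact ((hC y0 hy0).contDiffAt (Metric.isOpen_ball.mem_nhds
      (mem_ball_of (hδ y0 hy0) hx hQ))).contDiffWithinAt
  · rintro x ⟨y0, hy0, hx, hQ⟩
    exact (hSL y0 hy0 x (mem_ball_of (hδ y0 hy0) hx hQ)).2
  · intro y hy
    refine ⟨hi y hy, ?_⟩
    unfold Dop
    have : ∀ s : Fin (m + 1), (if p + 1 ≤ (s : ℕ) ∧ (s : ℕ) ≤ m then v (s : ℕ) *
        pdF m s (fun x => ∑' k : ℕ,
            apow (emb v m (xqpart m p x)) k * Asq m p A₀ A₁ k (projP m p x)) (injP m p y) else 0) =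
        (if (s : ℕ) ≤ p then (0 : ℝ) else 1) • (-(A₁ y)) := by
      intro s
      have hs := s.2
      by_cases h : (s : ℕ) ≤ p
      · rw [if_pos h, if_neg (by omega), zero_smul]
      · rw [if_neg h, if_pos (by omega), one_smul, hD y hy s (by omega),
          v_v_mul H hv s (by omega) (by omega)]
    rw [Finset.sum_congr rfl fun s _ => this s, ← Finset.sum_smul, card_gt hp, smul_neg, neg_smul]

end P7


section P8

theorem second_le {p : ℕ} {V : Set (Fin (p + 1) → ℝ)} (hV : IsOpen V)
    {w : (Fin (p + 1) → ℝ) → ℝ} (hw : ContDiffOn ℝ 2 w V) {z : Fin (p + 1) → ℝ} (hz : z ∈ V)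
    (hmax : IsLocalMax w z) (s : Fin (p + 1)) : pdP p s (pdP p s w) z ≤ 0 := by
  by_contra! hpos
  set γ : ℝ → (Fin (p + 1) → ℝ) := fun t => z + t • Pi.single s 1 with hγ
  have hγd : ∀ t, HasDerivAt γ (Pi.single s 1) t := fun t => by
    have h5 : HasDerivAt (fun t : ℝ => t • (Pi.single s 1 : Fin (p + 1) → ℝ)) (Pi.single s 1) t := by
      simpa using (hasDerivAt_id t).smul_const (Pi.single s (1 : ℝ) : Fin (p + 1) → ℝ)
    exact h5.const_add z
  have hγ0 : γ 0 = z := by simp [hγ]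
  have hγc : Continuous γ := by fun_prop
  have hev : ∀ᶠ t in 𝓝 (0 : ℝ), γ t ∈ V :=
    hγc.continuousAt.eventually_mem (by rw [hγ0]; exact hV.mem_nhds hz)
  have hd1 : deriv (fun t => w (γ t)) =ᶠ[𝓝 0] fun t => pdP p s w (γ t) := by
    filter_upwards [hev] with t ht
    exact ((C2_at hV hw ht).1.hasFDerivAt.comp_hasDerivAt t (hγd t)).deriv
  have hd2 : deriv (deriv (fun t => w (γ t))) 0 = pdP p s (pdP p s w) z := by
    rw [hd1.deriv_eq]
    have h3 : DifferentiableAt ℝ (pdP p s w) (γ 0) := by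
      rw [hγ0]; exact pdF_diff hV hw hz
    have := (h3.hasFDerivAt.comp_hasDerivAt (0 : ℝ) (hγd 0)).deriv
    rw [hγ0] at this
    exact this
  have hlm : IsLocalMax (fun t => w (γ t)) 0 := by
    have : Tendsto γ (𝓝 0) (𝓝 z) := by
      have := hγc.tendsto 0; rwa [hγ0] at this
    have h := this.eventually hmax
    change ∀ᶠ t in 𝓝 (0 : ℝ), w (γ t) ≤ w (γ 0)
    rw [hγ0]; exact h
  have hmin : IsLocalMin (fun t => w (γ t)) 0 := by
    refine isLocalMin_of_deriv_deriv_pos (by rw [hd2]; exact hpos) hlm.deriv_eq_zero ?_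
    have hc : ContinuousAt w (γ 0) := by rw [hγ0]; exact (C2_at hV hw hz).1.continuousAt
    exact ContinuousAt.comp hc hγc.continuousAt
  have hconst : (fun t => w (γ t)) =ᶠ[𝓝 0] fun _ => w (γ 0) := by
    filter_upwards [hlm, hmin] with t h1 h2
    exact le_antisymm h1 h2
  have : deriv (deriv (fun t => w (γ t))) 0 = 0 := by
    have h4 := hconst.deriv
    rw [h4.deriv_eq]
    simp
  rw [hd2] at this
  linarith

theorem lapP_N {p : ℕ} (y0 y : Fin (p + 1) → ℝ) :
    lapP p (fun y => ∑ s, (y s - y0 s) ^ 2) y = 2 * (p + 1) := by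
  have h1 : ∀ s, pdP p s (fun y => ∑ s, (y s - y0 s) ^ 2) = fun y => 2 * (y s - y0 s) := by
    intro s
    ext1 y
    have : HasFDerivAt (fun y : Fin (p + 1) → ℝ => ∑ s, (y s - y0 s) ^ 2)
        (∑ s, (2 * (y s - y0 s)) •
          (ContinuousLinearMap.proj s : (Fin (p + 1) → ℝ) →L[ℝ] ℝ)) y := by
      refine HasFDerivAt.fun_sum fun t _ => ?_
      have := (((ContinuousLinearMap.proj t : (Fin (p + 1) → ℝ) →L[ℝ] ℝ).hasFDerivAt
        (x := y)).sub_const (y0 t)).pow 2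
      simpa using this
    unfold pdP
    rw [this.fderiv]
    simp [Pi.single_apply]
  have h2 : ∀ s, pdP p s (fun y => 2 * (y s - y0 s)) y = 2 := by
    intro s
    have := (((ContinuousLinearMap.proj s : (Fin (p + 1) → ℝ) →L[ℝ] ℝ).hasFDerivAt
        (x := y)).sub_const (y0 s)).const_mul 2
    change HasFDerivAt (fun y : Fin (p + 1) → ℝ => 2 * (y s - y0 s)) _ y at this
    unfold pdP
    rw [this.fderiv]
    simp
  unfold lapP
  simp only [h1, h2]
  simp [mul_comm]

theorem maxp {p : ℕ} {y0 : Fin (p + 1) → ℝ} {R c M : ℝ} (hR : 0 < R)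
    {V : Set (Fin (p + 1) → ℝ)} (hV : IsOpen V) (hsub : Metric.closedBall y0 R ⊆ V)
    {h : (Fin (p + 1) → ℝ) → ℝ} (hh : ContDiffOn ℝ 2 h V)
    (hM : ∀ y ∈ Metric.closedBall y0 R, |h y| ≤ M) (hc : 0 < c)
    (hl : ∀ y ∈ Metric.ball y0 R, c ≤ lapP p h y) : c * R ^ 2 ≤ 8 * (p + 1) * M := by
  set a := c / (4 * (p + 1)) with ha
  have hp1 : (0 : ℝ) < (p : ℝ) + 1 := by positivity
  have ha0 : 0 < a := by positivity
  have hac : a * (4 * (p + 1)) = c := by rw [ha]; field_simp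
  set N : (Fin (p + 1) → ℝ) → ℝ := fun y => ∑ s, (y s - y0 s) ^ 2 with hN
  have hNc : ContDiff ℝ 2 N := by
    rw [hN]; fun_prop
  have hNc' : ContDiffOn ℝ 2 (fun y => (-a) • N y) V := (hNc.const_smul (-a)).contDiffOn
  set w : (Fin (p + 1) → ℝ) → ℝ := fun y => h y + (-a) • N y with hw
  have hwc : ContDiffOn ℝ 2 w V := hh.add hNc'
  have hlap : ∀ y ∈ V, lapP p w y = lapP p h y - a * (2 * (p + 1)) := by
    intro y hy
    have h1 := lapF_add hV hh hNc' hy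
    change lapP p w y = lapP p h y + lapP p (fun y => (-a) • N y) y at h1
    rw [h1, lapP_smul]
    beta_reduce
    rw [hN, lapP_N]
    simp; ring
  obtain ⟨z, hz, hzmax⟩ := (isCompact_closedBall y0 R).exists_isMaxOn
    ⟨y0, Metric.mem_closedBall_self hR.le⟩ (hwc.continuousOn.mono hsub)
  by_cases hzR : dist z y0 < R
  · exfalso
    have hloc : IsLocalMax w z := by
      filter_upwards [Metric.isOpen_ball.mem_nhds (show z ∈ Metric.ball y0 R from hzR)] with y hy
      exact hzmax (Metric.ball_subset_closedBall hy)
    have h1 : lapP p w z ≤ 0 := Finset.sum_nonpos fun s _ => second_le hV hwc (hsub hz) hloc s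
    rw [hlap z (hsub hz)] at h1
    have := hl z hzR
    nlinarith
  · have hNz : R ^ 2 ≤ N z := by
      by_contra! hlt
      apply hzR
      rw [dist_pi_lt_iff hR]
      intro s
      have : (z s - y0 s) ^ 2 ≤ N z := Finset.single_le_sum
        (f := fun s => (z s - y0 s) ^ 2) (fun _ _ => sq_nonneg _) (Finset.mem_univ s)
      rw [Real.dist_eq]
      exact abs_lt_of_sq_lt_sq (by linarith) hR.le
    have h1 : w y0 ≤ w z := hzmax (Metric.mem_closedBall_self hR.le)
    have h2 : N y0 = 0 := by simp [hN]
    have h3 := abs_le.1 (hM z hz)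
    have h4 := abs_le.1 (hM y0 (Metric.mem_closedBall_self hR.le))
    simp only [hw, h2, smul_eq_mul, mul_zero, add_zero] at h1
    have h5 : a * R ^ 2 ≤ a * N z := by gcongr
    have h6 : a * R ^ 2 ≤ 2 * M := by linarith
    calc c * R ^ 2 = (4 * (p + 1)) * (a * R ^ 2) := by rw [← hac]; ring
      _ ≤ (4 * (p + 1)) * (2 * M) := by gcongr
      _ = _ := by ring

variable {A : Type*} [NormedAddCommGroup A] [NormedSpace ℝ A] [Mul A] [One A]

theorem series_small [CompleteSpace A] {b : ℕ → A} {C K ρ : ℝ} (hC : 0 ≤ C) (hK : 0 ≤ K)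
    (hρ : 0 ≤ ρ) (hρK : ρ * K ≤ 1 / 2) (hb : ∀ k, ‖b k‖ ≤ C * K ^ k) :
    Summable (fun k => (-ρ) ^ k • b k) ∧
    (∑' k, (-ρ) ^ k • b k) = b 0 + (-ρ) • ∑' k, (-ρ) ^ k • b (k + 1) ∧
    ‖(∑' k, (-ρ) ^ k • b k) - b 0‖ ≤ 2 * C * K * ρ := by
  have hbd : ∀ k, ‖(-ρ) ^ k • b k‖ ≤ C * (1 / 2) ^ k := fun k => by
    rw [norm_smul, norm_pow, norm_neg, Real.norm_of_nonneg hρ]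
    calc ρ ^ k * ‖b k‖ ≤ ρ ^ k * (C * K ^ k) := by gcongr; exact hb k
      _ = C * (ρ * K) ^ k := by rw [mul_pow]; ring
      _ ≤ _ := by gcongr
  have hs : Summable (fun k => (-ρ) ^ k • b k) :=
    Summable.of_norm_bounded ((summable_geometric_two).mul_left C) hbd
  have hbd' : ∀ k, ‖(-ρ) ^ k • b (k + 1)‖ ≤ (C * K) * (1 / 2) ^ k := fun k => by
    rw [norm_smul, norm_pow, norm_neg, Real.norm_of_nonneg hρ]
    calc ρ ^ k * ‖b (k + 1)‖ ≤ ρ ^ k * (C * K ^ (k + 1)) := by gcongr; exact hb _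
      _ = C * K * (ρ * K) ^ k := by rw [mul_pow]; ring
      _ ≤ _ := by gcongr
  have e : (∑' k, (-ρ) ^ k • b k) = b 0 + (-ρ) • ∑' k, (-ρ) ^ k • b (k + 1) := by
    rw [hs.tsum_eq_zero_add, ← tsum_const_smul'']
    simp only [pow_zero, one_smul, smul_smul, pow_succ']
  refine ⟨hs, e, ?_⟩
  rw [e, add_sub_cancel_left, norm_smul, norm_neg, Real.norm_of_nonneg hρ]
  have h2 := tsum_of_norm_bounded (summable_geometric_two.hasSum.mul_left (C * K)) hbd'
  rw [tsum_geometric_two] at h2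
  calc _ ≤ ρ * (C * K * 2) := by gcongr
    _ = _ := by ring

theorem core_base [CompleteSpace A] {p : ℕ} {V : Set (Fin (p + 1) → ℝ)} (hV : IsOpen V)
    {b e : ℕ → (Fin (p + 1) → ℝ) → A} {C K ρ0 : ℝ} (hC : 0 ≤ C) (hK : 0 ≤ K) (hρ0 : 0 < ρ0)
    (hρK : ρ0 * K ≤ 1 / 2)
    (hb : ∀ k, ∀ y ∈ V, ‖b k y‖ ≤ C * K ^ k) (he : ∀ k, ∀ y ∈ V, ‖e k y‖ ≤ C * K ^ k)
    (hb2 : ContDiffOn ℝ 2 (b 0) V) (hlc : ContinuousOn (lapP p (b 0)) V)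
    (hec : ContinuousOn (e 0) V)
    (hH : ∀ ρ, 0 < ρ → ρ < ρ0 → ContDiffOn ℝ 2 (fun y => ∑' k, (-ρ) ^ k • b k y) V ∧
      ∀ y ∈ V, lapP p (fun y => ∑' k, (-ρ) ^ k • b k y) y = ∑' k, (-ρ) ^ k • e k y) :
    Set.EqOn (lapP p (b 0)) (e 0) V := by
  intro y1 hy1
  by_contra hne
  set d := e 0 y1 - lapP p (b 0) y1 with hd
  have hd0 : ‖d‖ ≠ 0 := by
    rw [norm_ne_zero_iff, hd, sub_ne_zero]; exact fun h => hne h.symm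
  have hdpos : 0 < ‖d‖ := lt_of_le_of_ne (norm_nonneg _) hd0.symm
  obtain ⟨l, hl1, hld⟩ := exists_dual_vector ℝ d hd0
  have hcont : ContinuousAt (fun y => l (e 0 y - lapP p (b 0) y)) y1 :=
    l.continuous.continuousAt.comp
      ((hec.continuousAt (hV.mem_nhds hy1)).sub (hlc.continuousAt (hV.mem_nhds hy1)))
  have hev : ∀ᶠ y in 𝓝 y1, ‖d‖ / 2 < l (e 0 y - lapP p (b 0) y) := by
    refine hcont.eventually_const_lt ?_
    change _ < l d
    rw [hld]; simp only [RCLike.ofReal_real_eq_id, id]; linarith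
  obtain ⟨R0, hR0, hR⟩ := Metric.eventually_nhds_iff_ball.1 (hev.and (hV.mem_nhds hy1))
  set R := R0 / 2 with hRdef
  have hRp : 0 < R := by positivity
  have hcb : ∀ y ∈ Metric.closedBall y1 R, y ∈ Metric.ball y1 R0 := fun y hy =>
    lt_of_le_of_lt (Metric.mem_closedBall.1 hy) (by rw [hRdef]; linarith)
  have key : ∀ ρ, 0 < ρ → ρ < ρ0 → 2 * C * K * ρ < ‖d‖ / 2 →
      (‖d‖ / 2 - 2 * C * K * ρ) * R ^ 2 ≤ 8 * (p + 1) * (2 * C * K * ρ) := by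
    intro ρ h1 h2 h3
    have hρK' : ρ * K ≤ 1 / 2 := le_trans (by gcongr) hρK
    obtain ⟨H2, Hl⟩ := hH ρ h1 h2
    have hb2' : ContDiffOn ℝ 2 (fun y => (-1 : ℝ) • b 0 y) V := hb2.const_smul _
    have hS2 := H2.add hb2'
    have hT2 : ContDiffOn ℝ 2 (fun y => l ((∑' k, (-ρ) ^ k • b k y) + (-1 : ℝ) • b 0 y)) V :=
      l.contDiff.comp_contDiffOn hS2
    refine maxp hRp hV (fun y hy => (hR y (hcb y hy)).2) hT2 ?_ (by linarith) ?_
    · intro y hy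
      have hyV := (hR y (hcb y hy)).2
      have := (series_small hC hK h1.le hρK' (fun k => hb k y hyV)).2.2
      rw [neg_one_smul, ← sub_eq_add_neg, ← Real.norm_eq_abs]
      refine (l.le_opNorm _).trans ?_
      rw [hl1, one_mul]; exact this
    · intro y hy
      have hyb := hcb y (Metric.ball_subset_closedBall hy)
      have hyV := (hR y hyb).2
      have h5 := (hR y hyb).1
      have h6 := lapF_clm (F := ℝ) hV l hS2 hyV
      change lapP p (fun y => l ((∑' k, (-ρ) ^ k • b k y) + (-1 : ℝ) • b 0 y)) y =
        l (lapF p (fun y => (∑' k, (-ρ) ^ k • b k y) + (-1 : ℝ) • b 0 y) y) at h6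
      rw [h6, lapF_add hV H2 hb2' hyV]
      change _ ≤ l (lapP p _ y + lapP p (fun y => (-1 : ℝ) • b 0 y) y)
      rw [Hl y hyV, lapP_smul]
      have h7 := (series_small hC hK h1.le hρK' (fun k => he k y hyV)).2.2
      have h8 : |l ((∑' k, (-ρ) ^ k • e k y) - e 0 y)| ≤ 2 * C * K * ρ := by
        rw [← Real.norm_eq_abs]
        refine (l.le_opNorm _).trans ?_
        rw [hl1, one_mul]; exact h7
      have h9 : l ((∑' k, (-ρ) ^ k • e k y) + (-1 : ℝ) • lapP p (b 0) y) =
          l ((∑' k, (-ρ) ^ k • e k y) - e 0 y) + l (e 0 y - lapP p (b 0) y) := by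
        rw [← map_add]; congr 1; rw [neg_one_smul]; abel
      rw [h9]
      have := (abs_le.1 h8).1
      linarith
  have t1 : Tendsto (fun ρ : ℝ => (‖d‖ / 2 - 2 * C * K * ρ) * R ^ 2) (𝓝[>] 0)
      (𝓝 ((‖d‖ / 2 - 2 * C * K * 0) * R ^ 2)) :=
    (Continuous.tendsto (by fun_prop) 0).mono_left nhdsWithin_le_nhds
  have t2 : Tendsto (fun ρ : ℝ => 8 * ((p : ℝ) + 1) * (2 * C * K * ρ)) (𝓝[>] 0)
      (𝓝 (8 * ((p : ℝ) + 1) * (2 * C * K * 0))) :=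
    (Continuous.tendsto (by fun_prop) 0).mono_left nhdsWithin_le_nhds
  have t3 : Tendsto (fun ρ : ℝ => 2 * C * K * ρ) (𝓝[>] 0) (𝓝 (2 * C * K * 0)) :=
    (Continuous.tendsto (by fun_prop) 0).mono_left nhdsWithin_le_nhds
  have hle := le_of_tendsto_of_tendsto t1 t2 (by
    filter_upwards [self_mem_nhdsWithin, nhdsWithin_le_nhds (Iio_mem_nhds hρ0),
      t3.eventually_lt_const (u := ‖d‖ / 2) (by rw [mul_zero]; linarith)] with ρ a1 a2 a3
    exact key ρ a1 a2 a3)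
  have : 0 < ‖d‖ / 2 * R ^ 2 := by positivity
  simp at hle
  linarith

theorem core [CompleteSpace A] {p : ℕ} {V : Set (Fin (p + 1) → ℝ)} (hV : IsOpen V)
    {K ρ0 : ℝ} (hK : 0 ≤ K) (hρ0 : 0 < ρ0) (hρK : ρ0 * K ≤ 1 / 2) (n : ℕ) :
    ∀ {b e : ℕ → (Fin (p + 1) → ℝ) → A} {C : ℝ} (_ : 0 ≤ C)
    (_ : ∀ k, ∀ y ∈ V, ‖b k y‖ ≤ C * K ^ k) (_ : ∀ k, ∀ y ∈ V, ‖e k y‖ ≤ C * K ^ k)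
    (_ : ∀ k, ContDiffOn ℝ 2 (b k) V) (_ : ∀ k, ContinuousOn (lapP p (b k)) V)
    (_ : ∀ k, ContinuousOn (e k) V)
    (_ : ∀ ρ, 0 < ρ → ρ < ρ0 → ContDiffOn ℝ 2 (fun y => ∑' k, (-ρ) ^ k • b k y) V ∧
      ∀ y ∈ V, lapP p (fun y => ∑' k, (-ρ) ^ k • b k y) y = ∑' k, (-ρ) ^ k • e k y),
    Set.EqOn (lapP p (b n)) (e n) V := by
  induction n with
  | zero =>
    intro b e C hC hb he hb2 hlc hec hH
    exact core_base hV hC hK hρ0 hρK hb he (hb2 0) (hlc 0) (hec 0) hH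
  | succ n ih =>
    intro b e C hC hb he hb2 hlc hec hH
    have h0 := core_base hV hC hK hρ0 hρK hb he (hb2 0) (hlc 0) (hec 0) hH
    refine ih (b := fun k => b (k + 1)) (e := fun k => e (k + 1)) (C := C * K) (by positivity)
      (fun k y hy => (hb (k + 1) y hy).trans (le_of_eq (by ring)))
      (fun k y hy => (he (k + 1) y hy).trans (le_of_eq (by ring)))
      (fun k => hb2 (k + 1)) (fun k => hlc (k + 1)) (fun k => hec (k + 1)) ?_
    intro ρ h1 h2
    obtain ⟨H2, Hl⟩ := hH ρ h1 h2
    have hρK' : ρ * K ≤ 1 / 2 := le_trans (by gcongr) hρK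
    have hinv : ∀ X Y Z : A, X = Y + (-ρ) • Z → Z = (-ρ)⁻¹ • (X + (-1 : ℝ) • Y) := by
      intro X Y Z h
      rw [h, neg_one_smul, add_comm Y, add_neg_cancel_right, smul_smul,
        inv_mul_cancel₀ (neg_ne_zero.2 h1.ne'), one_smul]
    have hEq : Set.EqOn (fun y => ∑' k, (-ρ) ^ k • b (k + 1) y)
        (fun y => (-ρ)⁻¹ • ((∑' k, (-ρ) ^ k • b k y) + (-1 : ℝ) • b 0 y)) V := fun y hy =>
      hinv _ _ _ (series_small hC hK h1.le hρK' (fun k => hb k y hy)).2.1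
    have hb2' : ContDiffOn ℝ 2 (fun y => (-1 : ℝ) • b 0 y) V := (hb2 0).const_smul _
    refine ⟨((H2.add hb2').const_smul _).congr hEq, fun y hy => ?_⟩
    rw [lapP_congr hV hEq hy, lapP_smul]
    have h6 := lapF_add hV H2 hb2' hy
    change lapP p (fun y => (∑' k, (-ρ) ^ k • b k y) + (-1 : ℝ) • b 0 y) y =
      lapP p (fun y => (∑' k, (-ρ) ^ k • b k y)) y + lapP p (fun y => (-1 : ℝ) • b 0 y) y at h6
    beta_reduce
    rw [h6, Hl y hy, lapP_smul]
    beta_reduce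
    rw [h0 hy]
    exact (hinv _ _ _ (series_small hC hK h1.le hρK' (fun k => he k y hy)).2.1).symm

end P8


section P9

variable {A : Type*} [NormedAddCommGroup A] [NormedSpace ℝ A] [Mul A] [One A]

theorem pdpd_line {m : ℕ} {V : Set (Fin (m + 1) → ℝ)} (hV : IsOpen V)
    {w : (Fin (m + 1) → ℝ) → A} (hw : ContDiffOn ℝ 2 w V) {z : Fin (m + 1) → ℝ} (hz : z ∈ V)
    (s : Fin (m + 1)) :
    pdF m s (pdF m s w) z =
      deriv (deriv (fun t : ℝ => w (z + t • (Pi.single s 1 : Fin (m + 1) → ℝ)))) 0 := by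
  set γ : ℝ → (Fin (m + 1) → ℝ) := fun t => z + t • Pi.single s 1 with hγ
  have hγd : ∀ t, HasDerivAt γ (Pi.single s 1) t := fun t => by
    have h5 : HasDerivAt (fun t : ℝ => t • (Pi.single s 1 : Fin (m + 1) → ℝ)) (Pi.single s 1) t := by
      simpa using (hasDerivAt_id t).smul_const (Pi.single s (1 : ℝ) : Fin (m + 1) → ℝ)
    exact h5.const_add z
  have hγ0 : γ 0 = z := by simp [hγ]
  have hγc : Continuous γ := by fun_prop
  have hev : ∀ᶠ t in 𝓝 (0 : ℝ), γ t ∈ V :=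
    hγc.continuousAt.eventually_mem (by rw [hγ0]; exact hV.mem_nhds hz)
  have hd1 : deriv (fun t => w (γ t)) =ᶠ[𝓝 0] fun t => pdF m s w (γ t) := by
    filter_upwards [hev] with t ht
    exact ((C2_at hV hw ht).1.hasFDerivAt.comp_hasDerivAt t (hγd t)).deriv
  rw [hd1.deriv_eq]
  have h3 : DifferentiableAt ℝ (pdF m s w) (γ 0) := by
    rw [hγ0]; exact pdF_diff hV hw hz
  have := (h3.hasFDerivAt.comp_hasDerivAt (0 : ℝ) (hγd 0)).deriv
  rw [hγ0] at this
  exact this.symm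

theorem line_mem {m : ℕ} {V : Set (Fin (m + 1) → ℝ)} (hV : IsOpen V)
    {z : Fin (m + 1) → ℝ} (hz : z ∈ V) (e : Fin (m + 1) → ℝ) :
    ∀ᶠ t in 𝓝 (0 : ℝ), z + t • e ∈ V := by
  have hc : Continuous (fun t : ℝ => z + t • e) := by fun_prop
  exact hc.continuousAt.eventually_mem (by simpa using hV.mem_nhds hz)

theorem injP_add_single {m p : ℕ} (y : Fin (p + 1) → ℝ) (t : ℝ) (s : Fin (m + 1))
    (h : (s : ℕ) < p + 1) :
    injP m p (y + t • Pi.single ⟨(s : ℕ), h⟩ 1) = injP m p y + t • Pi.single s 1 := by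
  have e : injP m p (Pi.single ⟨(s : ℕ), h⟩ 1) = Pi.single s 1 := by
    ext j
    unfold injP
    by_cases hj : (j : ℕ) < p + 1
    · rw [dif_pos hj, Pi.single_apply, Pi.single_apply]
      simp [Fin.ext_iff]
    · rw [dif_neg hj, Pi.single_apply, if_neg]
      rintro rfl; exact hj h
  simp only [← injPL_apply, map_add, map_smul] at e ⊢
  rw [e]

theorem lapP_slice {m p : ℕ} (hp : p < m) {U : Set (Fin (m + 1) → ℝ)} (hU : IsOpen U)
    {u : (Fin (m + 1) → ℝ) → A} (hu : ContDiffOn ℝ 2 u U) (c : Fin (m + 1) → ℝ)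
    {V : Set (Fin (p + 1) → ℝ)} (hV : IsOpen V) (hVU : ∀ y ∈ V, injP m p y + c ∈ U) :
    ContDiffOn ℝ 2 (fun y => u (injP m p y + c)) V ∧ ∀ y ∈ V,
      lapP p (fun y => u (injP m p y + c)) y = ∑ s : Fin (m + 1),
        if (s : ℕ) < p + 1 then pdF m s (pdF m s u) (injP m p y + c) else 0 := by
  have h1 : ContDiffOn ℝ 2 (fun y => u (injP m p y + c)) V := by
    refine hu.comp (ContDiff.contDiffOn ?_) hVU
    simp only [← injPL_apply]
    exact (injPL m p).contDiff.add contDiff_const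
  refine ⟨h1, fun y hy => ?_⟩
  unfold lapP
  rw [← sum_castLE hp]
  refine Finset.sum_congr rfl fun s _ => ?_
  split_ifs with h
  · change pdF p _ (pdF p _ _) y = _
    rw [pdpd_line hV h1 hy, pdpd_line hU hu (hVU y hy)]
    simp only [injP_add_single]
    congr 2
    ext1 t
    congr 1
    abel
  · rfl

theorem rec_step [CompleteSpace A] {m p : ℕ} (hp : p < m)
    {P : (Fin (m + 1) → ℝ) → ℝ} {e : ℝ} (he : 0 ≤ e) (hP : IsPf m p P e) {π : ℝ → ℝ}
    (hπ : ∀ y r, P (pt m p (Pi.single (Fin.last m) 1) y r) = π r) (hπ0 : ∀ r, 0 < r → π r ≠ 0)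
    {y0 : Fin (p + 1) → ℝ} {δ : ℝ} (hδ : 0 < δ) {b : ℕ → (Fin (p + 1) → ℝ) → A}
    (hb : ∀ k, AnalyticOnNhd ℝ (b k) (Metric.ball y0 δ))
    {u : (Fin (m + 1) → ℝ) → A} (hu : ContDiffOn ℝ 2 u (Metric.ball (injP m p y0) δ))
    (hul : ∀ x ∈ Metric.ball (injP m p y0) δ, lapF m u x = 0)
    (hus : ∀ x ∈ Metric.ball (injP m p y0) δ, HasSum (fun k =>
      (P x * Qf m p x ^ k) • ((-1 : ℝ) ^ k • b k (projP m p x))) (u x)) (n : ℕ) :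
    ∃ y ∈ Metric.ball y0 δ, lapP p (b n) y =
      (4 * ((n : ℝ) + 1) * (n + (((m - p : ℕ) : ℝ) / 2 + e))) • b (n + 1) y := by
  set α := ((m - p : ℕ) : ℝ) / 2 + e with hα
  have hα0 : 0 < α := by have := qpos hp; linarith
  set w : Fin (m + 1) → ℝ := Pi.single (Fin.last m) 1 with hwdef
  have hw : ∀ s : Fin (m + 1), (s : ℕ) ≤ p → w s = 0 := fun s hs => by
    rw [hwdef, Pi.single_apply, if_neg]
    rintro rfl
    simp at hs; omega
  have hw1 : ∑ s, w s ^ 2 = 1 := by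
    rw [Finset.sum_eq_single (Fin.last m)] <;> simp +contextual [hwdef, Pi.single_apply]
  have hmem : ∀ {y1 y : Fin (p + 1) → ℝ} {d r : ℝ}, 0 < d → y ∈ Metric.ball y1 d → 0 ≤ r → r < d →
      pt m p w y r ∈ Metric.ball (injP m p y1) d := fun hd hy hr hrd =>
    mem_ball_of hd (by rw [projP_pt hp hw]; exact hy) (by
      rw [Qf_pt hw, hw1, mul_one]; gcongr)
  -- Baire
  set r0 := δ / 2 with hr0
  have hr0p : 0 < r0 := by positivity
  have hcb : Metric.closedBall y0 r0 ⊆ Metric.ball y0 δ :=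
    Metric.closedBall_subset_ball (by rw [hr0]; linarith)
  have hbound : ∀ y ∈ Metric.ball y0 δ, ∃ N : ℕ, ∀ k, ‖b k y‖ * (r0 ^ 2) ^ k ≤ N := by
    intro y hy
    have h1 := (hus _ (hmem hδ hy hr0p.le (by rw [hr0]; linarith) : pt m p w y r0 ∈ _)).summable
    rw [hπ, Qf_pt hw, hw1, mul_one, projP_pt hp hw] at h1
    obtain ⟨N0, hN0⟩ := (h1.tendsto_atTop_zero.norm.bddAbove_range)
    obtain ⟨N, hN⟩ := exists_nat_ge (N0 / |π r0|)
    refine ⟨N, fun k => ?_⟩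
    have h2 := hN0 ⟨k, rfl⟩
    beta_reduce at h2
    rw [norm_smul, norm_smul, norm_mul] at h2
    simp only [norm_pow, norm_neg, norm_one, one_pow, one_mul, Real.norm_eq_abs, sq_abs] at h2
    refine le_trans ?_ hN
    rw [le_div_iff₀ (abs_pos.2 (hπ0 r0 hr0p))]
    linarith
  set F : ℕ → Set (Fin (p + 1) → ℝ) := fun N => (Metric.ball y0 r0)ᶜ ∪
    ⋂ k, (Metric.closedBall y0 r0 ∩ {y | ‖b k y‖ * (r0 ^ 2) ^ k ≤ N}) with hF
  have hFc : ∀ N, IsClosed (F N) := by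
    intro N
    refine Metric.isOpen_ball.isClosed_compl.union (isClosed_iInter fun k => ?_)
    have hc : ContinuousOn (fun y => ‖b k y‖ * (r0 ^ 2) ^ k) (Metric.closedBall y0 r0) :=
      (((hb k).continuousOn.mono hcb).norm).mul continuousOn_const
    exact hc.preimage_isClosed_of_isClosed Metric.isClosed_closedBall isClosed_Iic
  have hFu : ⋃ N, F N = Set.univ := by
    refine Set.eq_univ_of_forall fun y => ?_
    by_cases hy : y ∈ Metric.ball y0 r0
    · have hy' := Metric.ball_subset_closedBall hy
      obtain ⟨N, hN⟩ := hbound y (hcb hy')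
      exact Set.mem_iUnion.2 ⟨N, Or.inr (Set.mem_iInter.2 fun k => ⟨hy', hN k⟩)⟩
    · exact Set.mem_iUnion.2 ⟨0, Or.inl hy⟩
  obtain ⟨y1, hy1, hy1'⟩ := (dense_iUnion_interior_of_closed hFc hFu).inter_open_nonempty
    (Metric.ball y0 r0) Metric.isOpen_ball ⟨y0, Metric.mem_ball_self hr0p⟩
  obtain ⟨N, hN⟩ := Set.mem_iUnion.1 hy1'
  set V := Metric.ball y0 r0 ∩ interior (F N) with hVdef
  have hVo : IsOpen V := Metric.isOpen_ball.inter isOpen_interior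
  have hy1V : y1 ∈ V := ⟨hy1, hN⟩
  have hVδ : V ⊆ Metric.ball y0 δ := fun y hy => hcb (Metric.ball_subset_closedBall hy.1)
  set K := (r0 ^ 2)⁻¹ with hK
  have hKp : 0 < K := by positivity
  have hbV : ∀ k, ∀ y ∈ V, ‖b k y‖ ≤ N * K ^ k := by
    intro k y hy
    have h1 : y ∈ F N := interior_subset hy.2
    rcases h1 with h1 | h1
    · exact absurd hy.1 h1
    · have h2 := (Set.mem_iInter.1 h1 k).2
      rw [Set.mem_setOf_eq] at h2
      rw [hK, inv_pow, ← div_eq_mul_inv, le_div_iff₀ (by positivity)]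
      exact h2
  -- the comparison
  set lam : ℕ → ℝ := fun k => 4 * ((k : ℝ) + 1) * (k + α) with hlam
  have hlam0 : ∀ k, 0 ≤ lam k := fun k => by rw [hlam]; positivity
  have hlamle : ∀ k, lam k ≤ 4 * (1 + α) * 4 ^ k := fun k => by
    have h1 : (k : ℝ) + 1 ≤ 2 ^ k := by exact_mod_cast Nat.lt_two_pow_self
    have h2 : (1 : ℝ) ≤ 2 ^ k := one_le_pow₀ (by norm_num)
    have h3 : (k : ℝ) + α ≤ (1 + α) * 2 ^ k := by nlinarith
    calc lam k = 4 * (((k : ℝ) + 1) * (k + α)) := by rw [hlam]; ring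
      _ ≤ 4 * (2 ^ k * ((1 + α) * 2 ^ k)) := by gcongr
      _ = 4 * (1 + α) * (2 * 2) ^ k := by rw [mul_pow]; ring
      _ = _ := by norm_num
  obtain ⟨d, hd, hdδ, hd1, hdK⟩ : ∃ d > 0, d ≤ δ ∧ d ≤ 1 ∧ 32 * ((m : ℝ) + 1) * d ^ 2 * K ≤ 1 := by
    set D := (32 * ((m : ℝ) + 1) * K)⁻¹ with hD
    have hDp : 0 < D := by positivity
    refine ⟨min δ (min 1 D), by positivity, min_le_left _ _,
      (min_le_right _ _).trans (min_le_left _ _), ?_⟩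
    set d := min δ (min 1 D)
    have h0 : 0 < d := by positivity
    have h1 : d ≤ 1 := (min_le_right _ _).trans (min_le_left _ _)
    have h2 : d ≤ D := (min_le_right _ _).trans (min_le_right _ _)
    have h3 : d ^ 2 ≤ D := by nlinarith
    have h4 : D * (32 * ((m : ℝ) + 1) * K) = 1 := by
      rw [hD]; exact inv_mul_cancel₀ (by positivity)
    calc _ = d ^ 2 * (32 * ((m : ℝ) + 1) * K) := by ring
      _ ≤ D * (32 * ((m : ℝ) + 1) * K) := by gcongr
      _ = 1 := h4
  have hd4 : d ^ 2 * (4 * K) ≤ 1 / 2 := by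
    have : 0 ≤ (m : ℝ) * (d ^ 2 * K) := by positivity
    nlinarith
  set Cb : ℝ := N + 4 * (1 + α) * N * K with hCb
  have hN0 : (0 : ℝ) ≤ N := Nat.cast_nonneg N
  have hx4 : 0 ≤ 4 * (1 + α) * N * K := by positivity
  have main : Set.EqOn (lapP p (b n)) (fun y => lam n • b (n + 1) y) V := by
    refine core (b := b) (e := fun k y => lam k • b (k + 1) y) hVo (K := 4 * K) (ρ0 := d ^ 2)
      (by positivity) (by positivity) hd4 n (C := Cb) (by positivity) ?_ ?_ ?_ ?_ ?_ ?_
    · intro k y hy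
      refine (hbV k y hy).trans ?_
      gcongr
      · linarith
      · linarith
    · intro k y hy
      beta_reduce
      rw [norm_smul, Real.norm_of_nonneg (hlam0 k)]
      calc lam k * ‖b (k + 1) y‖ ≤ (4 * (1 + α) * 4 ^ k) * (N * K ^ (k + 1)) := by
            gcongr
            · exact hlamle k
            · exact hbV _ y hy
        _ = (4 * (1 + α) * N * K) * (4 * K) ^ k := by rw [mul_pow]; ring
        _ ≤ _ := by gcongr; linarith
    · exact fun k => ((hb k).mono hVδ).contDiffOn hVo.uniqueDiffOn
    · exact fun k => (lapP_analytic ((hb k).mono hVδ)).continuousOn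
    · exact fun k => continuousOn_const.smul ((hb _).mono hVδ).continuousOn
    · intro ρ hρ hρd
      set r := Real.sqrt ρ with hr
      have hrp : 0 < r := Real.sqrt_pos.2 hρ
      have hr2 : r ^ 2 = ρ := Real.sq_sqrt hρ.le
      have hrd : r < d := by rw [hr, Real.sqrt_lt' hd]; exact hρd
      have hπr := hπ0 r hrp
      have hVU : ∀ y ∈ V, injP m p y + r • w ∈ Metric.ball (injP m p y0) δ := fun y hy =>
        hmem hδ (hVδ hy) hrp.le (by linarith)
      obtain ⟨s1, s2⟩ := lapP_slice hp Metric.isOpen_ball hu (r • w) hVo hVU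
      have hEq : Set.EqOn (fun y => ∑' k, (-ρ) ^ k • b k y)
          (fun y => (π r)⁻¹ • u (injP m p y + r • w)) V := by
        intro y hy
        have h1 := (hus _ (hVU y hy)).tsum_eq
        change (∑' k, (P (pt m p w y r) * Qf m p (pt m p w y r) ^ k) •
          ((-1 : ℝ) ^ k • b k (projP m p (pt m p w y r)))) = _ at h1
        rw [hπ, Qf_pt hw, hw1, mul_one, projP_pt hp hw, hr2] at h1
        beta_reduce
        rw [← h1, ← tsum_const_smul'']
        refine tsum_congr fun k => ?_
        rw [smul_smul, smul_smul, neg_pow ρ]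
        congr 1
        field_simp
      refine ⟨(s1.const_smul _).congr hEq, fun y hy => ?_⟩
      rw [lapP_congr hVo hEq hy, lapP_smul]
      beta_reduce
      rw [s2 y hy]
      -- auxiliary function with frozen coefficients
      have hx0 := hmem hd (Metric.mem_ball_self hd) hrp.le hrd (y := y)
      obtain ⟨q1, q2⟩ := series_main hp hP (y0 := y) hd hd1 hN0 hKp.le hdK
        (g := fun k _ => (-1 : ℝ) ^ k • b k y) (fun k => contDiffOn_const) (by
          intro k i hi z hz
          rcases Nat.eq_zero_or_pos i with rfl | hi0
          · rw [norm_iteratedFDeriv_zero, norm_smul, norm_pow, norm_neg, norm_one, one_pow, one_mul]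
            exact hbV k y hy
          · rw [iteratedFDeriv_const_of_ne hi0.ne']
            simp; positivity)
      set U : (Fin (m + 1) → ℝ) → A := fun x =>
        ∑' k, (P x * Qf m p x ^ k) • ((-1 : ℝ) ^ k • b k y) with hU
      obtain ⟨-, q3⟩ := q2 _ hx0
      set x0 := pt m p w y r with hx0def
      change _ • (∑ s : Fin (m + 1), if (s : ℕ) < p + 1 then pdF m s (pdF m s u) x0 else 0) = _
      have hlapU : lapF m U x0 = (-(π r)) • ∑' k, (-ρ) ^ k • (lam k • b (k + 1) y) := by
        rw [← q3.tsum_eq, q3.summable.tsum_eq_zero_add, ← tsum_const_smul'']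
        have hl0 : ∀ k, lapP p (fun _ => (-1 : ℝ) ^ k • b k y) (projP m p x0) = 0 := fun k => by
          have h0 : ∀ (s) (a : A), pdP p s (fun _ => a) = fun _ => 0 := fun s a => by
            ext; simp [pdP]
          simp [lapP, h0]
        simp only [hl0, smul_zero, add_zero]
        rw [Nat.cast_zero, mul_zero, zero_mul, zero_mul, zero_smul, zero_add]
        refine tsum_congr fun k => ?_
        rw [hπ, Qf_pt hw, hw1, mul_one, hr2, smul_smul, smul_smul, smul_smul, ← hα]
        congr 1
        rw [hlam, neg_pow ρ, Nat.add_sub_cancel]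
        push_cast
        ring
      have hxu : x0 ∈ Metric.ball (injP m p y0) δ := hVU y hy
      have hsplit : lapF m U x0 = ∑ s : Fin (m + 1),
          if (s : ℕ) < p + 1 then 0 else pdF m s (pdF m s u) x0 := by
        unfold lapF
        refine Finset.sum_congr rfl fun s _ => ?_
        rw [pdpd_line Metric.isOpen_ball q1 hx0]
        split_ifs with hs
        · obtain ⟨c, L, hPL, hL0, -⟩ := hP.lin
          have : (fun t : ℝ => U (x0 + t • (Pi.single s 1 : Fin (m + 1) → ℝ))) = fun _ => U x0 := by
            ext1 t
            have hPt : P (x0 + t • (Pi.single s 1 : Fin (m + 1) → ℝ)) = P x0 := by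
              rw [hPL, hPL, map_add, map_smul, hL0 s hs, smul_zero, add_zero]
            have hQt : Qf m p (x0 + t • (Pi.single s 1 : Fin (m + 1) → ℝ)) = Qf m p x0 := by
              unfold Qf
              refine Finset.sum_congr rfl fun j _ => ?_
              rw [← xqc_apply, ← xqc_apply, map_add, map_smul, xqc_apply m p j (Pi.single s 1),
                xqpart_single, if_neg (by rintro ⟨_, h⟩; omega), smul_zero, add_zero]
            simp only [hU, hPt, hQt]
          rw [this]
          simp
        · rw [pdpd_line Metric.isOpen_ball hu hxu]
          refine Filter.EventuallyEq.deriv_eq (Filter.EventuallyEq.deriv ?_)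
          filter_upwards [line_mem Metric.isOpen_ball hxu (Pi.single s 1)] with t ht
          rw [← (hus _ ht).tsum_eq]
          have : projP m p (x0 + t • (Pi.single s 1 : Fin (m + 1) → ℝ)) = y := by
            rw [projP_add_smul, hx0def, projP_pt hp hw, projP_of_zero, smul_zero, add_zero]
            intro j hj
            rw [Pi.single_apply, if_neg]
            rintro rfl; omega
          rw [this]
      have htot : (∑ s : Fin (m + 1), if (s : ℕ) < p + 1 then pdF m s (pdF m s u) x0 else 0) +
          lapF m U x0 = 0 := by
        have hh := hul x0 hxu
        unfold lapF at hh
        rw [hsplit, ← Finset.sum_add_distrib]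
        refine Eq.trans (Finset.sum_congr rfl fun s _ => ?_) hh
        split_ifs <;> simp
      rw [eq_neg_of_add_eq_zero_left htot, hlapU, neg_smul, neg_neg, smul_smul,
        inv_mul_cancel₀ hπr, one_smul]
  exact ⟨y1, hVδ hy1V, main hy1V⟩

end P9

section P10
variable {A : Type*} [NormedAddCommGroup A] [NormedSpace ℝ A] [Mul A] [One A]

theorem split_summable {conj : A → A} (H : IsAltStarAlg A conj) {v : ℕ → A} {m p : ℕ}
    (hv : IsHypBasis A conj v m) (x : Fin (m + 1) → ℝ) (B : ℕ → A)
    (h : Summable fun k : ℕ => apow (emb v m (xqpart m p x)) k * B k) :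
    Summable (fun k => Qf m p x ^ k • ((-1 : ℝ) ^ k • B (2 * k))) ∧
    Summable (fun k => Qf m p x ^ k • ((-1 : ℝ) ^ k • B (2 * k + 1))) := by
  haveI := H.finDim
  haveI : CompleteSpace A := FiniteDimensional.complete ℝ A
  constructor
  · have h1 := h.comp_injective (i := fun k : ℕ => 2 * k) (fun a b hab => by simpa using hab)
    refine h1.congr fun k => ?_
    simp only [Function.comp_apply]
    rw [(apow_even H hv x k (B (2 * k))).2.1, smul_smul, neg_pow, mul_comm]
  · by_cases hQ : Qf m p x = 0
    · refine summable_of_ne_finset_zero (s := {0}) fun k hk => ?_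
      rw [hQ, zero_pow (by simpa using hk), zero_smul]
    · have h1 := h.comp_injective (i := fun k : ℕ => 2 * k + 1) (fun a b hab => by simpa using hab)
      have h2 := ((lm H (emb v m (xqpart m p x))).summable h1).const_smul (-(Qf m p x))⁻¹
      refine h2.congr fun k => ?_
      simp only [Function.comp_apply, lm_apply]
      rw [(apow_even H hv x k (B (2 * k + 1))).2.2, H.mul_smul', aa_mul H hv, smul_smul, smul_smul,
        smul_smul]
      congr 1
      rw [neg_pow (Qf m p x)]
      field_simp

theorem total_eq {conj : A → A} (H : IsAltStarAlg A conj) {v : ℕ → A} {m p : ℕ}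
    (hv : IsHypBasis A conj v m) (x : Fin (m + 1) → ℝ) (B : ℕ → A)
    (h : Summable fun k : ℕ => apow (emb v m (xqpart m p x)) k * B k) :
    ∑' k : ℕ, apow (emb v m (xqpart m p x)) k * B k =
      (∑' k, Qf m p x ^ k • ((-1 : ℝ) ^ k • B (2 * k))) +
      ∑ j : Fin (m + 1), xqpart m p x j • (v (j : ℕ) *
        ∑' k, Qf m p x ^ k • ((-1 : ℝ) ^ k • B (2 * k + 1))) := by
  obtain ⟨h0, h1⟩ := split_summable H hv x B h
  have := (hasSum_total (p := p) H hv x B (S1 := fun j => xqpart m p x j •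
    ∑' k, Qf m p x ^ k • ((-1 : ℝ) ^ k • B (2 * k + 1))) (by simpa only [one_mul] using h0.hasSum)
    (fun j => by simpa only [smul_smul, mul_assoc] using h1.hasSum.const_smul (xqpart m p x j))).tsum_eq
  rw [this]
  congr 1
  refine Finset.sum_congr rfl fun j _ => ?_
  rw [H.mul_smul']

theorem comb_harm {m : ℕ} {ε : Fin (m + 1) → ℝ} (hε : ∀ s, ε s * ε s = 1)
    {W : Set (Fin (m + 1) → ℝ)} (hW : IsOpen W) (hinv : ∀ x ∈ W, diagL m ε x ∈ W)
    {f : (Fin (m + 1) → ℝ) → A} (hf : ContDiffOn ℝ 2 f W) (hl : ∀ x ∈ W, lapF m f x = 0)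
    (L1 L2 : A →L[ℝ] A) :
    ContDiffOn ℝ 2 (fun x => L1 (f x) + L2 (f (diagL m ε x))) W ∧
    ∀ x ∈ W, lapF m (fun x => L1 (f x) + L2 (f (diagL m ε x))) x = 0 := by
  have hf2 : ContDiffOn ℝ 2 (fun x => f (diagL m ε x)) W :=
    hf.comp (diagL m ε).contDiff.contDiffOn hinv
  have c1 : ContDiffOn ℝ 2 (fun x => L1 (f x)) W := L1.contDiff.comp_contDiffOn hf
  have c2 : ContDiffOn ℝ 2 (fun x => L2 (f (diagL m ε x))) W := L2.contDiff.comp_contDiffOn hf2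
  refine ⟨c1.add c2, fun x hx => ?_⟩
  rw [lapF_add hW c1 c2 hx, lapF_clm hW L1 hf hx, lapF_clm hW L2 hf2 hx, lapF_diag hε hW hinv hf hx,
    hl x hx, hl _ (hinv x hx), map_zero, map_zero, add_zero]

theorem ball_inv {m p : ℕ} {ε : Fin (m + 1) → ℝ} (hε : ∀ s, ε s * ε s = 1)
    (h : ∀ s : Fin (m + 1), (s : ℕ) ≤ p → ε s = 1) (y0 : Fin (p + 1) → ℝ) (δ : ℝ)
    (x : Fin (m + 1) → ℝ) (hx : x ∈ Metric.ball (injP m p y0) δ) :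
    diagL m ε x ∈ Metric.ball (injP m p y0) δ := by
  rw [mem_ball_iff_norm] at *
  refine lt_of_le_of_lt ?_ hx
  rw [← diagL_inj h y0, ← map_sub, diagL_inj h y0]
  refine (pi_norm_le_iff_of_nonneg (norm_nonneg _)).2 fun s => ?_
  rw [diagL_apply, norm_mul]
  have : ‖ε s‖ = 1 := by
    rcases mul_self_eq_one_iff.1 (hε s) with h | h <;> simp [h]
  rw [this, one_mul]
  exact norm_le_pi_norm (x - injP m p y0) s

theorem eq_of_near {E F : Type*} [NormedAddCommGroup E] [NormedAddCommGroup F] {g h : E → F} {y0 : E}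
    (hg : ContinuousAt g y0) (hh : ContinuousAt h y0) {δ0 : ℝ} (hδ0 : 0 < δ0)
    (hn : ∀ δ, 0 < δ → δ ≤ δ0 → ∃ y ∈ Metric.ball y0 δ, g y = h y) : g y0 = h y0 := by
  have : ∃ᶠ y in 𝓝 y0, g y - h y = 0 := by
    rw [Metric.nhds_basis_ball.frequently_iff]
    intro d hd
    obtain ⟨y, hy, e⟩ := hn (min d δ0) (lt_min hd hδ0) (min_le_right _ _)
    exact ⟨y, Metric.ball_subset_ball (min_le_left _ _) hy, sub_eq_zero.2 e⟩
  by_contra hne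
  have h2 : ∀ᶠ y in 𝓝 y0, g y - h y ≠ 0 :=
    (hg.sub hh).eventually_ne (sub_ne_zero.2 hne)
  obtain ⟨y, h3, h4⟩ := (this.and_eventually h2).exists
  exact h4 h3

theorem rec_solve [CompleteSpace A] {p : ℕ} {W : Set (Fin (p + 1) → ℝ)} (hW : IsOpen W) {α : ℝ}
    (hα : 0 < α) {b : ℕ → (Fin (p + 1) → ℝ) → A}
    (hrec : ∀ n, ∀ y ∈ W, lapP p (b n) y = (4 * ((n : ℝ) + 1) * (n + α)) • b (n + 1) y) (n : ℕ) :
    Set.EqOn (b n) (fun y => cc α n • lapIterP p n (b 0) y) W := by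
  induction n with
  | zero => intro y _; simp only [cc_zero hα, lapIterP_zero, one_smul]
  | succ n ih =>
    intro y hy
    have h1 := hrec n y hy
    rw [lapP_congr hW ih hy, lapP_smul] at h1
    have hc : (4 * ((n : ℝ) + 1) * (n + α)) ≠ 0 := by positivity
    simp only
    rw [lapIterP_succ]
    refine smul_right_injective A hc ?_
    simp only
    rw [← h1, smul_smul, ← cc_succ hα n, mul_comm]

theorem uniq_even [CompleteSpace A] {conj : A → A} (H : IsAltStarAlg A conj) {v : ℕ → A} {m p : ℕ}
    (hv : IsHypBasis A conj v m) (hp : p < m) {y0 : Fin (p + 1) → ℝ} {δ : ℝ} (hδ : 0 < δ)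
    {B : ℕ → (Fin (p + 1) → ℝ) → A} (hB : ∀ k, AnalyticOnNhd ℝ (B k) (Metric.ball y0 δ))
    (hs : ∀ x ∈ Metric.ball (injP m p y0) δ, Summable (fun k : ℕ =>
      apow (emb v m (xqpart m p x)) k * B k (projP m p x)))
    (hh : Harmonic m (fun x => ∑' k : ℕ,
      apow (emb v m (xqpart m p x)) k * B k (projP m p x)) (Metric.ball (injP m p y0) δ)) (n : ℕ) :
    ∃ y ∈ Metric.ball y0 δ, lapP p (B (2 * n)) y =
      (4 * ((n : ℝ) + 1) * (n + ((m - p : ℕ) : ℝ) / 2)) • B (2 * (n + 1)) y := by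
  set ε : Fin (m + 1) → ℝ := fun s => if (s : ℕ) ≤ p then 1 else -1 with hεd
  have hε : ∀ s, ε s * ε s = 1 := fun s => by simp only [hεd]; split_ifs <;> norm_num
  have hε1 : ∀ s : Fin (m + 1), (s : ℕ) ≤ p → ε s = 1 := fun s h => by simp only [hεd]; rw [if_pos h]
  have hinv := ball_inv hε hε1 y0 δ
  obtain ⟨c1, c2⟩ := comb_harm hε Metric.isOpen_ball hinv hh.1 hh.2
    ((2 : ℝ)⁻¹ • ContinuousLinearMap.id ℝ A) ((2 : ℝ)⁻¹ • ContinuousLinearMap.id ℝ A)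
  have key := rec_step hp le_rfl (isPf_one m p) (π := fun _ => 1) (fun _ _ => rfl)
    (fun _ _ => one_ne_zero) hδ (b := fun k => B (2 * k)) (fun k => hB (2 * k)) c1 c2 (by
      intro x hx
      obtain ⟨h0, h1⟩ := split_summable H hv x _ (hs x hx)
      have e1 := total_eq H hv x _ (hs x hx)
      have e2 := total_eq H hv _ _ (hs _ (hinv x hx))
      rw [Qf_diagL hε, projP_diagL hε1] at e2
      simp only [one_mul]
      convert h0.hasSum using 1
      beta_reduce
      rw [e1, projP_diagL hε1, e2]
      have : ∀ j, xqpart m p (diagL m ε x) j = -xqpart m p x j := by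
        intro j
        rw [xqpart_diagL]
        by_cases h : (j : ℕ) ≤ p
        · simp [xqpart, h]
        · simp [hεd, h]
      simp only [this, neg_smul, Finset.sum_neg_distrib, ContinuousLinearMap.smul_apply,
        ContinuousLinearMap.id_apply]
      module) n
  simpa only [add_zero] using key

theorem uniq_odd [CompleteSpace A] {conj : A → A} (H : IsAltStarAlg A conj) {v : ℕ → A} {m p : ℕ}
    (hv : IsHypBasis A conj v m) (hp : p < m) {y0 : Fin (p + 1) → ℝ} {δ : ℝ} (hδ : 0 < δ)
    {B : ℕ → (Fin (p + 1) → ℝ) → A} (hB : ∀ k, AnalyticOnNhd ℝ (B k) (Metric.ball y0 δ))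
    (hs : ∀ x ∈ Metric.ball (injP m p y0) δ, Summable (fun k : ℕ =>
      apow (emb v m (xqpart m p x)) k * B k (projP m p x)))
    (hh : Harmonic m (fun x => ∑' k : ℕ,
      apow (emb v m (xqpart m p x)) k * B k (projP m p x)) (Metric.ball (injP m p y0) δ)) (n : ℕ) :
    ∃ y ∈ Metric.ball y0 δ, lapP p (B (2 * n + 1)) y =
      (4 * ((n : ℝ) + 1) * (n + (((m - p : ℕ) : ℝ) / 2 + 1))) • B (2 * (n + 1) + 1) y := by
  set ε : Fin (m + 1) → ℝ := fun s => if s = Fin.last m then -1 else 1 with hεd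
  have hε : ∀ s, ε s * ε s = 1 := fun s => by simp only [hεd]; split_ifs <;> norm_num
  have hε1 : ∀ s : Fin (m + 1), (s : ℕ) ≤ p → ε s = 1 := fun s h => by
    simp only [hεd]; rw [if_neg]; rintro rfl; simp at h; omega
  have hinv := ball_inv hε hε1 y0 δ
  obtain ⟨c1, c2⟩ := comb_harm hε Metric.isOpen_ball hinv hh.1 hh.2
    ((-(2 : ℝ)⁻¹) • lm H (v m)) ((2 : ℝ)⁻¹ • lm H (v m))
  have hw : ∀ s : Fin (m + 1), (s : ℕ) ≤ p → (Pi.single (Fin.last m) 1 : Fin (m + 1) → ℝ) s = 0 :=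
    fun s hs => by
      rw [Pi.single_apply, if_neg]
      rintro rfl
      simp at hs; omega
  refine rec_step hp zero_le_one (isPf_coord m p (Fin.last m)) (π := fun r => r) (fun y r => by
    rw [xqpart_pt hw]; simp)
    (fun _ h => h.ne') hδ (b := fun k => B (2 * k + 1)) (fun k => hB (2 * k + 1)) c1 c2 (by
      intro x hx
      obtain ⟨h0, h1⟩ := split_summable H hv x _ (hs x hx)
      have e1 := total_eq H hv x _ (hs x hx)
      have e2 := total_eq H hv _ _ (hs _ (hinv x hx))
      rw [Qf_diagL hε, projP_diagL hε1] at e2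
      have h1' := h1.hasSum.const_smul (xqpart m p x (Fin.last m))
      simp only [mul_smul]
      convert h1' using 1
      beta_reduce
      rw [projP_diagL hε1, e1, e2]
      set T := ∑' k, Qf m p x ^ k • ((-1 : ℝ) ^ k • B (2 * k + 1) (projP m p x)) with hT
      simp only [ContinuousLinearMap.smul_apply]
      rw [neg_smul, ← smul_neg, ← smul_add, ← map_neg, ← map_add, lm_apply]
      have : ∑ j : Fin (m + 1), xqpart m p x j • (v (j : ℕ) * T) =
          (∑ j : Fin (m + 1), xqpart m p (diagL m ε x) j • (v (j : ℕ) * T)) +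
          (2 * xqpart m p x (Fin.last m)) • (v m * T) := by
        rw [← sub_eq_iff_eq_add', ← Finset.sum_sub_distrib, Finset.sum_eq_single (Fin.last m)]
        · rw [xqpart_diagL, ← sub_smul, Fin.val_last]
          congr 1
          simp only [hεd, if_true]; ring
        · intro j _ hj
          rw [xqpart_diagL, ← sub_smul]
          simp [hεd, hj]
        · simp
      rw [this]
      set S0 := ∑' k, Qf m p x ^ k • ((-1 : ℝ) ^ k • B (2 * k) (projP m p x))
      set S1 := ∑ j : Fin (m + 1), xqpart m p (diagL m ε x) j • (v (j : ℕ) * T)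
      rw [show -(S0 + (S1 + (2 * xqpart m p x (Fin.last m)) • (v m * T))) + (S0 + S1) =
        (-(2 * xqpart m p x (Fin.last m))) • (v m * T) by module, H.mul_smul',
        v_v_mul H hv m (by omega) le_rfl]
      module) n

theorem uniqueness [CompleteSpace A] {conj : A → A} (H : IsAltStarAlg A conj) {v : ℕ → A} {m p : ℕ}
    (hv : IsHypBasis A conj v m) (hp : p < m) {Ω₀ : Set (Fin (p + 1) → ℝ)} (hW : IsOpen Ω₀)
    {B : ℕ → (Fin (p + 1) → ℝ) → A} (hB : ∀ k, AnalyticOnNhd ℝ (B k) Ω₀)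
    {Ω' : Set (Fin (m + 1) → ℝ)} (hΩ' : IsOpen Ω') (hsub : injP m p '' Ω₀ ⊆ Ω')
    (hs : ∀ x ∈ Ω', Summable (fun k : ℕ =>
      apow (emb v m (xqpart m p x)) k * B k (projP m p x)))
    (hh : Harmonic m (fun x => ∑' k : ℕ,
      apow (emb v m (xqpart m p x)) k * B k (projP m p x)) Ω') (n : ℕ) :
    Set.EqOn (B n) (Asq m p (B 0) (B 1) n) Ω₀ := by
  have near : ∀ y0 ∈ Ω₀, ∃ δ0 > 0, ∀ δ, δ ≤ δ0 → Metric.ball y0 δ ⊆ Ω₀ ∧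
      Metric.ball (injP m p y0) δ ⊆ Ω' := by
    intro y0 hy0
    obtain ⟨d1, hd1, h1⟩ := Metric.isOpen_iff.1 hW y0 hy0
    obtain ⟨d2, hd2, h2⟩ := Metric.isOpen_iff.1 hΩ' _ (hsub ⟨y0, hy0, rfl⟩)
    exact ⟨min d1 d2, lt_min hd1 hd2, fun δ hδ =>
      ⟨(Metric.ball_subset_ball (hδ.trans (min_le_left _ _))).trans h1,
      (Metric.ball_subset_ball (hδ.trans (min_le_right _ _))).trans h2⟩⟩
  have hlc : ∀ k, ∀ y0 ∈ Ω₀, ContinuousAt (lapP p (B k)) y0 := fun k y0 h =>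
    (lapP_analytic (hB k) y0 h).continuousAt
  have hbc : ∀ (c : ℝ) k, ∀ y0 ∈ Ω₀, ContinuousAt (fun y => c • B k y) y0 := fun c k y0 h =>
    (hB k y0 h).continuousAt.const_smul c
  have ev : ∀ n : ℕ, ∀ y ∈ Ω₀, lapP p (B (2 * n)) y =
      (4 * ((n : ℝ) + 1) * (n + ((m - p : ℕ) : ℝ) / 2)) • B (2 * (n + 1)) y := by
    intro n y0 hy0
    obtain ⟨δ0, hδ0, h⟩ := near y0 hy0
    refine eq_of_near (hlc _ y0 hy0) (hbc _ _ y0 hy0) hδ0 fun δ hδ hle => ?_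
    obtain ⟨h1, h2⟩ := h δ hle
    exact uniq_even H hv hp hδ (fun k y hy => hB k y (h1 hy)) (fun x hx => hs x (h2 hx))
      ⟨hh.1.mono h2, fun x hx => hh.2 x (h2 hx)⟩ n
  have od : ∀ n : ℕ, ∀ y ∈ Ω₀, lapP p (B (2 * n + 1)) y =
      (4 * ((n : ℝ) + 1) * (n + (((m - p : ℕ) : ℝ) / 2 + 1))) • B (2 * (n + 1) + 1) y := by
    intro n y0 hy0
    obtain ⟨δ0, hδ0, h⟩ := near y0 hy0
    refine eq_of_near (hlc _ y0 hy0) (hbc _ _ y0 hy0) hδ0 fun δ hδ hle => ?_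
    obtain ⟨h1, h2⟩ := h δ hle
    exact uniq_odd H hv hp hδ (fun k y hy => hB k y (h1 hy)) (fun x hx => hs x (h2 hx))
      ⟨hh.1.mono h2, fun x hx => hh.2 x (h2 hx)⟩ n
  have hq := qpos hp
  rcases Nat.even_or_odd' n with ⟨k, rfl | rfl⟩
  · intro y hy
    rw [Asq_even]
    exact rec_solve hW hq (b := fun k => B (2 * k)) ev k hy
  · intro y hy
    rw [Asq_odd]
    exact rec_solve hW (by linarith : (0:ℝ) < ((m - p : ℕ) : ℝ) / 2 + 1)
      (b := fun k => B (2 * k + 1)) od k hy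

end P10

/-- **Harmonic generalized CK-extension.** Given real analytic `A₀, A₁` on a domain
`Ω₀ ⊆ ℝ^{p+1}`, there is a unique sequence of real analytic functions `A_k` (`k ≥ 2`)
on `Ω₀` such that `Σ_k x_q^k A_k(x_p)` converges on a p-symmetric slice domain
`Ω₀ ⊂ Ω ⊆ Ω₀*` to a harmonic function `f`; the coefficients are necessarily
`A_{2k} = (Γ(q/2)/(2^{2k} k! Γ(k+q/2))) Δ_{x_p}^k A₀` and
`A_{2k+1} = (Γ(q/2+1)/(2^{2k} k! Γ(k+q/2+1))) Δ_{x_p}^k A₁`, and `f` satisfies the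
initial conditions `f|_{x_q=0} = A₀` and `(D_{x_q} f)|_{x_q=0} = -q A₁`. -/
theorem harmonic_generalized_CK_extension
    {A : Type*} [NormedAddCommGroup A] [NormedSpace ℝ A] [Mul A] [One A]
    (conj : A → A) (H : IsAltStarAlg A conj)
    (v : ℕ → A) (m p : ℕ) (hv : IsHypBasis A conj v m) (hp : p < m)
    (Ω₀ : Set (Fin (p + 1) → ℝ)) (hΩ₀ : IsOpen Ω₀) (hΩ₀conn : IsConnected Ω₀)
    (A₀ A₁ : (Fin (p + 1) → ℝ) → A)
    (hA₀ : AnalyticOnNhd ℝ A₀ Ω₀) (hA₁ : AnalyticOnNhd ℝ A₁ Ω₀) :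
    ∃ Aseq : ℕ → (Fin (p + 1) → ℝ) → A,
      -- existence:
      Aseq 0 = A₀ ∧ Aseq 1 = A₁ ∧
      (∀ k, AnalyticOnNhd ℝ (Aseq k) Ω₀) ∧
      (∃ Ω : Set (Fin (m + 1) → ℝ),
        PSym v m p Ω ∧ SliceDomain v m p Ω ∧
        injP m p '' Ω₀ ⊆ Ω ∧ Ω ⊆ Omega0star m p Ω₀ ∧
        (∀ x ∈ Ω, Summable (fun k : ℕ =>
          apow (emb v m (xqpart m p x)) k * Aseq k (projP m p x))) ∧
        Harmonic m (fun x => ∑' k : ℕ,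
          apow (emb v m (xqpart m p x)) k * Aseq k (projP m p x)) Ω ∧
        -- the initial conditions:
        (∀ y ∈ Ω₀,
          (fun x => ∑' k : ℕ,
            apow (emb v m (xqpart m p x)) k * Aseq k (projP m p x)) (injP m p y) =
              A₀ y ∧
          Dop v m (p + 1) m (fun x => ∑' k : ℕ,
            apow (emb v m (xqpart m p x)) k * Aseq k (projP m p x)) (injP m p y) =
              -(((m - p : ℕ) : ℝ)) • A₁ y)) ∧
      -- the coefficients are given by the stated formulas:
      (∀ k : ℕ, ∀ y ∈ Ω₀,
        Aseq (2 * k) y =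
          (Real.Gamma (((m - p : ℕ) : ℝ) / 2) /
              (2 ^ (2 * k) * (k.factorial : ℝ) *
                Real.Gamma ((k : ℝ) + ((m - p : ℕ) : ℝ) / 2))) •
            lapIterP p k A₀ y ∧
        Aseq (2 * k + 1) y =
          (Real.Gamma (((m - p : ℕ) : ℝ) / 2 + 1) /
              (2 ^ (2 * k) * (k.factorial : ℝ) *
                Real.Gamma ((k : ℝ) + ((m - p : ℕ) : ℝ) / 2 + 1))) •
            lapIterP p k A₁ y) ∧
      -- uniqueness: any sequence with these properties agrees with `Aseq` on `Ω₀`: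
      (∀ Bseq : ℕ → (Fin (p + 1) → ℝ) → A,
        Bseq 0 = A₀ → Bseq 1 = A₁ →
        (∀ k, AnalyticOnNhd ℝ (Bseq k) Ω₀) →
        (∃ Ω' : Set (Fin (m + 1) → ℝ),
          PSym v m p Ω' ∧ SliceDomain v m p Ω' ∧
          injP m p '' Ω₀ ⊆ Ω' ∧ Ω' ⊆ Omega0star m p Ω₀ ∧
          (∀ x ∈ Ω', Summable (fun k : ℕ =>
            apow (emb v m (xqpart m p x)) k * Bseq k (projP m p x))) ∧
          Harmonic m (fun x => ∑' k : ℕ,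
            apow (emb v m (xqpart m p x)) k * Bseq k (projP m p x)) Ω') →
        ∀ k, Set.EqOn (Bseq k) (Aseq k) Ω₀) := by
  haveI := H.finDim
  haveI : CompleteSpace A := FiniteDimensional.complete ℝ A
  refine ⟨Asq m p A₀ A₁, Asq_zero hp A₀ A₁, Asq_one hp A₀ A₁, Asq_analytic hA₀ hA₁,
    existence H hv hp hΩ₀ hΩ₀conn hA₀ hA₁, fun k y _ => ⟨?_, ?_⟩, ?_⟩
  · rw [Asq_even]; rfl
  · rw [Asq_odd, cc, ← add_assoc]
  · rintro B rfl rfl hB ⟨Ω', -, hsd, hsub, -, hs, hh⟩ n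
    exact uniqueness H hv hp hΩ₀ hB hsd.1 hsub hs hh n

end GPSM
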